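/- Let μ be a Borel probability measure on SL₂(ℝ) with a finite exponential moment whose support generates a Zariski dense subgroup, with unique stationary measure ν and Lyapunov exponent σ_μ. There exists C > 0, and for every δ ∈ (0, 1/3] a constant C_δ > 0, such that for all real b₁ ≤ b₂, all x ∈ X and all t > 0: (i) if b₂ − b₁ ≥ 2δ then Σ_{n≥0} μ^{*n}{ g : σ(g,x) − t ∈ [b₁, b₂] } ≤ C (b₂ − b₁) ( 1/σ_μ + C_δ (1 + |b₁| + |b₂|)/t ); (ii) if 0 ≤ b₂ − b₁ < 2δ then Σ_{n≥0} μ^{*n}{ g : σ(g,x) − t ∈ [b₁, b₂] } ≤ C δ ( 1/σ_μ + C_δ (1 + |b₁|)/t ). -/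

import Mathlib

open MeasureTheory Filter

noncomputable section

abbrev SL2 := Matrix.SpecialLinearGroup (Fin 2) ℝ

abbrev PX := Projectivization ℝ (Fin 2 → ℝ)

instance : TopologicalSpace SL2 := instTopologicalSpaceSubtype
instance : TopologicalSpace PX := instTopologicalSpaceQuotient
instance : MeasurableSpace SL2 := borel _
instance : MeasurableSpace PX := borel _

/-- Euclidean norm on ℝ². -/
def enorm2 (v : Fin 2 → ℝ) : ℝ := Real.sqrt (v 0 ^ 2 + v 1 ^ 2)

/-- Operator norm of g ∈ SL₂(ℝ) w.r.t. the Euclidean norm on ℝ². -/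
def opNorm (g : SL2) : ℝ :=
  ‖Matrix.toEuclideanCLM (𝕜 := ℝ) (n := Fin 2) (g : Matrix (Fin 2) (Fin 2) ℝ)‖

/-- Cartan projection κ(g) = log ‖g‖. -/
def kappa (g : SL2) : ℝ := Real.log (opNorm g)

/-- The projective action of SL₂(ℝ) on ℙ(ℝ²). -/
def act (g : SL2) (x : PX) : PX :=
  Projectivization.map ((Matrix.SpecialLinearGroup.toLin' g).toLinearMap)
    (LinearEquiv.injective _) x

/-- The norm cocycle σ(g, ℝv) = log (‖gv‖/‖v‖). -/
def cocycle (g : SL2) (x : PX) : ℝ :=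
  Real.log (enorm2 ((g : Matrix (Fin 2) (Fin 2) ℝ).mulVec x.rep) / enorm2 x.rep)

/-- The sine distance d(ℝv, ℝw) = |det(v,w)|/(‖v‖‖w‖) on ℙ(ℝ²). -/
def projDist (x y : PX) : ℝ :=
  |x.rep 0 * y.rep 1 - x.rep 1 * y.rep 0| / (enorm2 x.rep * enorm2 y.rep)

/-- An angle θ(x) ∈ ℝ representing x = ℝ(cos θ, sin θ). -/
def pangle (x : PX) : ℝ := Complex.arg (x.rep 0 + x.rep 1 * Complex.I)

/-- The (topological) support of a measure. -/
def measSupp (μ : Measure SL2) : Set SL2 :=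
  {g | ∀ U : Set SL2, IsOpen U → g ∈ U → 0 < μ U}

/-- μ has a finite exponential moment. -/
def HasExpMoment (μ : Measure SL2) : Prop :=
  ∃ ε₁ > (0 : ℝ), ∫⁻ g, ENNReal.ofReal (opNorm g ^ ε₁) ∂μ < ⊤

/-- The group generated by the support of μ is Zariski dense in SL₂(ℝ),
equivalently it is not solvable. -/
def ZariskiDense (μ : Measure SL2) : Prop :=
  ¬ IsSolvable (Subgroup.closure (measSupp μ))

/-- ν is μ-stationary: μ ∗ ν = ν. -/
def IsStationaryMeas (μ : Measure SL2) (ν : Measure PX) : Prop :=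
  μ.bind (fun g => ν.map (act g)) = ν

/-- The product g₁ ⋯ gₙ of a word (g₁, …, gₙ). -/
def word {n : ℕ} (g : Fin n → SL2) : SL2 := (List.ofFn g).prod

/-- The product measure μ^{⊗n} on words of length n. -/
def μpi (μ : Measure SL2) (n : ℕ) : Measure (Fin n → SL2) := Measure.pi fun _ => μ

abbrev E2 := EuclideanSpace ℝ (Fin 2)

instance : BorelSpace SL2 := ⟨rfl⟩
instance : BorelSpace PX := ⟨rfl⟩

/-- The linear action of `SL2` on the Euclidean plane. -/
def LA (g : SL2) : E2 →L[ℝ] E2 :=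
  Matrix.toEuclideanCLM (𝕜 := ℝ) (n := Fin 2) (g : Matrix (Fin 2) (Fin 2) ℝ)

/-- The wedge product of two plane vectors. -/
def wdg (v w : E2) : ℝ := v 0 * w 1 - v 1 * w 0

lemma opNorm_eq (g : SL2) : opNorm g = ‖LA g‖ := rfl

lemma LA_zero (g : SL2) (v : E2) : LA g v 0 = g.1 0 0 * v 0 + g.1 0 1 * v 1 := by
  simp [LA, Matrix.mulVec, dotProduct, Fin.sum_univ_two]

lemma LA_one (g : SL2) (v : E2) : LA g v 1 = g.1 1 0 * v 0 + g.1 1 1 * v 1 := by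
  simp [LA, Matrix.mulVec, dotProduct, Fin.sum_univ_two]

lemma E2_ext {v w : E2} (h0 : v 0 = w 0) (h1 : v 1 = w 1) : v = w := by
  ext i; fin_cases i <;> assumption

lemma det_eq (g : SL2) : g.1 0 0 * g.1 1 1 - g.1 0 1 * g.1 1 0 = 1 := by
  have := g.2; rwa [Matrix.det_fin_two] at this

lemma LA_mul (g h : SL2) (v : E2) : LA (g * h) v = LA g (LA h v) := by
  apply E2_ext <;> simp only [LA_zero, LA_one, Matrix.SpecialLinearGroup.coe_mul,
    Matrix.mul_apply, Fin.sum_univ_two] <;> ring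

lemma LA_id (v : E2) : LA 1 v = v := by
  apply E2_ext <;> simp [LA_zero, LA_one]

lemma LA_inv (g : SL2) (v : E2) : LA g⁻¹ (LA g v) = v := by
  rw [← LA_mul]; simp [LA_id]

lemma LA_inv' (g : SL2) (v : E2) : LA g (LA g⁻¹ v) = v := by
  rw [← LA_mul]; simp [LA_id]

lemma wdg_LA (g : SL2) (v w : E2) : wdg (LA g v) (LA g w) = wdg v w := by
  have := det_eq g
  simp only [wdg, LA_zero, LA_one]
  linear_combination (v 0 * w 1 - v 1 * w 0) * this

lemma normsq_eq (v : E2) : ‖v‖ ^ 2 = v 0 ^ 2 + v 1 ^ 2 := by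
  rw [EuclideanSpace.norm_sq_eq]; simp [Fin.sum_univ_two]

lemma abs_wdg_le (v w : E2) : |wdg v w| ≤ ‖v‖ * ‖w‖ := by
  apply abs_le_of_sq_le_sq _ (by positivity)
  rw [mul_pow, normsq_eq, normsq_eq, wdg]
  nlinarith [sq_nonneg (v 0 * w 0 + v 1 * w 1)]

/-- Rotation by a quarter turn. -/
def rot (w : E2) : E2 := !₂[-w 1, w 0]

lemma norm_rot (w : E2) : ‖rot w‖ = ‖w‖ := by
  have : ‖rot w‖ ^ 2 = ‖w‖ ^ 2 := by
    rw [normsq_eq, normsq_eq]; simp [rot]; ring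
  exact (sq_eq_sq₀ (norm_nonneg _) (norm_nonneg _)).1 this

lemma wdg_rot (w : E2) : wdg w (rot w) = ‖w‖ ^ 2 := by
  rw [normsq_eq]; simp [wdg, rot]; ring

lemma norm_LA_le (g : SL2) (v : E2) : ‖LA g v‖ ≤ opNorm g * ‖v‖ := (LA g).le_opNorm v

lemma opNorm_nonneg (g : SL2) : 0 ≤ opNorm g := norm_nonneg _

lemma norm_le_LA (g : SL2) (v : E2) : ‖v‖ ≤ opNorm g * ‖LA g v‖ := by
  by_cases hv : v = 0
  · simp [hv]
  have hv' : 0 < ‖v‖ := norm_pos_iff.2 hv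
  have h1 : ‖v‖ ^ 2 ≤ ‖LA g v‖ * (opNorm g * ‖v‖) := by
    calc ‖v‖ ^ 2 = wdg v (rot v) := (wdg_rot v).symm
      _ = wdg (LA g v) (LA g (rot v)) := (wdg_LA _ _ _).symm
      _ ≤ _ := (le_abs_self _).trans (abs_wdg_le _ _)
      _ ≤ _ := by
        gcongr
        exact (norm_LA_le _ _).trans (by rw [norm_rot])
  nlinarith

lemma LA_ne_zero (g : SL2) {v : E2} (hv : v ≠ 0) : LA g v ≠ 0 := by
  intro h; apply hv; rw [← LA_inv g v, h, map_zero]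

lemma LA_norm_pos (g : SL2) {v : E2} (hv : v ≠ 0) : 0 < ‖LA g v‖ :=
  norm_pos_iff.2 (LA_ne_zero g hv)

lemma one_le_opNorm (g : SL2) : 1 ≤ opNorm g := by
  have hv : (!₂[1, 0] : E2) ≠ 0 := by
    intro h; have := congrArg (fun v : E2 => v 0) h; simp at this
  have hv' : 0 < ‖(!₂[1, 0] : E2)‖ := norm_pos_iff.2 hv
  have h1 := norm_le_LA g !₂[1, 0]
  have h2 := norm_LA_le g !₂[1, 0]
  have h0 := opNorm_nonneg g
  have : ‖(!₂[1, 0] : E2)‖ ≤ opNorm g * (opNorm g * ‖(!₂[1, 0] : E2)‖) :=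
    h1.trans (by gcongr)
  by_contra hlt
  push Not at hlt
  have h3 : opNorm g * (opNorm g * ‖(!₂[1, 0] : E2)‖) ≤ 1 * (opNorm g * ‖(!₂[1, 0] : E2)‖) := by
    gcongr
  have h4 : opNorm g * ‖(!₂[1, 0] : E2)‖ < 1 * ‖(!₂[1, 0] : E2)‖ := by gcongr
  linarith

lemma opNorm_pos (g : SL2) : 0 < opNorm g := lt_of_lt_of_le one_pos (one_le_opNorm g)

lemma opNorm_mul_le (g h : SL2) : opNorm (g * h) ≤ opNorm g * opNorm h := by
  have : LA (g * h) = (LA g).comp (LA h) := by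
    ext1 v; exact LA_mul g h v
  rw [opNorm_eq, this]; exact ContinuousLinearMap.opNorm_comp_le _ _

lemma key_ineq (h : SL2) (v w : E2) :
    ‖w‖ * ‖LA h v‖ ≤ ‖v‖ * ‖LA h w‖ + |wdg v w| * opNorm h := by
  by_cases hw : w = 0
  · simp [hw, wdg]
  have hw' : 0 < ‖w‖ := norm_pos_iff.2 hw
  have e : (‖w‖ ^ 2) • v = (v 0 * w 0 + v 1 * w 1) • w + (- wdg v w) • rot w := by
    rw [normsq_eq]
    apply E2_ext <;> simp [rot, wdg] <;> ring
  have hin : |v 0 * w 0 + v 1 * w 1| ≤ ‖v‖ * ‖w‖ := by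
    apply abs_le_of_sq_le_sq _ (by positivity)
    rw [mul_pow, normsq_eq, normsq_eq]
    nlinarith [sq_nonneg (v 0 * w 1 - v 1 * w 0)]
  have e2 : ‖w‖ ^ 2 * ‖LA h v‖ ≤ ‖v‖ * ‖w‖ * ‖LA h w‖ + |wdg v w| * (opNorm h * ‖w‖) := by
    calc ‖w‖ ^ 2 * ‖LA h v‖ = ‖LA h ((‖w‖ ^ 2) • v)‖ := by
          rw [map_smul, norm_smul]; simp
      _ = ‖(v 0 * w 0 + v 1 * w 1) • LA h w + (- wdg v w) • LA h (rot w)‖ := by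
          rw [e, map_add, map_smul, map_smul]
      _ ≤ |v 0 * w 0 + v 1 * w 1| * ‖LA h w‖ + |wdg v w| * ‖LA h (rot w)‖ := by
          refine (norm_add_le _ _).trans ?_
          rw [norm_smul, norm_smul, Real.norm_eq_abs, Real.norm_eq_abs, abs_neg]
      _ ≤ _ := by
          gcongr
          exact (norm_LA_le _ _).trans (by rw [norm_rot])
  have : ‖w‖ * (‖w‖ * ‖LA h v‖) ≤ ‖w‖ * (‖v‖ * ‖LA h w‖ + |wdg v w| * opNorm h) := by
    nlinarith
  exact le_of_mul_le_mul_left this hw'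

lemma continuous_entry (i j : Fin 2) : Continuous fun g : SL2 => g.1 i j :=
  (continuous_apply_apply i j).comp continuous_subtype_val

instance : ContinuousMul SL2 := by
  constructor
  apply Continuous.subtype_mk
    (f := fun p : SL2 × SL2 => (p.1.1 * p.2.1 : Matrix (Fin 2) (Fin 2) ℝ))
  exact (continuous_subtype_val.comp continuous_fst).mul (continuous_subtype_val.comp continuous_snd)

instance : SecondCountableTopology SL2 := by
  have : SecondCountableTopology (Matrix (Fin 2) (Fin 2) ℝ) :=
    inferInstanceAs (SecondCountableTopology (Fin 2 → Fin 2 → ℝ))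
  exact TopologicalSpace.Subtype.secondCountableTopology _

lemma continuous_LA : Continuous LA := by
  have h : Continuous (fun A : Matrix (Fin 2) (Fin 2) ℝ =>
      (Matrix.toEuclideanCLM (𝕜 := ℝ) (n := Fin 2) A)) :=
    LinearMap.continuous_of_finiteDimensional
      (Matrix.toEuclideanCLM (𝕜 := ℝ) (n := Fin 2)).toAlgEquiv.toLinearMap
  exact h.comp continuous_subtype_val

lemma continuous_LA2 : Continuous fun p : SL2 × E2 => LA p.1 p.2 :=
  (continuous_LA.comp continuous_fst).clm_apply continuous_snd

lemma continuous_LA_apply (v : E2) : Continuous fun g => LA g v :=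
  continuous_LA.clm_apply continuous_const

lemma continuous_opNorm : Continuous opNorm := continuous_LA.norm

instance : MeasurableMul₂ SL2 := inferInstance

/-- Convolution powers of `μ`. -/
def cp (μ : Measure SL2) : ℕ → Measure SL2
  | 0 => Measure.dirac 1
  | n + 1 => Measure.mconv (cp μ n) μ

lemma cp_succ (μ : Measure SL2) (n : ℕ) : cp μ (n + 1) = Measure.mconv (cp μ n) μ := rfl

instance cp_prob (μ : Measure SL2) [IsProbabilityMeasure μ] (n : ℕ) :
    IsProbabilityMeasure (cp μ n) := by
  induction n with
  | zero => unfold cp; infer_instance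
  | succ n ih => unfold cp; infer_instance

lemma cp_one (μ : Measure SL2) [IsProbabilityMeasure μ] : cp μ 1 = μ := by
  rw [cp_succ, cp, Measure.dirac_one_mconv]

lemma cp_add (μ : Measure SL2) [IsProbabilityMeasure μ] (n k : ℕ) :
    cp μ (n + k) = Measure.mconv (cp μ n) (cp μ k) := by
  induction k with
  | zero => rw [add_zero, cp, Measure.mconv_dirac_one]
  | succ k ih => rw [← add_assoc, cp_succ, ih, cp_succ, Measure.mconv_assoc]

lemma lintegral_cp_zero (μ : Measure SL2) {F : SL2 → ENNReal} (hF : Measurable F) :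
    ∫⁻ g, F g ∂(cp μ 0) = F 1 := by
  rw [cp, lintegral_dirac' _ hF]

lemma lintegral_cp_add (μ : Measure SL2) [IsProbabilityMeasure μ] (n k : ℕ)
    {F : SL2 → ENNReal} (hF : Measurable F) :
    ∫⁻ g, F g ∂(cp μ (n + k)) = ∫⁻ h, ∫⁻ g, F (g * h) ∂(cp μ n) ∂(cp μ k) := by
  rw [cp_add, Measure.lintegral_mconv hF, lintegral_lintegral_swap]
  exact (hF.comp measurable_mul).aemeasurable

lemma lintegral_cp_succ (μ : Measure SL2) [IsProbabilityMeasure μ] (n : ℕ)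
    {F : SL2 → ENNReal} (hF : Measurable F) :
    ∫⁻ g, F g ∂(cp μ (n + 1)) = ∫⁻ h, ∫⁻ g, F (g * h) ∂(cp μ n) ∂μ := by
  rw [lintegral_cp_add μ n 1 hF, cp_one]

lemma integral_cp_add (μ : Measure SL2) [IsProbabilityMeasure μ] (n k : ℕ)
    {F : SL2 → ℝ} (hF : Integrable F (cp μ (n + k))) :
    ∫ g, F g ∂(cp μ (n + k)) = ∫ h, ∫ g, F (g * h) ∂(cp μ n) ∂(cp μ k) := by
  rw [cp_add, Measure.mconv] at hF ⊢
  rw [integral_map (by fun_prop) hF.1, integral_prod_symm]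
  exact hF.comp_measurable (by fun_prop)

lemma word_zero (g : Fin 0 → SL2) : word g = 1 := by simp [word]

lemma word_succ {n : ℕ} (g : Fin (n + 1) → SL2) :
    word g = word (fun i : Fin n => g i.castSucc) * g (Fin.last n) := by
  unfold word
  rw [List.ofFn_succ', List.concat_eq_append, List.prod_append]; simp

lemma measurable_word (n : ℕ) : Measurable (word : (Fin n → SL2) → SL2) := by
  induction n with
  | zero =>
    have : (word : (Fin 0 → SL2) → SL2) = fun _ => 1 := by funext g; exact word_zero g
    rw [this]; exact measurable_const
  | succ n ih =>
    have : (word : (Fin (n + 1) → SL2) → SL2) =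
        fun g => word (fun i : Fin n => g i.castSucc) * g (Fin.last n) := by
      funext g
      exact word_succ g
    rw [this]
    exact (ih.comp (measurable_pi_lambda _ fun i => measurable_pi_apply _)).mul
      (measurable_pi_apply _)

lemma map_word (μ : Measure SL2) [IsProbabilityMeasure μ] (n : ℕ) :
    (μpi μ n).map word = cp μ n := by
  induction n with
  | zero =>
    rw [cp]
    have : (word : (Fin 0 → SL2) → SL2) = fun _ => 1 := by funext g; simp [word]
    rw [this, Measure.map_const, μpi]; simp
  | succ n ih =>
    have hw : (word : (Fin (n + 1) → SL2) → SL2) =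
        (fun p : SL2 × (Fin n → SL2) => word p.2 * p.1) ∘
          (MeasurableEquiv.piFinSuccAbove (fun _ => SL2) (Fin.last n)) := by
      funext g
      rw [word_succ]
      simp [MeasurableEquiv.piFinSuccAbove, Fin.insertNthEquiv]
      rfl
    have mp := measurePreserving_piFinSuccAbove (fun _ : Fin (n + 1) => μ) (Fin.last n)
    have hm : Measurable fun p : SL2 × (Fin n → SL2) => word p.2 * p.1 :=
      ((measurable_word n).comp measurable_snd).mul measurable_fst
    rw [hw, ← Measure.map_map hm (MeasurableEquiv.measurable _), μpi, mp.map_eq]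
    ext s hs
    rw [cp_succ, ← ih, Measure.mconv, Measure.map_apply hm hs,
      Measure.map_apply (by fun_prop) hs]
    have : IsProbabilityMeasure (μpi μ n) := by unfold μpi; infer_instance
    have h1 : ((μpi μ n).map word).prod μ
        = ((μpi μ n).prod μ).map (Prod.map word id) := by
      have := Measure.map_prod_map (μpi μ n) μ (measurable_word n) measurable_id
      rw [Measure.map_id] at this
      exact this
    rw [h1, Measure.map_apply ((measurable_word n).prodMap measurable_id) (by measurability),
      ← Measure.prod_swap, Measure.map_apply measurable_swap]
    · rfl
    · exact hm hs

lemma lint_opNorm_cp (μ : Measure SL2) [IsProbabilityMeasure μ] {ε : ℝ} (hε : 0 < ε)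
    (h : ∫⁻ g, ENNReal.ofReal (opNorm g ^ ε) ∂μ < ⊤) (n : ℕ) :
    ∫⁻ g, ENNReal.ofReal (opNorm g ^ ε) ∂(cp μ n) < ⊤ := by
  have hm : Measurable fun g => ENNReal.ofReal (opNorm g ^ ε) :=
    (continuous_opNorm.measurable.pow_const ε).ennreal_ofReal
  induction n with
  | zero => rw [lintegral_cp_zero μ hm]; exact ENNReal.ofReal_lt_top
  | succ n ih =>
    rw [lintegral_cp_succ μ n hm]
    calc ∫⁻ h, ∫⁻ g, ENNReal.ofReal (opNorm (g * h) ^ ε) ∂(cp μ n) ∂μ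
        ≤ ∫⁻ h, ∫⁻ g, ENNReal.ofReal (opNorm g ^ ε) * ENNReal.ofReal (opNorm h ^ ε) ∂(cp μ n) ∂μ := by
          gcongr with h g
          rw [← ENNReal.ofReal_mul (by have := opNorm_nonneg g; positivity),
            ← Real.mul_rpow (opNorm_nonneg _) (opNorm_nonneg _)]
          apply ENNReal.ofReal_le_ofReal
          exact Real.rpow_le_rpow (opNorm_nonneg _) (opNorm_mul_le g h) hε.le
      _ = (∫⁻ g, ENNReal.ofReal (opNorm g ^ ε) ∂(cp μ n)) *
            ∫⁻ g, ENNReal.ofReal (opNorm g ^ ε) ∂μ := by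
          simp_rw [lintegral_mul_const _ hm]
          rw [lintegral_const_mul _ hm]
      _ < ⊤ := ENNReal.mul_lt_top ih h

open scoped commutatorElement

lemma solv_of_comm {G : Type*} [Group G] (K : Subgroup G)
    (h : ∀ a ∈ K, ∀ b ∈ K, ∀ c ∈ K, ∀ d ∈ K, ⁅a, b⁆ * ⁅c, d⁆ = ⁅c, d⁆ * ⁅a, b⁆) :
    Group.IsSolvable K := by
  refine ⟨2, ?_⟩
  rw [derivedSeries_succ, derivedSeries_succ, derivedSeries_zero,
    Subgroup.commutator_eq_bot_iff_le_centralizer]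
  nth_rw 1 [Subgroup.commutator_def]
  rw [Subgroup.closure_le]
  rintro x ⟨a, -, b, -, rfl⟩
  rw [SetLike.mem_coe, Subgroup.mem_centralizer_iff]
  intro y hy
  rw [SetLike.mem_coe, Subgroup.commutator_def] at hy
  induction hy using Subgroup.closure_induction with
  | mem y hy =>
    obtain ⟨c, -, d, -, rfl⟩ := hy
    apply Subtype.ext
    simpa [commutatorElement_def] using
      (h _ a.2 _ b.2 _ c.2 _ d.2).symm
  | one => simp
  | mul y z _ _ hy hz => rw [mul_assoc, hz, ← mul_assoc, hy, mul_assoc]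
  | inv y _ hy => 
    rw [inv_mul_eq_iff_eq_mul, ← mul_assoc, hy, mul_inv_cancel_right]

lemma LA_inj {g h : SL2} (H : ∀ v, LA g v = LA h v) : g = h := by
  have h1 := H !₂[1, 0]
  have h2 := H !₂[0, 1]
  have a := congrArg (fun v : E2 => v 0) h1
  have b := congrArg (fun v : E2 => v 1) h1
  have c := congrArg (fun v : E2 => v 0) h2
  have d := congrArg (fun v : E2 => v 1) h2
  simp [LA_zero, LA_one] at a b c d
  apply Subtype.ext
  ext i j
  fin_cases i <;> fin_cases j <;> assumption

lemma wdg_self (v : E2) : wdg v v = 0 := by simp [wdg]; ring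
lemma wdg_smul_right (c : ℝ) (v w : E2) : wdg v (c • w) = c * wdg v w := by simp [wdg]; ring
lemma wdg_smul_left (c : ℝ) (v w : E2) : wdg (c • v) w = c * wdg v w := by simp [wdg]; ring
lemma wdg_comm (v w : E2) : wdg v w = - wdg w v := by simp [wdg]; ring
lemma wdg_sub_right (v w u : E2) : wdg v (w - u) = wdg v w - wdg v u := by simp [wdg]; ring
lemma wdg_add_right (v w u : E2) : wdg v (w + u) = wdg v w + wdg v u := by simp [wdg]; ring
lemma wdg_zero_right (v : E2) : wdg v 0 = 0 := by simp [wdg]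
lemma wdg_zero_left (v : E2) : wdg 0 v = 0 := by simp [wdg]

lemma par_of_wdg {e w : E2} (he : e ≠ 0) (h : wdg e w = 0) : ∃ c : ℝ, w = c • e := by
  have hn : ‖e‖ ^ 2 ≠ 0 := by simpa using he
  refine ⟨(e 0 * w 0 + e 1 * w 1) / ‖e‖ ^ 2, ?_⟩
  rw [normsq_eq] at hn ⊢
  unfold wdg at h
  apply E2_ext
  · simp; field_simp; linear_combination (- e 1) * h
  · simp; field_simp; linear_combination (e 0) * h

lemma basis_expand {e f : E2} (v : E2) : wdg e f • v = wdg v f • e + wdg e v • f := by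
  apply E2_ext <;> simp [wdg] <;> ring

lemma inv_smul_aux {g : SL2} {e f : E2} {c : ℝ} (hc : c ≠ 0) (h : LA g e = c • f) :
    LA g⁻¹ f = c⁻¹ • e := by
  have := LA_inv g e
  rw [h, map_smul] at this
  have h2 : c⁻¹ • (c • LA g⁻¹ f) = c⁻¹ • e := by rw [this]
  rwa [inv_smul_smul₀ hc] at h2

/-- Stabilizer of a line. -/
def lineStab (e : E2) : Subgroup SL2 where
  carrier := {g | ∃ c : ℝ, c ≠ 0 ∧ LA g e = c • e}
  one_mem' := ⟨1, one_ne_zero, by simp [LA_id]⟩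
  mul_mem' := by
    rintro a b ⟨c, hc, h⟩ ⟨c', hc', h'⟩
    exact ⟨c * c', mul_ne_zero hc hc', by rw [LA_mul, h', map_smul, h, smul_smul, mul_comm]⟩
  inv_mem' := by
    rintro a ⟨c, hc, h⟩
    exact ⟨c⁻¹, inv_ne_zero hc, inv_smul_aux hc h⟩

lemma lineStab_of_wdg {e : E2} (he : e ≠ 0) {g : SL2} (h : wdg e (LA g e) = 0) :
    g ∈ lineStab e := by
  obtain ⟨c, hc⟩ := par_of_wdg he h
  refine ⟨c, ?_, hc⟩
  rintro rfl
  exact LA_ne_zero g he (by simpa using hc)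

lemma lineStab_comm {e : E2} {a b : SL2} (ha : a ∈ lineStab e) (hb : b ∈ lineStab e) :
    LA ⁅a, b⁆ e = e := by
  obtain ⟨c, hc, h⟩ := ha
  obtain ⟨c', hc', h'⟩ := hb
  have : LA (a * b) e = LA (b * a) e := by
    rw [LA_mul, LA_mul, h, h', map_smul, map_smul, h, h', smul_comm]
  have h2 : LA (a * b * (b * a)⁻¹) (LA (b * a) e) = LA (b * a) e := by
    rw [← LA_mul, inv_mul_cancel_right, this]
  have h3 : LA (b * a) e = (c * c') • e := by rw [LA_mul, h, map_smul, h', smul_smul]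
  rw [h3, map_smul] at h2
  have := smul_right_injective E2 (mul_ne_zero hc hc') h2
  rw [commutatorElement_def]
  rwa [mul_inv_rev, ← mul_assoc] at this

lemma unip_comm {e : E2} (he : e ≠ 0) {c d : SL2} (hc : LA c e = e) (hd : LA d e = e) :
    c * d = d * c := by
  have key : ∀ g : SL2, LA g e = e → ∀ v, ∃ s : ℝ, LA g v = v + s • e := by
    intro g hg v
    have : wdg e (LA g v - v) = 0 := by
      rw [wdg_sub_right]; nth_rw 1 [← hg]; rw [wdg_LA, sub_self]
    obtain ⟨s, hs⟩ := par_of_wdg he this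
    exact ⟨s, by rw [← hs]; abel⟩
  apply LA_inj
  intro v
  obtain ⟨s, hs⟩ := key c hc v
  obtain ⟨t, ht⟩ := key d hd v
  rw [LA_mul, LA_mul, hs, ht, map_add, map_add, map_smul, map_smul, hs, ht, hc, hd]
  abel

lemma diag_comm {e f : E2} (hef : wdg e f ≠ 0) {c d : SL2} (hc : c ∈ lineStab e)
    (hc' : c ∈ lineStab f) (hd : d ∈ lineStab e) (hd' : d ∈ lineStab f) :
    c * d = d * c := by
  obtain ⟨a1, -, h1⟩ := hc
  obtain ⟨a2, -, h2⟩ := hc'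
  obtain ⟨a3, -, h3⟩ := hd
  obtain ⟨a4, -, h4⟩ := hd'
  apply LA_inj
  intro v
  apply smul_right_injective E2 hef
  simp only
  rw [← map_smul, ← map_smul, basis_expand v]
  simp only [map_add, map_smul, LA_mul, h1, h2, h3, h4]
  rw [smul_comm a3 a1, smul_comm a4 a2]

lemma noLine {μ : Measure SL2} (hzd : ZariskiDense μ) {e : E2} (he : e ≠ 0)
    (h : ∀ s ∈ measSupp μ, wdg e (LA s e) = 0) : False := by
  apply hzd
  have hle : Subgroup.closure (measSupp μ) ≤ lineStab e :=
    (Subgroup.closure_le _).2 fun s hs => lineStab_of_wdg he (h s hs)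
  apply solv_of_comm
  intro a ha b hb c hc d hd
  exact unip_comm he (lineStab_comm (hle ha) (hle hb)) (lineStab_comm (hle hc) (hle hd))

lemma noComm {μ : Measure SL2} (hzd : ZariskiDense μ)
    (h : ∀ s ∈ measSupp μ, ∀ t ∈ measSupp μ, s * t = t * s) : False := by
  apply hzd
  apply solv_of_comm
  have key : ∀ a ∈ Subgroup.closure (measSupp μ), ∀ b ∈ Subgroup.closure (measSupp μ),
      a * b = b * a := by
    intro a ha b hb
    induction ha, hb using Subgroup.closure_induction₂ with
    | mem x y hx hy => exact h x hx y hy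
    | one_left => simp
    | one_right => simp
    | mul_left x y z _ _ _ h1 h2 => exact (Commute.mul_left h1 h2 : Commute _ _)
    | mul_right x y z _ _ _ h1 h2 => exact (Commute.mul_right h1 h2 : Commute _ _)
    | inv_left x y _ _ h1 => exact (Commute.inv_left h1 : Commute _ _)
    | inv_right x y _ _ h1 => exact (Commute.inv_right h1 : Commute _ _)
  intro a ha b hb c hc d hd
  have : ⁅a, b⁆ = 1 := commutatorElement_eq_one_iff_mul_comm.2 (key a ha b hb)
  rw [this]; simp

/-- Swapping two lines. -/
def swaps (e f : E2) (g : SL2) : Prop :=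
  (∃ c : ℝ, c ≠ 0 ∧ LA g e = c • f) ∧ (∃ c : ℝ, c ≠ 0 ∧ LA g f = c • e)

/-- Stabilizer of a pair of lines. -/
def pairStab (e f : E2) : Subgroup SL2 where
  carrier := {g | (g ∈ lineStab e ∧ g ∈ lineStab f) ∨ swaps e f g}
  one_mem' := Or.inl ⟨one_mem _, one_mem _⟩
  mul_mem' := by
    rintro a b (⟨h1, h2⟩ | ⟨⟨c1, hc1, h1⟩, ⟨c2, hc2, h2⟩⟩) (⟨h3, h4⟩ | ⟨⟨c3, hc3, h3⟩, ⟨c4, hc4, h4⟩⟩)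
    · exact Or.inl ⟨mul_mem h1 h3, mul_mem h2 h4⟩
    · obtain ⟨c1, hc1, h1⟩ := h1
      obtain ⟨c2, hc2, h2⟩ := h2
      exact Or.inr ⟨⟨c3 * c2, mul_ne_zero hc3 hc2, by rw [LA_mul, h3, map_smul, h2, smul_smul]⟩,
        ⟨c4 * c1, mul_ne_zero hc4 hc1, by rw [LA_mul, h4, map_smul, h1, smul_smul]⟩⟩
    · obtain ⟨c3, hc3, h3⟩ := h3
      obtain ⟨c4, hc4, h4⟩ := h4
      exact Or.inr ⟨⟨c3 * c1, mul_ne_zero hc3 hc1, by rw [LA_mul, h3, map_smul, h1, smul_smul]⟩,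
        ⟨c4 * c2, mul_ne_zero hc4 hc2, by rw [LA_mul, h4, map_smul, h2, smul_smul]⟩⟩
    · exact Or.inl ⟨⟨c3 * c2, mul_ne_zero hc3 hc2, by rw [LA_mul, h3, map_smul, h2, smul_smul]⟩,
        ⟨c4 * c1, mul_ne_zero hc4 hc1, by rw [LA_mul, h4, map_smul, h1, smul_smul]⟩⟩
  inv_mem' := by
    rintro a (⟨h1, h2⟩ | ⟨⟨c1, hc1, h1⟩, ⟨c2, hc2, h2⟩⟩)
    · exact Or.inl ⟨inv_mem h1, inv_mem h2⟩
    · exact Or.inr ⟨⟨c2⁻¹, inv_ne_zero hc2, inv_smul_aux hc2 h2⟩,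
        ⟨c1⁻¹, inv_ne_zero hc1, inv_smul_aux hc1 h1⟩⟩

lemma noPair {μ : Measure SL2} (hzd : ZariskiDense μ) {e f : E2} (hef : wdg e f ≠ 0)
    (h : ∀ s ∈ measSupp μ, s ∈ pairStab e f) : False := by
  apply hzd
  have hle : Subgroup.closure (measSupp μ) ≤ pairStab e f := (Subgroup.closure_le _).2 h
  apply solv_of_comm
  have key : ∀ a ∈ pairStab e f, ∀ b ∈ pairStab e f,
      ⁅a, b⁆ ∈ lineStab e ∧ ⁅a, b⁆ ∈ lineStab f := by
    have aux : ∀ a ∈ pairStab e f, ∀ b ∈ pairStab e f,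
      (a ∈ lineStab e ∧ a ∈ lineStab f) → 
      (b * a * b⁻¹ ∈ lineStab e ∧ b * a * b⁻¹ ∈ lineStab f) := by
      rintro a - b (⟨h1, h2⟩ | ⟨⟨c1, hc1, h1⟩, ⟨c2, hc2, h2⟩⟩) ⟨h3, h4⟩
      · exact ⟨mul_mem (mul_mem h1 h3) (inv_mem h1), mul_mem (mul_mem h2 h4) (inv_mem h2)⟩
      · obtain ⟨c3, hc3, h3⟩ := h3
        obtain ⟨c4, hc4, h4⟩ := h4
        refine ⟨⟨c4, hc4, ?_⟩, ⟨c3, hc3, ?_⟩⟩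
        · rw [LA_mul, LA_mul, inv_smul_aux hc2 h2, map_smul, h4, map_smul, map_smul, h2]
          simp only [smul_smul]; congr 1; field_simp
        · rw [LA_mul, LA_mul, inv_smul_aux hc1 h1, map_smul, h3, map_smul, map_smul, h1]
          simp only [smul_smul]; congr 1; field_simp
    have aux2 : ∀ a, swaps e f a → ∀ b, swaps e f b → 
        (a * b ∈ lineStab e ∧ a * b ∈ lineStab f) := by
      rintro a ⟨⟨c1, hc1, h1⟩, ⟨c2, hc2, h2⟩⟩ b ⟨⟨c3, hc3, h3⟩, ⟨c4, hc4, h4⟩⟩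
      exact ⟨⟨c3 * c2, mul_ne_zero hc3 hc2, by rw [LA_mul, h3, map_smul, h2, smul_smul]⟩,
        ⟨c4 * c1, mul_ne_zero hc4 hc1, by rw [LA_mul, h4, map_smul, h1, smul_smul]⟩⟩
    have aux3 : ∀ a, swaps e f a → swaps e f a⁻¹ := by
      rintro a ⟨⟨c1, hc1, h1⟩, ⟨c2, hc2, h2⟩⟩
      exact ⟨⟨c2⁻¹, inv_ne_zero hc2, inv_smul_aux hc2 h2⟩,
        ⟨c1⁻¹, inv_ne_zero hc1, inv_smul_aux hc1 h1⟩⟩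
    intro a ha b hb
    rw [commutatorElement_def]
    rcases ha with ha' | ha'
    · have := aux _ (Or.inl ⟨inv_mem ha'.1, inv_mem ha'.2⟩) b hb ⟨inv_mem ha'.1, inv_mem ha'.2⟩
      have e1 : a * b * a⁻¹ * b⁻¹ = a * (b * a⁻¹ * b⁻¹) := by group
      rw [e1]
      exact ⟨mul_mem ha'.1 this.1, mul_mem ha'.2 this.2⟩
    · rcases hb with hb' | hb'
      · have := aux b (Or.inl hb') a (Or.inr ha') hb'
        exact ⟨mul_mem this.1 (inv_mem hb'.1), mul_mem this.2 (inv_mem hb'.2)⟩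
      · have h1 := aux2 a ha' b hb'
        have h2 := aux2 _ (aux3 a ha') _ (aux3 b hb')
        rw [mul_assoc (a * b)]
        exact ⟨mul_mem h1.1 h2.1, mul_mem h1.2 h2.2⟩
  intro a ha b hb c hc d hd
  have h1 := key a (hle ha) b (hle hb)
  have h2 := key c (hle hc) d (hle hd)
  exact diag_comm hef h1.1 h1.2 h2.1 h2.2

/-- The projective (sine) distance of two vectors. -/
def dd (v w : E2) : ℝ := |wdg v w| / (‖v‖ * ‖w‖)

lemma dd_nonneg (v w : E2) : 0 ≤ dd v w := by unfold dd; positivity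

lemma dd_le_one (v w : E2) : dd v w ≤ 1 :=
  div_le_one_of_le₀ (abs_wdg_le v w) (by positivity)

lemma dd_smul (v w : E2) {c c' : ℝ} (hc : c ≠ 0) (hc' : c' ≠ 0) :
    dd (c • v) (c' • w) = dd v w := by
  unfold dd
  rw [wdg_smul_left, wdg_smul_right, norm_smul, norm_smul, abs_mul, abs_mul,
    Real.norm_eq_abs, Real.norm_eq_abs]
  have h1 : |c| ≠ 0 := by simpa using hc
  have h2 : |c'| ≠ 0 := by simpa using hc'
  rw [show |c| * (|c'| * |wdg v w|) = (|c| * |c'|) * |wdg v w| by ring,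
    show |c| * ‖v‖ * (|c'| * ‖w‖) = (|c| * |c'|) * (‖v‖ * ‖w‖) by ring,
    mul_div_mul_left _ _ (mul_ne_zero h1 h2)]

lemma dd_comm (v w : E2) : dd v w = dd w v := by
  unfold dd; rw [wdg_comm, abs_neg, mul_comm]

lemma dd_self (v : E2) : dd v v = 0 := by simp [dd, wdg_self]

lemma continuous_wdg : Continuous fun p : E2 × E2 => wdg p.1 p.2 := by
  unfold wdg
  fun_prop

lemma continuousAt_dd {p : E2 × E2} (h1 : p.1 ≠ 0) (h2 : p.2 ≠ 0) :
    ContinuousAt (fun p : E2 × E2 => dd p.1 p.2) p := by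
  unfold dd
  refine ContinuousAt.div continuous_wdg.abs.continuousAt
    ((continuous_fst.norm.mul continuous_snd.norm).continuousAt) ?_
  exact mul_ne_zero (norm_ne_zero_iff.2 h1) (norm_ne_zero_iff.2 h2)

lemma measurable_dd : Measurable fun p : E2 × E2 => dd p.1 p.2 := by
  unfold dd
  exact continuous_wdg.abs.measurable.div (continuous_fst.norm.mul continuous_snd.norm).measurable

lemma supp_mul {μ : Measure SL2} [IsProbabilityMeasure μ] {n : ℕ} {s t : SL2}
    (hs : s ∈ measSupp (cp μ n)) (ht : t ∈ measSupp μ) : s * t ∈ measSupp (cp μ (n + 1)) := by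
  intro U hU hst
  have h1 : IsOpen ((fun p : SL2 × SL2 => p.1 * p.2) ⁻¹' U) := hU.preimage continuous_mul
  obtain ⟨A, B, hA, hB, hsA, htB, hAB⟩ := isOpen_prod_iff.1 h1 s t hst
  rw [cp_succ, Measure.mconv, Measure.map_apply measurable_mul hU.measurableSet]
  refine lt_of_lt_of_le ?_ (measure_mono hAB)
  rw [Measure.prod_prod]
  exact ENNReal.mul_pos (hs A hA hsA).ne' (ht B hB htB).ne'

lemma supp_one (μ : Measure SL2) : (1 : SL2) ∈ measSupp (cp μ 0) := by
  intro U hU h1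
  rw [cp, Measure.dirac_apply' _ hU.measurableSet]
  simp [h1]

lemma delta_general (ρ : Measure SL2) [IsProbabilityMeasure ρ]
    (h : ∀ v : E2, v ≠ 0 → ∃ s ∈ measSupp ρ, ∃ t ∈ measSupp ρ, wdg (LA s v) (LA t v) ≠ 0) :
    ∃ Δ > (0 : ℝ), ∀ v : E2, v ≠ 0 → Δ ≤ ∫ p, dd (LA p.1 v) (LA p.2 v) ∂(ρ.prod ρ) := by
  have hcg : ∀ v : E2, v ≠ 0 → Continuous fun p : SL2 × SL2 => dd (LA p.1 v) (LA p.2 v) := by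
    intro v hv
    rw [continuous_iff_continuousAt]
    intro p
    exact ContinuousAt.comp (g := fun p : E2 × E2 => dd p.1 p.2)
      (f := fun p : SL2 × SL2 => (LA p.1 v, LA p.2 v))
      (continuousAt_dd (LA_ne_zero _ hv) (LA_ne_zero _ hv))
      (((continuous_LA_apply v).comp continuous_fst).prodMk
        ((continuous_LA_apply v).comp continuous_snd)).continuousAt
  have hb : ∀ v : E2, ∀ p : SL2 × SL2, ‖dd (LA p.1 v) (LA p.2 v)‖ ≤ 1 := fun v p => by
    rw [Real.norm_of_nonneg (dd_nonneg _ _)]; exact dd_le_one _ _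
  have hintg : ∀ v : E2, v ≠ 0 →
      Integrable (fun p : SL2 × SL2 => dd (LA p.1 v) (LA p.2 v)) (ρ.prod ρ) := fun v hv =>
    Integrable.of_bound (hcg v hv).aestronglyMeasurable 1 (Eventually.of_forall (hb v))
  have hpos : ∀ v : E2, v ≠ 0 → 0 < ∫ p, dd (LA p.1 v) (LA p.2 v) ∂(ρ.prod ρ) := by
    intro v hv
    refine lt_of_le_of_ne (integral_nonneg fun p => dd_nonneg _ _) fun h0 => ?_
    rw [eq_comm, integral_eq_zero_iff_of_nonneg (fun p => dd_nonneg _ _) (hintg v hv)] at h0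
    obtain ⟨s, hs, t, ht, hst⟩ := h v hv
    have hopen : IsOpen {p : SL2 × SL2 | dd (LA p.1 v) (LA p.2 v) ≠ 0} :=
      isOpen_ne_fun (hcg v hv) continuous_const
    obtain ⟨A, B, hA, hB, hsA, htB, hAB⟩ := isOpen_prod_iff.1 hopen s t (by
      simp only [Set.mem_setOf_eq, dd]
      refine div_ne_zero (by simpa using hst) (mul_ne_zero ?_ ?_) <;>
      exact norm_ne_zero_iff.2 (LA_ne_zero _ hv))
    have hz : (ρ.prod ρ) {p : SL2 × SL2 | dd (LA p.1 v) (LA p.2 v) ≠ 0} = 0 := by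
      simpa [Filter.EventuallyEq, ae_iff] using h0
    have : (ρ.prod ρ) (A ×ˢ B) = 0 := measure_mono_null hAB hz
    rw [Measure.prod_prod] at this
    exact (ENNReal.mul_pos (hs A hA hsA).ne' (ht B hB htB).ne').ne' this
  have hcont : ContinuousOn (fun v : E2 => ∫ p, dd (LA p.1 v) (LA p.2 v) ∂(ρ.prod ρ))
      (Metric.sphere 0 1) := by
    have hne : ∀ v ∈ Metric.sphere (0 : E2) 1, v ≠ 0 := fun v hv => ne_zero_of_mem_unit_sphere ⟨v, hv⟩
    refine continuousOn_of_dominated (bound := fun _ => 1) ?_ ?_ (integrable_const _) ?_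
    · intro v hv; exact (hcg v (hne v hv)).aestronglyMeasurable
    · intro v hv; exact Eventually.of_forall (hb v)
    · refine Eventually.of_forall fun p v hv => ContinuousAt.continuousWithinAt ?_
      exact ContinuousAt.comp (g := fun p : E2 × E2 => dd p.1 p.2)
        (f := fun v : E2 => (LA p.1 v, LA p.2 v))
        (continuousAt_dd (LA_ne_zero _ (hne v hv)) (LA_ne_zero _ (hne v hv)))
        ((LA p.1).continuous.prodMk (LA p.2).continuous).continuousAt
  obtain ⟨v0, hv0, hmin⟩ := (isCompact_sphere (0 : E2) 1).exists_isMinOn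
    (NormedSpace.sphere_nonempty.2 zero_le_one) hcont
  refine ⟨_, hpos v0 (ne_zero_of_mem_unit_sphere ⟨v0, hv0⟩), fun v hv => ?_⟩
  have hv' : ‖v‖ ≠ 0 := norm_ne_zero_iff.2 hv
  have hmem : ‖v‖⁻¹ • v ∈ Metric.sphere (0 : E2) 1 := by
    simp [norm_smul, hv']
  refine (hmin hmem).trans (le_of_eq ?_)
  refine integral_congr_ae (Eventually.of_forall fun p => ?_)
  simp only
  rw [map_smul, map_smul, dd_smul _ _ (inv_ne_zero hv') (inv_ne_zero hv')]

lemma nondeg {μ : Measure SL2} [IsProbabilityMeasure μ] (hzd : ZariskiDense μ) (v : E2) (hv : v ≠ 0) :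
    ∃ s ∈ measSupp (cp μ 3), ∃ t ∈ measSupp (cp μ 3), wdg (LA s v) (LA t v) ≠ 0 := by
  by_contra hcon
  push Not at hcon
  have hS : ∃ s, s ∈ measSupp μ := by
    by_contra hne
    push Not at hne
    exact noComm hzd fun s hs => absurd hs (hne s)
  obtain ⟨s, hs⟩ := hS
  have h3 : ∀ a ∈ measSupp μ, ∀ b ∈ measSupp μ, ∀ c ∈ measSupp μ,
      a * b * c ∈ measSupp (cp μ 3) := by
    intro a ha b hb c hc
    have := supp_mul (supp_mul (supp_mul (supp_one μ) ha) hb) hc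
    simpa using this
  have H : ∀ a ∈ measSupp μ, ∀ b ∈ measSupp μ, ∀ c ∈ measSupp μ,
      wdg (LA s (LA s (LA s v))) (LA a (LA b (LA c v))) = 0 := by
    intro a ha b hb c hc
    have := hcon _ (h3 s hs s hs s hs) _ (h3 a ha b hb c hc)
    simpa only [LA_mul] using this
  have H0 : ∀ a ∈ measSupp μ, wdg (LA s v) (LA a v) = 0 := fun a ha => by
    simpa only [wdg_LA] using H s hs s hs a ha
  have H1 : ∀ a ∈ measSupp μ, wdg (LA s (LA s v)) (LA a (LA s v)) = 0 := fun a ha => by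
    simpa only [wdg_LA] using H s hs a ha s hs
  have H2 : ∀ a ∈ measSupp μ, wdg (LA s (LA s (LA s v))) (LA a (LA s (LA s v))) = 0 := fun a ha =>
    H a ha s hs s hs
  set y1 := LA s v with hy1
  set y2 := LA s y1 with hy2
  have hn1 : y1 ≠ 0 := LA_ne_zero s hv
  have hn2 : y2 ≠ 0 := LA_ne_zero s hn1
  have par : ∀ {a b : E2}, a ≠ 0 → b ≠ 0 → wdg a b = 0 → ∃ c : ℝ, c ≠ 0 ∧ b = c • a := by
    intro a b ha hb h
    obtain ⟨c, hc⟩ := par_of_wdg ha h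
    refine ⟨c, ?_, hc⟩
    rintro rfl
    exact hb (by simpa using hc)
  by_cases c01 : wdg v y1 = 0
  · obtain ⟨c, hc0, hc⟩ := par hv hn1 c01
    apply noLine hzd hv
    intro a ha
    have := H0 a ha
    rw [hc, wdg_smul_left] at this
    exact (mul_eq_zero.1 this).resolve_left hc0
  by_cases c02 : wdg v y2 = 0
  · obtain ⟨c, hc0, hc⟩ := par hv hn2 c02
    apply noPair hzd c01
    intro a ha
    refine Or.inr ⟨par hn1 (LA_ne_zero _ hv) (H0 a ha), ?_⟩
    obtain ⟨c', hc0', hc'⟩ := par hn2 (LA_ne_zero _ hn1) (H1 a ha)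
    exact ⟨c' * c, mul_ne_zero hc0' hc0, by rw [hc', hc, smul_smul]⟩
  have key : ∀ a ∈ measSupp μ, ∃ c : ℝ, ∀ w, LA a w = c • LA s w := by
    intro a ha
    obtain ⟨c0, hc0, h0⟩ := par hn1 (LA_ne_zero _ hv) (H0 a ha)
    obtain ⟨c1, hc1, h1⟩ := par hn2 (LA_ne_zero _ hn1) (H1 a ha)
    obtain ⟨c2, hc2, h2⟩ := par (LA_ne_zero s hn2) (LA_ne_zero _ hn2) (H2 a ha)
    rw [hy1] at h0
    have e1 := basis_expand (e := v) (f := y1) y2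
    have c12 : wdg y2 y1 ≠ 0 := by
      rw [hy2]; nth_rw 2 [hy1]; rw [wdg_LA, wdg_comm]; simpa using c01
    have e2 := congrArg (LA a) e1
    have e3 := congrArg (LA s) e1
    simp only [map_add, map_smul] at e2 e3
    rw [h0, h1, h2] at e2
    have e4 : wdg v y1 • c2 • LA s y2 = c2 • (wdg y2 y1 • LA s v + wdg v y2 • LA s y1) := by
      rw [← e3, smul_comm]
    rw [e4] at e2
    have e5 : (wdg y2 y1 * (c2 - c0)) • LA s v + (wdg v y2 * (c2 - c1)) • LA s y1 = 0 := by
      have : c2 • (wdg y2 y1 • LA s v + wdg v y2 • LA s y1) -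
        (wdg y2 y1 • c0 • LA s v + wdg v y2 • c1 • y2) = 0 := by rw [e2, sub_self]
      rw [← this, hy2]; module
    have e6 := congrArg (fun u => wdg u (LA s y1)) e5
    have e7 := congrArg (fun u => wdg (LA s v) u) e5
    have addl : ∀ a b c : E2, wdg (a + b) c = wdg a c + wdg b c := by
      intro a b c; simp [wdg]; ring
    simp only [addl, wdg_add_right, wdg_smul_left, wdg_smul_right, wdg_self, wdg_zero_left, wdg_zero_right, wdg_LA, mul_zero,
      add_zero, zero_add] at e6 e7
    have f1 : c2 = c0 := by
      have := (mul_eq_zero.1 ((mul_eq_zero.1 e6).resolve_right c01)).resolve_left c12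
      linarith
    have f2 : c2 = c1 := by
      have := (mul_eq_zero.1 ((mul_eq_zero.1 e7).resolve_right c01)).resolve_left c02
      linarith
    refine ⟨c2, fun w => ?_⟩
    apply smul_right_injective E2 c01
    simp only
    rw [← map_smul, basis_expand w, map_add, map_smul, map_smul, h0, h1, ← f1, ← f2, hy2,
      smul_comm _ c2, smul_comm _ c2, smul_comm _ c2, ← smul_add, ← map_smul (LA s) (wdg v y1),
      basis_expand w, map_add, map_smul, map_smul]
  apply noComm hzd
  intro a ha b hb
  obtain ⟨c, hc⟩ := key a ha
  obtain ⟨d, hd⟩ := key b hb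
  apply LA_inj
  intro w
  rw [LA_mul, LA_mul, hc, hd, hd, hc, map_smul, map_smul, smul_comm]

lemma delta_exists {μ : Measure SL2} [IsProbabilityMeasure μ] (hzd : ZariskiDense μ) :
    ∃ Δ > (0 : ℝ), ∀ v : E2, v ≠ 0 →
      Δ ≤ ∫ p, dd (LA p.1 v) (LA p.2 v) ∂((cp μ 3).prod (cp μ 3)) :=
  delta_general _ (nondeg hzd)

/-- log-increment of the norm along `v`. -/
def YY (g : SL2) (v : E2) : ℝ := Real.log (‖LA g v‖ / ‖v‖)

lemma ratio_le (g : SL2) {v : E2} (hv : v ≠ 0) : ‖LA g v‖ / ‖v‖ ≤ opNorm g := by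
  rw [div_le_iff₀ (norm_pos_iff.2 hv)]; exact norm_LA_le g v

lemma ratio_pos (g : SL2) {v : E2} (hv : v ≠ 0) : 0 < ‖LA g v‖ / ‖v‖ :=
  div_pos (LA_norm_pos g hv) (norm_pos_iff.2 hv)

lemma le_ratio (g : SL2) {v : E2} (hv : v ≠ 0) : (opNorm g)⁻¹ ≤ ‖LA g v‖ / ‖v‖ := by
  rw [le_div_iff₀ (norm_pos_iff.2 hv), inv_mul_le_iff₀ (opNorm_pos g)]; exact norm_le_LA g v

lemma log_opNorm_nonneg (g : SL2) : 0 ≤ Real.log (opNorm g) := Real.log_nonneg (one_le_opNorm g)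

lemma abs_YY_le (g : SL2) {v : E2} (hv : v ≠ 0) : |YY g v| ≤ Real.log (opNorm g) := by
  rw [abs_le]; constructor
  · rw [← Real.log_inv]; exact Real.log_le_log (inv_pos.2 (opNorm_pos g)) (le_ratio g hv)
  · exact Real.log_le_log (ratio_pos g hv) (ratio_le g hv)

lemma YY_mul (g h : SL2) {v : E2} (hv : v ≠ 0) : YY (g * h) v = YY g (LA h v) + YY h v := by
  unfold YY
  have h1 := ratio_pos g (LA_ne_zero h hv)
  have h2 := ratio_pos h hv
  rw [← Real.log_mul h1.ne' h2.ne', LA_mul]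
  congr 1
  have := LA_norm_pos h hv
  have := norm_pos_iff.2 hv
  field_simp

lemma YY_smul (g : SL2) (v : E2) {c : ℝ} (hc : c ≠ 0) : YY g (c • v) = YY g v := by
  unfold YY
  rw [map_smul, norm_smul, norm_smul, mul_div_mul_left _ _ (norm_ne_zero_iff.2 hc)]

lemma measurable_YY : Measurable fun p : SL2 × E2 => YY p.1 p.2 :=
  Real.measurable_log.comp ((continuous_LA2.norm.measurable).div measurable_snd.norm)

lemma measurable_YY_left (v : E2) : Measurable fun g : SL2 => YY g v :=
  Real.measurable_log.comp ((continuous_LA_apply v).norm.measurable.div_const _)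

lemma log_le_pow {a ε : ℝ} (ha : 1 ≤ a) (hε : 0 < ε) : Real.log a ≤ a ^ ε / ε := by
  exact Real.log_le_rpow_div (by linarith) hε

lemma integrable_pow_cp {μ : Measure SL2} [IsProbabilityMeasure μ] {ε : ℝ} (hε : 0 < ε)
    (h : ∫⁻ g, ENNReal.ofReal (opNorm g ^ ε) ∂μ < ⊤) (n : ℕ) :
    Integrable (fun g => opNorm g ^ ε) (cp μ n) := by
  refine ⟨(continuous_opNorm.measurable.pow_const ε).aestronglyMeasurable, ?_⟩
  rw [hasFiniteIntegral_iff_ofReal]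
  · exact lint_opNorm_cp μ hε h n
  · exact Eventually.of_forall fun g => Real.rpow_nonneg (opNorm_nonneg g) _

lemma integrable_log_cp {μ : Measure SL2} [IsProbabilityMeasure μ] (hmom : HasExpMoment μ) (n : ℕ) :
    Integrable (fun g => Real.log (opNorm g)) (cp μ n) := by
  obtain ⟨ε, hε, h⟩ := hmom
  refine ((integrable_pow_cp hε h n).div_const ε).mono'
    (Real.measurable_log.comp continuous_opNorm.measurable).aestronglyMeasurable
    (Eventually.of_forall fun g => ?_)
  rw [Real.norm_of_nonneg (log_opNorm_nonneg g)]
  exact log_le_pow (one_le_opNorm g) hε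

lemma integrable_YY_cp {μ : Measure SL2} [IsProbabilityMeasure μ] (hmom : HasExpMoment μ) (n : ℕ)
    {v : E2} (hv : v ≠ 0) : Integrable (fun g => YY g v) (cp μ n) :=
  (integrable_log_cp hmom n).mono' (measurable_YY_left v).aestronglyMeasurable
    (Eventually.of_forall fun g => abs_YY_le g hv)

/-- representative vector of a projective point. -/
def rv (x : PX) : E2 := WithLp.toLp 2 x.rep

lemma rv_ne (x : PX) : rv x ≠ 0 := by
  intro h
  apply x.rep_nonzero
  have := congrArg (WithLp.ofLp) h
  simpa [rv] using this

lemma enorm2_eq (v : E2) : enorm2 (WithLp.ofLp v) = ‖v‖ := by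
  rw [enorm2, ← normsq_eq, Real.sqrt_sq (norm_nonneg _)]

lemma LA_rv (g : SL2) (x : PX) : WithLp.ofLp (LA g (rv x)) = (g : Matrix (Fin 2) (Fin 2) ℝ).mulVec x.rep := by
  ext i
  fin_cases i
  · have := LA_zero g (rv x)
    simp [Matrix.mulVec, dotProduct, Fin.sum_univ_two, rv] at this ⊢
    exact this
  · have := LA_one g (rv x)
    simp [Matrix.mulVec, dotProduct, Fin.sum_univ_two, rv] at this ⊢
    exact this

lemma cocycle_eq (g : SL2) (x : PX) : cocycle g x = YY g (rv x) := by
  unfold cocycle YY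
  rw [← LA_rv, enorm2_eq]
  congr 2
  exact enorm2_eq (rv x)

lemma rv_act (h : SL2) (x : PX) : ∃ c : ℝ, c ≠ 0 ∧ rv (act h x) = c • LA h (rv x) := by
  have hne : (h : Matrix (Fin 2) (Fin 2) ℝ).mulVec x.rep ≠ 0 := by
    rw [← LA_rv]; intro h0; exact LA_ne_zero h (rv_ne x) (by
      apply (WithLp.equiv 2 _).injective; simpa using h0)
  have h1 : act h x = Projectivization.mk ℝ ((h : Matrix (Fin 2) (Fin 2) ℝ).mulVec x.rep) hne := by
    conv_lhs => rw [act, ← x.mk_rep, Projectivization.map_mk]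
    rfl
  obtain ⟨a, ha⟩ := Projectivization.exists_smul_eq_mk_rep ℝ _ hne
  refine ⟨a, a.ne_zero, ?_⟩
  rw [h1, rv, ← ha, ← LA_rv]
  rfl

lemma cocycle_mul (g h : SL2) (x : PX) : cocycle (g * h) x = cocycle g (act h x) + cocycle h x := by
  obtain ⟨c, hc, hh⟩ := rv_act h x
  rw [cocycle_eq, cocycle_eq, cocycle_eq, hh, YY_smul _ _ hc, YY_mul _ _ (rv_ne x)]

/-- entries of the orthogonal projection onto the line `x`. -/
def ptau (i j : Fin 2) (x : PX) : ℝ := rv x i * rv x j / ‖rv x‖ ^ 2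

lemma continuous_ptau (i j : Fin 2) : Continuous (ptau i j) := by
  apply continuous_coinduced_dom.2
  have : (ptau i j ∘ Quotient.mk (projectivizationSetoid ℝ (Fin 2 → ℝ))) =
      fun v : {v : Fin 2 → ℝ // v ≠ 0} => v.1 i * v.1 j / (v.1 0 ^ 2 + v.1 1 ^ 2) := by
    funext v
    obtain ⟨a, ha⟩ := Projectivization.exists_smul_eq_mk_rep ℝ v.1 v.2
    have hrep : (Projectivization.mk ℝ v.1 v.2).rep = (a : ℝ) • v.1 := ha.symm
    change ptau i j (Projectivization.mk ℝ v.1 v.2) = _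
    rw [ptau, normsq_eq]
    have e : ∀ k, rv (Projectivization.mk ℝ v.1 v.2) k = a * v.1 k := by
      intro k; simp only [rv]; rw [hrep]; simp
    rw [e, e, e, e]
    have ha : (a : ℝ) ≠ 0 := a.ne_zero
    rw [show (a : ℝ) * v.1 i * (a * v.1 j) = a ^ 2 * (v.1 i * v.1 j) by ring,
      show ((a : ℝ) * v.1 0) ^ 2 + (a * v.1 1) ^ 2 = a ^ 2 * (v.1 0 ^ 2 + v.1 1 ^ 2) by ring,
      mul_div_mul_left _ _ (pow_ne_zero 2 ha)]
  refine Eq.mpr (congrArg Continuous this) ?_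
  have hk : ∀ k, Continuous fun v : {v : Fin 2 → ℝ // v ≠ 0} => v.1 k := fun k =>
    (continuous_apply k).comp continuous_subtype_val
  refine Continuous.div ((hk i).mul (hk j)) (((hk 0).pow 2).add ((hk 1).pow 2)) ?_
  intro v h0
  apply v.2
  have h00 : v.1 0 = 0 := by nlinarith [sq_nonneg (v.1 0), sq_nonneg (v.1 1)]
  have h01 : v.1 1 = 0 := by nlinarith [sq_nonneg (v.1 0), sq_nonneg (v.1 1)]
  ext k; fin_cases k
  · exact h00
  · exact h01

lemma measurable_cocycle : Measurable fun p : SL2 × PX => cocycle p.1 p.2 := by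
  have e : (fun p : SL2 × PX => cocycle p.1 p.2) = fun p => Real.log (
      ((p.1.1 0 0) ^ 2 + (p.1.1 1 0) ^ 2) * ptau 0 0 p.2 +
      2 * ((p.1.1 0 0) * (p.1.1 0 1) + (p.1.1 1 0) * (p.1.1 1 1)) * ptau 0 1 p.2 +
      ((p.1.1 0 1) ^ 2 + (p.1.1 1 1) ^ 2) * ptau 1 1 p.2) / 2 := by
    funext p
    obtain ⟨g, x⟩ := p
    rw [cocycle_eq, YY]
    have : Real.log (‖LA g (rv x)‖ / ‖rv x‖) = Real.log ((‖LA g (rv x)‖ / ‖rv x‖) ^ 2) / 2 := by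
      rw [Real.log_pow]; push_cast; ring
    rw [this, div_pow, normsq_eq (LA g (rv x)), LA_zero, LA_one]
    congr 2
    unfold ptau
    have := norm_ne_zero_iff.2 (rv_ne x)
    field_simp
    ring
  rw [e]
  have hp : ∀ i j, Measurable fun p : SL2 × PX => ptau i j p.2 := fun i j =>
    (continuous_ptau i j).measurable.comp measurable_snd
  have hg : ∀ i j, Measurable fun p : SL2 × PX => p.1.1 i j := fun i j =>
    (continuous_entry i j).measurable.comp measurable_fst
  have h1 := hp 0 0
  have h2 := hp 0 1
  have h3 := hp 1 1
  have g1 := hg 0 0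
  have g2 := hg 0 1
  have g3 := hg 1 0
  have g4 := hg 1 1
  refine Measurable.div_const (Real.measurable_log.comp ?_) 2
  exact ((((g1.pow_const 2).add (g3.pow_const 2)).mul h1).add
    ((((g1.mul g2).add (g3.mul g4)).const_mul 2).mul h2)).add
    (((g2.pow_const 2).add (g4.pow_const 2)).mul h3)

lemma continuous_act (h : SL2) : Continuous (act h) := by
  apply continuous_coinduced_dom.2
  have hc : Continuous fun v : {v : Fin 2 → ℝ // v ≠ 0} =>
      (⟨(h : Matrix (Fin 2) (Fin 2) ℝ).mulVec v.1, by
        intro h0; apply v.2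
        have := (Matrix.SpecialLinearGroup.toLin' h).injective
        apply this; rw [map_zero]; exact h0⟩ : {v : Fin 2 → ℝ // v ≠ 0}) := by
    refine Continuous.subtype_mk ?_ _
    exact Continuous.matrix_mulVec continuous_const continuous_subtype_val
  exact (continuous_quotient_mk' (s := projectivizationSetoid ℝ (Fin 2 → ℝ))).comp hc

lemma stat_ae {μ : Measure SL2} {ν : Measure PX} [IsProbabilityMeasure ν]
    (hstat : IsStationaryMeas μ ν) : AEMeasurable (fun g => ν.map (act g)) μ := by
  by_contra hn
  have h0 : μ.bind (fun g => ν.map (act g)) = 0 := by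
    rw [Measure.bind, Measure.map_of_not_aemeasurable hn]; simp
  rw [IsStationaryMeas, h0] at hstat
  exact IsProbabilityMeasure.ne_zero ν hstat.symm

lemma stat_lintegral {μ : Measure SL2} {ν : Measure PX} [IsProbabilityMeasure ν]
    (hstat : IsStationaryMeas μ ν) {f : PX → ENNReal} (hf : Measurable f) :
    AEMeasurable (fun h => ∫⁻ x, f (act h x) ∂ν) μ ∧
    ∫⁻ x, f x ∂ν = ∫⁻ h, ∫⁻ x, f (act h x) ∂ν ∂μ := by
  have hae := stat_ae hstat
  have e : ∀ h, ∫⁻ x, f x ∂(ν.map (act h)) = ∫⁻ x, f (act h x) ∂ν := fun h =>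
    lintegral_map hf (continuous_act h).measurable
  constructor
  · have := (Measure.measurable_lintegral hf).comp_aemeasurable hae
    refine this.congr (Eventually.of_forall fun h => ?_)
    exact e h
  · conv_lhs => rw [← hstat]
    rw [Measure.lintegral_bind hae hf.aemeasurable]
    simp_rw [e]

lemma stat_integral {μ : Measure SL2} [IsProbabilityMeasure μ] {ν : Measure PX} [IsProbabilityMeasure ν]
    (hstat : IsStationaryMeas μ ν) {f : PX → ℝ} (hf : Measurable f) {B : ℝ} (hB : ∀ x, |f x| ≤ B) :
    ∫ x, f x ∂ν = ∫ h, ∫ x, f (act h x) ∂ν ∂μ := by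
  obtain ⟨h1, h2⟩ := stat_lintegral hstat (f := fun x => ENNReal.ofReal (f x + B))
    (hf.add_const B).ennreal_ofReal
  have hintg : ∀ k : PX → ℝ, Measurable k → (∀ x, |k x| ≤ B) → Integrable k ν := fun k hk hb =>
    (integrable_const B).mono' hk.aestronglyMeasurable (Eventually.of_forall hb)
  have key : ∀ k : PX → ℝ, Measurable k → (∀ x, |k x| ≤ B) →
      ∫ x, k x ∂ν = (∫⁻ x, ENNReal.ofReal (k x + B) ∂ν).toReal - B := by
    intro k hk hb
    rw [← integral_eq_lintegral_of_nonneg_ae, integral_add (hintg k hk hb) (integrable_const B)]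
    · simp
    · exact Eventually.of_forall fun x => by have := (abs_le.1 (hb x)).1; simp; linarith
    · exact (hk.add_const B).aestronglyMeasurable
  have hfin : ∀ h, ∫⁻ x, ENNReal.ofReal (f (act h x) + B) ∂ν < ⊤ := by
    intro h
    refine lt_of_le_of_lt (lintegral_mono (g := fun _ => ENNReal.ofReal (B + B)) fun x => ?_) ?_
    · exact ENNReal.ofReal_le_ofReal (by have := (abs_le.1 (hB (act h x))).2; linarith)
    · simp
  rw [key f hf hB, h2, ← integral_toReal h1 (Eventually.of_forall hfin)]
  have : ∀ h, ∫ x, f (act h x) ∂ν = (∫⁻ x, ENNReal.ofReal (f (act h x) + B) ∂ν).toReal - B :=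
    fun h => key _ (hf.comp (continuous_act h).measurable) fun x => hB _
  simp_rw [this]
  rw [integral_sub]
  · simp
  · refine (integrable_const (B + B)).mono' h1.ennreal_toReal.aestronglyMeasurable
      (Eventually.of_forall fun h => ?_)
    rw [Real.norm_of_nonneg ENNReal.toReal_nonneg]
    have := this h
    have h3 : |∫ x, f (act h x) ∂ν| ≤ B := by
      have := norm_integral_le_of_norm_le_const (μ := ν) (f := fun x => f (act h x)) (C := B)
        (Eventually.of_forall fun x => hB _)
      simpa using this
    have := (abs_le.1 h3).2
    linarith
  · exact integrable_const B

lemma abs_cocycle_le (g : SL2) (x : PX) : |cocycle g x| ≤ Real.log (opNorm g) := by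
  rw [cocycle_eq]; exact abs_YY_le g (rv_ne x)

lemma measurable_log_opNorm : Measurable fun g => Real.log (opNorm g) :=
  Real.measurable_log.comp continuous_opNorm.measurable

lemma measurable_cocycle_left (x : PX) : Measurable fun g : SL2 => cocycle g x := by
  simp_rw [cocycle_eq]; exact measurable_YY_left _

lemma measurable_cocycle_comp {α : Type*} [MeasurableSpace α] {f : α → SL2} {k : α → PX}
    (hf : Measurable f) (hk : Measurable k) : Measurable fun a => cocycle (f a) (k a) :=
  measurable_cocycle.comp (g := fun p : SL2 × PX => cocycle p.1 p.2) (f := fun a => (f a, k a))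
    (hf.prodMk hk)

lemma measurable_kn (ρ : Measure SL2) [SFinite ρ] : Measurable fun x : PX => ∫ g, cocycle g x ∂ρ :=
  (StronglyMeasurable.integral_prod_right (f := fun (x : PX) (g : SL2) => cocycle g x) (ν := ρ)
    (measurable_cocycle_comp measurable_snd measurable_fst).stronglyMeasurable).measurable

lemma abs_kn_le {ρ : Measure SL2} [SFinite ρ] (hi : Integrable (fun g => Real.log (opNorm g)) ρ) (x : PX) :
    |∫ g, cocycle g x ∂ρ| ≤ ∫ g, Real.log (opNorm g) ∂ρ :=
  norm_integral_le_of_norm_le (f := fun g => cocycle g x) hi (Eventually.of_forall fun g => abs_cocycle_le g x)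

lemma integrable_cocycle {ρ : Measure SL2} [SFinite ρ]
    (hi : Integrable (fun g => Real.log (opNorm g)) ρ) (x : PX) :
    Integrable (fun g => cocycle g x) ρ :=
  hi.mono' (measurable_cocycle_left x).aestronglyMeasurable
    (Eventually.of_forall fun g => abs_cocycle_le g x)

lemma kn_sum {μ : Measure SL2} [IsProbabilityMeasure μ] (hmom : HasExpMoment μ)
    {ν : Measure PX} [IsProbabilityMeasure ν] (hstat : IsStationaryMeas μ ν) (n : ℕ) :
    ∫ x, ∫ g, cocycle g x ∂(cp μ n) ∂ν = n * ∫ g, ∫ x, cocycle g x ∂ν ∂μ := by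
  have hl1 : Integrable (fun g => Real.log (opNorm g)) μ := by
    have := integrable_log_cp hmom 1; rwa [cp_one] at this
  induction n with
  | zero =>
    simp only [cp]
    have : ∀ x : PX, ∫ g, cocycle g x ∂(Measure.dirac (1 : SL2)) = 0 := by
      intro x
      rw [integral_dirac' _ _ (measurable_cocycle_left x).stronglyMeasurable, cocycle_eq, YY, LA_id,
        div_self (norm_ne_zero_iff.2 (rv_ne x)), Real.log_one]
    simp [this]
  | succ n ih =>
    have hln := integrable_log_cp hmom n
    have hln' := integrable_log_cp hmom (n + 1)
    have e : ∀ x : PX, ∫ g, cocycle g x ∂(cp μ (n + 1)) =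
        ∫ h, (∫ g, cocycle g (act h x) ∂(cp μ n)) + cocycle h x ∂μ := by
      intro x
      have := integral_cp_add μ n 1 (integrable_cocycle hln' x)
      rw [cp_one] at this
      rw [this]
      refine integral_congr_ae (Eventually.of_forall fun h => ?_)
      simp only [cocycle_mul]
      rw [integral_add (integrable_cocycle hln _) (integrable_const _)]
      simp
    have hm : Measurable fun p : PX × SL2 => ∫ g, cocycle g (act p.2 p.1) ∂(cp μ n) := by
      have e2 : (fun p : PX × SL2 => ∫ g, cocycle g (act p.2 p.1) ∂(cp μ n)) =
          fun p => ∫ g, (cocycle (g * p.2) p.1 - cocycle p.2 p.1) ∂(cp μ n) := by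
        funext p
        refine integral_congr_ae (Eventually.of_forall fun g => ?_)
        simp only [cocycle_mul]; ring
      rw [e2]
      refine (StronglyMeasurable.integral_prod_right
        (f := fun p : (PX × SL2) => fun g : SL2 => (cocycle (g * p.2) p.1 - cocycle p.2 p.1)) (ν := cp μ n) ?_).measurable
      apply Measurable.stronglyMeasurable
      exact Measurable.sub
        (measurable_cocycle_comp (measurable_snd.mul measurable_fst.snd) measurable_fst.fst)
        (measurable_cocycle_comp measurable_fst.snd measurable_fst.fst)
    have hm2 : Measurable fun p : PX × SL2 => cocycle p.2 p.1 :=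
      measurable_cocycle_comp measurable_snd measurable_fst
    have hi1 : Integrable (fun p : PX × SL2 => ∫ g, cocycle g (act p.2 p.1) ∂(cp μ n)) (ν.prod μ) :=
      (integrable_const _).mono' hm.aestronglyMeasurable
        (Eventually.of_forall fun p => abs_kn_le hln _)
    have hi2 : Integrable (fun p : PX × SL2 => cocycle p.2 p.1) (ν.prod μ) :=
      (hl1.comp_snd ν).mono' hm2.aestronglyMeasurable
        (Eventually.of_forall fun p => abs_cocycle_le _ _)
    simp_rw [e]
    rw [integral_integral_swap (f := fun x h => (∫ g, cocycle g (act h x) ∂(cp μ n)) + cocycle h x)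
      (hi1.add hi2)]
    have hst := stat_integral hstat (measurable_kn (cp μ n)) (abs_kn_le hln)
    have e3 : ∀ᵐ h ∂μ, ∫ x, ((∫ g, cocycle g (act h x) ∂(cp μ n)) + cocycle h x) ∂ν =
        (∫ x, (∫ g, cocycle g (act h x) ∂(cp μ n)) ∂ν) + ∫ x, cocycle h x ∂ν := by
      filter_upwards [hi1.prod_left_ae, hi2.prod_left_ae] with h h1 h2
      exact integral_add h1 h2
    rw [integral_congr_ae e3, integral_add hi1.integral_prod_right hi2.integral_prod_right, ← hst, ih]
    push_cast; ring

lemma ell_ge {μ : Measure SL2} [IsProbabilityMeasure μ] (hmom : HasExpMoment μ)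
    {ν : Measure PX} [IsProbabilityMeasure ν] (hstat : IsStationaryMeas μ ν) (n : ℕ) :
    n * ∫ g, ∫ x, cocycle g x ∂ν ∂μ ≤ ∫ g, Real.log (opNorm g) ∂(cp μ n) := by
  rw [← kn_sum hmom hstat n]
  have hln := integrable_log_cp hmom n
  have := norm_integral_le_of_norm_le_const (μ := ν) (f := fun x => ∫ g, cocycle g x ∂(cp μ n))
    (C := ∫ g, Real.log (opNorm g) ∂(cp μ n)) (Eventually.of_forall fun x => abs_kn_le hln _)
  simp at this
  exact (le_abs_self _).trans this

lemma exp_neg_le (x : ℝ) : Real.exp (-x) ≤ 1 - x + x ^ 2 * Real.exp |x| := by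
  rcases le_total 0 x with h | h
  · rcases le_total x 1 with h1 | h1
    · have := Real.exp_bound' (x := x) h h1 (n := 1) (by norm_num)
      have h2 := Real.add_one_le_exp x
      have h3 : Real.exp (-x) * (1 + x) ≤ 1 := by
        calc Real.exp (-x) * (1 + x) ≤ Real.exp (-x) * Real.exp x := by
              gcongr; linarith
          _ = 1 := by rw [← Real.exp_add]; simp
      have h4 : Real.exp (-x) ≤ 1 - x + x ^ 2 := by
        have hp := Real.exp_pos (-x)
        by_contra hc
        push Not at hc
        nlinarith [pow_nonneg h 3]
      have h5 : 1 ≤ Real.exp |x| := Real.one_le_exp (abs_nonneg x)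
      nlinarith [sq_nonneg x]
    · have h5 : 1 ≤ Real.exp |x| := Real.one_le_exp (abs_nonneg x)
      have h6 : Real.exp (-x) ≤ 1 := Real.exp_le_one_iff.2 (by linarith)
      nlinarith [sq_nonneg x]
  · obtain ⟨y, rfl⟩ : ∃ y, x = -y := ⟨-x, by ring⟩
    have hy : 0 ≤ y := by linarith
    rw [abs_neg, abs_of_nonneg hy, neg_neg]
    have h1 : Real.exp y * (1 - y) ≤ 1 := by
      calc Real.exp y * (1 - y) ≤ Real.exp y * Real.exp (-y) := by
            gcongr; linarith [Real.add_one_le_exp (-y)]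
        _ = 1 := by rw [← Real.exp_add]; simp
    nlinarith

lemma exp_bound_k {μ : Measure SL2} [IsProbabilityMeasure μ] (hmom : HasExpMoment μ) (k : ℕ) :
    ∃ ε₀ > (0 : ℝ), ∃ K ≥ (0 : ℝ), ∀ ε : ℝ, 0 < ε → ε ≤ ε₀ → ∀ v : E2, v ≠ 0 →
      ∫⁻ g, ENNReal.ofReal (Real.exp (-(ε * YY g v))) ∂(cp μ k) ≤
        ENNReal.ofReal (Real.exp (-(ε * ∫ g, YY g v ∂(cp μ k)) + ε ^ 2 * K)) := by
  obtain ⟨ε₁, hε₁, hm⟩ := id hmom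
  have hi := integrable_pow_cp hε₁ hm k
  refine ⟨ε₁ / 2, by positivity, (16 / ε₁ ^ 2) * ∫ g, opNorm g ^ ε₁ ∂(cp μ k), ?_, ?_⟩
  · have : 0 ≤ ∫ g, opNorm g ^ ε₁ ∂(cp μ k) :=
      integral_nonneg fun g => Real.rpow_nonneg (opNorm_nonneg g) _
    positivity
  intro ε hε hε' v hv
  have hpt : ∀ g, Real.exp (-(ε * YY g v)) ≤
      1 - ε * YY g v + ε ^ 2 * ((16 / ε₁ ^ 2) * opNorm g ^ ε₁) := by
    intro g
    refine (exp_neg_le _).trans ?_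
    have ha := abs_YY_le g hv
    have hl := log_opNorm_nonneg g
    have h1 : Real.exp |ε * YY g v| ≤ opNorm g ^ (ε₁ / 2) := by
      rw [Real.rpow_def_of_pos (opNorm_pos g), abs_mul, abs_of_pos hε]
      apply Real.exp_le_exp.2
      rw [mul_comm]
      exact mul_le_mul ha hε' hε.le hl
    have h2 : (YY g v) ^ 2 ≤ (16 / ε₁ ^ 2) * opNorm g ^ (ε₁ / 2) := by
      have h3 := log_le_pow (one_le_opNorm g) (show 0 < ε₁ / 4 by positivity)
      calc (YY g v) ^ 2 = |YY g v| ^ 2 := (sq_abs _).symm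
        _ ≤ (opNorm g ^ (ε₁ / 4) / (ε₁ / 4)) ^ 2 := by
          gcongr; exact ha.trans h3
        _ = (16 / ε₁ ^ 2) * (opNorm g ^ (ε₁ / 4)) ^ 2 := by field_simp; ring
        _ = _ := by
          congr 1
          rw [sq, ← Real.rpow_add (opNorm_pos g)]; congr 1; ring
    have h4 : opNorm g ^ ε₁ = opNorm g ^ (ε₁ / 2) * opNorm g ^ (ε₁ / 2) := by
      rw [← Real.rpow_add (opNorm_pos g)]; congr 1; ring
    have h5 : 0 ≤ opNorm g ^ (ε₁ / 2) := Real.rpow_nonneg (opNorm_nonneg g) _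
    have : (ε * YY g v) ^ 2 * Real.exp |ε * YY g v| ≤
        ε ^ 2 * ((16 / ε₁ ^ 2) * opNorm g ^ ε₁) := by
      rw [mul_pow, h4, mul_assoc, ← mul_assoc (16 / ε₁ ^ 2)]
      gcongr
    linarith
  have hY := integrable_YY_cp hmom k hv
  have hI1 : Integrable (fun g => 1 - ε * YY g v) (cp μ k) := (integrable_const 1).sub (hY.const_mul ε)
  have hI : Integrable (fun g => 1 - ε * YY g v + ε ^ 2 * ((16 / ε₁ ^ 2) * opNorm g ^ ε₁)) (cp μ k) :=
    ((integrable_const 1).sub (hY.const_mul ε)).add ((hi.const_mul _).const_mul _)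
  calc ∫⁻ g, ENNReal.ofReal (Real.exp (-(ε * YY g v))) ∂(cp μ k)
      ≤ ∫⁻ g, ENNReal.ofReal (1 - ε * YY g v + ε ^ 2 * ((16 / ε₁ ^ 2) * opNorm g ^ ε₁)) ∂(cp μ k) :=
        lintegral_mono fun g => ENNReal.ofReal_le_ofReal (hpt g)
    _ = ENNReal.ofReal (∫ g, 1 - ε * YY g v + ε ^ 2 * ((16 / ε₁ ^ 2) * opNorm g ^ ε₁) ∂(cp μ k)) := by
        rw [ofReal_integral_eq_lintegral_ofReal hI]
        exact Eventually.of_forall fun g => (Real.exp_pos _).le.trans (hpt g)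
    _ ≤ _ := by
        apply ENNReal.ofReal_le_ofReal
        rw [integral_add hI1 ((hi.const_mul _).const_mul _),
          integral_sub (integrable_const 1) (hY.const_mul ε), integral_const_mul, integral_const_mul,
          integral_const_mul]
        simp only [integral_const, probReal_univ, smul_eq_mul, mul_one]
        have := Real.add_one_le_exp (-(ε * ∫ g, YY g v ∂(cp μ k)) +
          ε ^ 2 * (16 / ε₁ ^ 2 * ∫ g, opNorm g ^ ε₁ ∂(cp μ k)))
        linarith

lemma measurable_expYY (ε : ℝ) (v : E2) :
    Measurable fun g => ENNReal.ofReal (Real.exp (-(ε * YY g v))) :=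
  (Real.measurable_exp.comp ((measurable_YY_left v).const_mul ε).neg).ennreal_ofReal

lemma exp_iter_add {μ : Measure SL2} [IsProbabilityMeasure μ] {ε : ℝ} {k n : ℕ} {r s : ENNReal}
    (h : ∀ v : E2, v ≠ 0 → ∫⁻ g, ENNReal.ofReal (Real.exp (-(ε * YY g v))) ∂(cp μ k) ≤ r)
    (h' : ∀ v : E2, v ≠ 0 → ∫⁻ g, ENNReal.ofReal (Real.exp (-(ε * YY g v))) ∂(cp μ n) ≤ s) :
    ∀ v : E2, v ≠ 0 → ∫⁻ g, ENNReal.ofReal (Real.exp (-(ε * YY g v))) ∂(cp μ (n + k)) ≤ s * r := by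
  intro v hv
  rw [lintegral_cp_add μ n k (measurable_expYY ε v)]
  calc _ = ∫⁻ u, (∫⁻ g, ENNReal.ofReal (Real.exp (-(ε * YY g (LA u v)))) ∂(cp μ n)) *
          ENNReal.ofReal (Real.exp (-(ε * YY u v))) ∂(cp μ k) := by
        congr 1; funext u
        rw [← lintegral_mul_const _ (measurable_expYY ε _)]
        congr 1; funext g
        rw [YY_mul _ _ hv, ← ENNReal.ofReal_mul (Real.exp_pos _).le, ← Real.exp_add]
        congr 2; ring
    _ ≤ ∫⁻ u, s * ENNReal.ofReal (Real.exp (-(ε * YY u v))) ∂(cp μ k) := by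
        gcongr with u
        exact h' _ (LA_ne_zero u hv)
    _ = s * ∫⁻ u, ENNReal.ofReal (Real.exp (-(ε * YY u v))) ∂(cp μ k) :=
        lintegral_const_mul _ (measurable_expYY ε v)
    _ ≤ s * r := by gcongr; exact h v hv

lemma exp_iter {μ : Measure SL2} [IsProbabilityMeasure μ] {ε : ℝ} {k : ℕ} {r : ENNReal}
    (h : ∀ v : E2, v ≠ 0 → ∫⁻ g, ENNReal.ofReal (Real.exp (-(ε * YY g v))) ∂(cp μ k) ≤ r) (q : ℕ) :
    ∀ v : E2, v ≠ 0 → ∫⁻ g, ENNReal.ofReal (Real.exp (-(ε * YY g v))) ∂(cp μ (q * k)) ≤ r ^ q := by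
  induction q with
  | zero =>
    intro v hv
    rw [zero_mul, lintegral_cp_zero μ (measurable_expYY ε v)]
    rw [YY, LA_id, div_self (norm_ne_zero_iff.2 hv)]; simp
  | succ q ih =>
    rw [Nat.succ_mul, pow_succ]
    exact exp_iter_add h ih

lemma dd_log_le (g : SL2) {v w : E2} (hv : v ≠ 0) (hw : w ≠ 0) {c : ℝ} (hc : c ≤ 0) :
    dd v w * Real.log (opNorm g) ≤ |YY g v - c| + |YY g w - c| + 1 := by
  have hA := norm_pos_iff.2 hv
  have hB := norm_pos_iff.2 hw
  rcases (dd_nonneg v w).eq_or_lt with h0 | hd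
  · rw [← h0]; simp; positivity
  have hwd : 0 < |wdg v w| := by
    rcases (abs_nonneg (wdg v w)).eq_or_lt with h | h
    · rw [dd, ← h, zero_div] at hd; exact absurd hd (lt_irrefl _)
    · exact h
  set rv := ‖LA g v‖ / ‖v‖ with hrv
  set rw' := ‖LA g w‖ / ‖w‖ with hrw
  have hop : dd v w * opNorm g ≤ rv + rw' := by
    have h1 : opNorm g ≤ (‖w‖ * ‖LA g v‖ + ‖v‖ * ‖LA g w‖) / |wdg v w| := by
      rw [opNorm_eq]
      refine ContinuousLinearMap.opNorm_le_bound _ (by positivity) fun u => ?_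
      have e := basis_expand (e := v) (f := w) u
      have e2 : wdg v w • LA g u = wdg u w • LA g v + wdg v u • LA g w := by
        rw [← map_smul, e, map_add, map_smul, map_smul]
      have e3 : |wdg v w| * ‖LA g u‖ ≤ |wdg u w| * ‖LA g v‖ + |wdg v u| * ‖LA g w‖ := by
        have := congrArg norm e2
        rw [norm_smul, Real.norm_eq_abs] at this
        rw [this]
        refine (norm_add_le _ _).trans ?_
        rw [norm_smul, norm_smul, Real.norm_eq_abs, Real.norm_eq_abs]
      rw [div_mul_eq_mul_div, le_div_iff₀ hwd]
      have a1 := abs_wdg_le u w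
      have a2 := abs_wdg_le v u
      nlinarith [norm_nonneg (LA g v), norm_nonneg (LA g w)]
    rw [le_div_iff₀ hwd] at h1
    rw [dd, hrv, hrw, div_mul_eq_mul_div, div_le_iff₀ (by positivity)]
    have : (‖LA g v‖ / ‖v‖ + ‖LA g w‖ / ‖w‖) * (‖v‖ * ‖w‖) = ‖w‖ * ‖LA g v‖ + ‖v‖ * ‖LA g w‖ := by
      field_simp
    rw [this]; linarith
  have hp1 := ratio_pos g hv
  have hp2 := ratio_pos g hw
  have key : ∀ r : ℝ, 0 < r → dd v w * opNorm g ≤ 2 * r →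
      Real.log (opNorm g) ≤ Real.log (2 / dd v w) + Real.log r := by
    intro r hr h
    rw [← Real.log_mul (by positivity) hr.ne']
    apply Real.log_le_log (opNorm_pos g)
    rw [div_mul_eq_mul_div, le_div_iff₀ hd]; linarith
  have hlog : Real.log (opNorm g) ≤ Real.log (2 / dd v w) + (|YY g v - c| + |YY g w - c|) := by
    have a1 := le_abs_self (YY g v - c)
    have a2 := le_abs_self (YY g w - c)
    have b1 := abs_nonneg (YY g v - c)
    have b2 := abs_nonneg (YY g w - c)
    rcases le_total rv rw' with h | h
    · have := key rw' hp2 (by linarith)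
      have e : YY g w = Real.log rw' := rfl
      linarith
    · have := key rv hp1 (by linarith)
      have e : YY g v = Real.log rv := rfl
      linarith
  have h2 : Real.log (2 / dd v w) ≤ 1 / dd v w := by
    have e : 2 / dd v w = 2 * (1 / dd v w) := by ring
    rw [e, Real.log_mul (by norm_num) (by positivity)]
    have := Real.log_le_sub_one_of_pos (show 0 < 1 / dd v w by positivity)
    have := Real.log_two_lt_d9
    linarith
  have h3 : dd v w * (1 / dd v w) = 1 := by field_simp
  have h4 := dd_le_one v w
  have b1 := abs_nonneg (YY g v - c)
  have b2 := abs_nonneg (YY g w - c)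
  nlinarith

lemma measurable_YY_comp {α : Type*} [MeasurableSpace α] {f : α → SL2} {k : α → E2}
    (hf : Measurable f) (hk : Measurable k) : Measurable fun a => YY (f a) (k a) :=
  measurable_YY.comp (g := fun p : SL2 × E2 => YY p.1 p.2) (f := fun a => (f a, k a))
    (hf.prodMk hk)

/-- lower tail bound. -/
lemma neg_part_bound {μ : Measure SL2} [IsProbabilityMeasure μ] (hmom : HasExpMoment μ)
    {ε a b : ℝ} {n : ℕ} (hε : 0 < ε) (hab : a ≤ b) {v : E2} (hv : v ≠ 0)
    (h : ∫⁻ g, ENNReal.ofReal (Real.exp (-(ε * YY g v))) ∂(cp μ n) ≤ ENNReal.ofReal (Real.exp (-(ε * a)))) :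
    ∫ g, |YY g v - b| ∂(cp μ n) ≤ (∫ g, YY g v ∂(cp μ n)) - b + 2 * (b - a) + 2 / ε := by
  have hY := integrable_YY_cp hmom n hv
  have hE : Integrable (fun g => Real.exp (-(ε * YY g v))) (cp μ n) := by
    refine ⟨(Real.measurable_exp.comp ((measurable_YY_left v).const_mul ε).neg).aestronglyMeasurable, ?_⟩
    rw [hasFiniteIntegral_iff_ofReal (Eventually.of_forall fun g => (Real.exp_pos _).le)]
    exact lt_of_le_of_lt h ENNReal.ofReal_lt_top
  have hEb : ∫ g, Real.exp (-(ε * YY g v)) ∂(cp μ n) ≤ Real.exp (-(ε * a)) := by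
    rw [← ofReal_integral_eq_lintegral_ofReal hE (Eventually.of_forall fun g => (Real.exp_pos _).le)] at h
    exact (ENNReal.ofReal_le_ofReal_iff (Real.exp_pos _).le).1 h
  have hpt : ∀ g, |YY g v - b| ≤ (YY g v - b) + 2 * (b - a) +
      (2 / ε * Real.exp (ε * a)) * Real.exp (-(ε * YY g v)) := by
    intro g
    have h1 : (2 / ε * Real.exp (ε * a)) * Real.exp (-(ε * YY g v)) =
        2 / ε * Real.exp (-(ε * (YY g v - a))) := by
      rw [mul_assoc, ← Real.exp_add]; congr 2; ring
    rw [h1]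
    have h2 := Real.add_one_le_exp (-(ε * (YY g v - a)))
    have h3 : -(YY g v - a) ≤ 1 / ε * Real.exp (-(ε * (YY g v - a))) := by
      rw [div_mul_eq_mul_div, le_div_iff₀ hε]; nlinarith
    have h4 : 0 ≤ 1 / ε * Real.exp (-(ε * (YY g v - a))) := by positivity
    have h5 : 2 / ε * Real.exp (-(ε * (YY g v - a))) = 2 * (1 / ε * Real.exp (-(ε * (YY g v - a)))) := by ring
    rw [h5]
    rcases abs_cases (YY g v - b) with ⟨h, _⟩ | ⟨h, _⟩ <;> rw [h] <;> nlinarith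
  have i1 : Integrable (fun g => YY g v - b) (cp μ n) := hY.sub (integrable_const b)
  have i2 : Integrable (fun g => YY g v - b + 2 * (b - a)) (cp μ n) := i1.add (integrable_const _)
  calc ∫ g, |YY g v - b| ∂(cp μ n)
      ≤ ∫ g, ((YY g v - b) + 2 * (b - a) + (2 / ε * Real.exp (ε * a)) * Real.exp (-(ε * YY g v))) ∂(cp μ n) :=
        integral_mono i1.abs (i2.add (hE.const_mul _)) hpt
    _ = (∫ g, YY g v ∂(cp μ n)) - b + 2 * (b - a) +
        (2 / ε * Real.exp (ε * a)) * ∫ g, Real.exp (-(ε * YY g v)) ∂(cp μ n) := by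
        rw [integral_add i2 (hE.const_mul _), integral_add i1 (integrable_const _),
          integral_sub hY (integrable_const b), integral_const_mul]
        simp
        exact integral_const_mul _ _
    _ ≤ _ := by
        have : (2 / ε * Real.exp (ε * a)) * ∫ g, Real.exp (-(ε * YY g v)) ∂(cp μ n) ≤
          (2 / ε * Real.exp (ε * a)) * Real.exp (-(ε * a)) := by gcongr
        have e : (2 / ε * Real.exp (ε * a)) * Real.exp (-(ε * a)) = 2 / ε := by
          rw [mul_assoc, ← Real.exp_add]; simp
        linarith

lemma pair_step {μ : Measure SL2} [IsProbabilityMeasure μ] (hmom : HasExpMoment μ) {n : ℕ}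
    {Δ c Q : ℝ} {x : E2} (hx : x ≠ 0) (hc : c ≤ 0)
    (hΔ : Δ ≤ ∫ p, dd (LA p.1 x) (LA p.2 x) ∂((cp μ 3).prod (cp μ 3)))
    (hQ : ∫ h, (∫ g, |YY g (LA h x) - c| ∂(cp μ n)) ∂(cp μ 3) ≤ Q) :
    Δ * ∫ g, Real.log (opNorm g) ∂(cp μ n) ≤ 2 * Q + 1 := by
  set l := ∫ g, Real.log (opNorm g) ∂(cp μ n) with hl
  have hl0 : 0 ≤ l := integral_nonneg log_opNorm_nonneg
  have hli := integrable_log_cp hmom n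
  set I : SL2 → ℝ := fun h => ∫ g, |YY g (LA h x) - c| ∂(cp μ n) with hI
  have hYi : ∀ h, Integrable (fun g => |YY g (LA h x) - c|) (cp μ n) := fun h =>
    ((integrable_YY_cp hmom n (LA_ne_zero h hx)).sub (integrable_const c)).abs
  have hIm : Measurable I := by
    refine (StronglyMeasurable.integral_prod_right
      (f := fun (h : SL2) (g : SL2) => |YY g (LA h x) - c|) (ν := cp μ n) ?_).measurable
    apply Measurable.stronglyMeasurable
    have h1 : Measurable fun p : SL2 × SL2 => YY p.2 (LA p.1 x) :=
      measurable_YY_comp measurable_snd ((continuous_LA_apply x).measurable.comp measurable_fst)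
    exact (h1.sub_const c).abs
  have hIi : Integrable I (cp μ 3) := by
    refine (integrable_const (l + |c|)).mono' hIm.aestronglyMeasurable (Eventually.of_forall fun h => ?_)
    rw [Real.norm_of_nonneg (integral_nonneg fun g => abs_nonneg _)]
    calc I h ≤ ∫ g, (Real.log (opNorm g) + |c|) ∂(cp μ n) := by
          refine integral_mono (hYi h) (hli.add (integrable_const _)) fun g => ?_
          refine (abs_sub _ _).trans ?_
          have := abs_YY_le g (LA_ne_zero h hx)
          simp only; linarith
      _ = l + |c| := by rw [integral_add hli (integrable_const _)]; simp [hl]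
  have hpt : ∀ p : SL2 × SL2, dd (LA p.1 x) (LA p.2 x) * l ≤ I p.1 + I p.2 + 1 := by
    intro p
    calc dd (LA p.1 x) (LA p.2 x) * l = ∫ g, dd (LA p.1 x) (LA p.2 x) * Real.log (opNorm g) ∂(cp μ n) := by
          rw [integral_const_mul]
      _ ≤ ∫ g, (|YY g (LA p.1 x) - c| + |YY g (LA p.2 x) - c| + 1) ∂(cp μ n) := by
          refine integral_mono (hli.const_mul _) (((hYi _).add (hYi _)).add (integrable_const _)) fun g => ?_
          exact dd_log_le g (LA_ne_zero _ hx) (LA_ne_zero _ hx) hc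
      _ = _ := by
          have i2 : Integrable (fun g => |YY g (LA p.1 x) - c| + |YY g (LA p.2 x) - c|) (cp μ n) :=
            (hYi _).add (hYi _)
          rw [integral_add i2 (integrable_const _), integral_add (hYi _) (hYi _)]
          simp [hI]
  have hddm : Measurable fun p : SL2 × SL2 => dd (LA p.1 x) (LA p.2 x) :=
    measurable_dd.comp (g := fun p : E2 × E2 => dd p.1 p.2) (f := fun p : SL2 × SL2 => (LA p.1 x, LA p.2 x))
      (((continuous_LA_apply x).measurable.comp measurable_fst).prodMk
        ((continuous_LA_apply x).measurable.comp measurable_snd))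
  have hddi : Integrable (fun p : SL2 × SL2 => dd (LA p.1 x) (LA p.2 x)) ((cp μ 3).prod (cp μ 3)) :=
    (integrable_const 1).mono' hddm.aestronglyMeasurable (Eventually.of_forall fun p => by
      rw [Real.norm_of_nonneg (dd_nonneg _ _)]; exact dd_le_one _ _)
  have i1 : Integrable (fun p : SL2 × SL2 => I p.1) ((cp μ 3).prod (cp μ 3)) := hIi.comp_fst _
  have i2 : Integrable (fun p : SL2 × SL2 => I p.2) ((cp μ 3).prod (cp μ 3)) := hIi.comp_snd _
  have i3 : Integrable (fun p : SL2 × SL2 => I p.1 + I p.2) ((cp μ 3).prod (cp μ 3)) := i1.add i2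
  calc Δ * l ≤ (∫ p, dd (LA p.1 x) (LA p.2 x) ∂((cp μ 3).prod (cp μ 3))) * l := by gcongr
    _ = ∫ p, dd (LA p.1 x) (LA p.2 x) * l ∂((cp μ 3).prod (cp μ 3)) := by rw [integral_mul_const]
    _ ≤ ∫ p, (I p.1 + I p.2 + 1) ∂((cp μ 3).prod (cp μ 3)) :=
        integral_mono (hddi.mul_const _) (i3.add (integrable_const _)) hpt
    _ = 2 * (∫ h, I h ∂(cp μ 3)) + 1 := by
        rw [integral_add i3 (integrable_const _), integral_add i1 i2, integral_fun_fst, integral_fun_snd]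
        simp; ring
    _ ≤ 2 * Q + 1 := by gcongr

lemma drift {μ : Measure SL2} [IsProbabilityMeasure μ] (hmom : HasExpMoment μ) (hzd : ZariskiDense μ)
    {σ : ℝ} (hσ : 0 < σ) (hl : ∀ n : ℕ, n * σ ≤ ∫ g, Real.log (opNorm g) ∂(cp μ n)) :
    ∃ k : ℕ, 1 ≤ k ∧ ∃ c > (0 : ℝ), ∀ v : E2, v ≠ 0 → c ≤ ∫ g, YY g v ∂(cp μ k) := by
  by_contra hcon
  push Not at hcon
  obtain ⟨Δ, hΔ, hΔ'⟩ := delta_exists hzd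
  have habs : ∀ n (v : E2), v ≠ 0 → |∫ g, YY g v ∂(cp μ n)| ≤ ∫ g, Real.log (opNorm g) ∂(cp μ n) :=
    fun n v hv => norm_integral_le_of_norm_le (f := fun g => YY g v) (integrable_log_cp hmom n)
      (Eventually.of_forall fun g => abs_YY_le g hv)
  set A : Set ℝ := {c | ∃ k : ℕ, 1 ≤ k ∧ ∀ v : E2, v ≠ 0 → c * k ≤ ∫ g, YY g v ∂(cp μ k)} with hA
  have hA0 : ∀ c ∈ A, c ≤ 0 := by
    rintro c ⟨k, hk, h⟩
    by_contra hc
    push Not at hc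
    have hk' : (0 : ℝ) < k := by exact_mod_cast hk
    obtain ⟨v, hv, hlt⟩ := hcon k hk (c * k) (by positivity)
    exact absurd (h v hv) (not_le.2 hlt)
  have hne : A.Nonempty := ⟨-∫ g, Real.log (opNorm g) ∂(cp μ 1), 1, le_rfl, fun v hv => by
    have := (abs_le.1 (habs 1 v hv)).1
    simpa using this⟩
  have hbdd : BddAbove A := ⟨0, hA0⟩
  set c := sSup A with hc
  have hc0 : c ≤ 0 := csSup_le hne hA0
  set l3 := ∫ g, Real.log (opNorm g) ∂(cp μ 3) with hl3
  set η := Δ * σ / 16 with hη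
  have hηp : 0 < η := by positivity
  obtain ⟨c', ⟨k, hk, hck⟩, hc'⟩ := exists_lt_of_lt_csSup hne (show c - η < sSup A by linarith)
  have hkp : (0 : ℝ) < k := by exact_mod_cast hk
  obtain ⟨ε₀, hε₀, K, hK, hexp⟩ := exp_bound_k hmom k
  obtain ⟨ε, hε, hεle, hεK⟩ : ∃ ε > (0 : ℝ), ε ≤ ε₀ ∧ ε * K ≤ η * k := by
    refine ⟨min ε₀ (η * k / (K + 1)), by positivity, min_le_left _ _, ?_⟩
    calc min ε₀ (η * k / (K + 1)) * K ≤ η * k / (K + 1) * (K + 1) := by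
          gcongr
          · exact min_le_right _ _
          · linarith
      _ = η * k := by field_simp
  have hblock : ∀ v : E2, v ≠ 0 → ∫⁻ g, ENNReal.ofReal (Real.exp (-(ε * YY g v))) ∂(cp μ k) ≤
      ENNReal.ofReal (Real.exp (-(ε * ((c - 2 * η) * k)))) := by
    intro v hv
    refine (hexp ε hε hεle v hv).trans (ENNReal.ofReal_le_ofReal (Real.exp_le_exp.2 ?_))
    have h1 := hck v hv
    have h2 : (c - η) * k ≤ c' * k := by gcongr
    nlinarith
  have main : ∀ q : ℕ, 1 ≤ q → Δ * (σ * (q * k)) ≤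
      2 * (1 + l3 + 4 * η * (q * k) + 2 / ε) + 1 := by
    intro q hq
    set n := q * k with hn
    have hn' : (n : ℝ) = q * k := by rw [hn]; push_cast; ring
    rw [← hn']
    have hit : ∀ v : E2, v ≠ 0 → ∫⁻ g, ENNReal.ofReal (Real.exp (-(ε * YY g v))) ∂(cp μ n) ≤
        ENNReal.ofReal (Real.exp (-(ε * ((c - 2 * η) * n)))) := by
      intro v hv
      refine (exp_iter hblock q v hv).trans (le_of_eq ?_)
      rw [← ENNReal.ofReal_pow (Real.exp_pos _).le, ← Real.exp_nat_mul, hn']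
      congr 2; ring
    have hn3 : (0 : ℝ) < ((n + 3 : ℕ) : ℝ) := by positivity
    obtain ⟨x, hx, hxlt⟩ : ∃ x : E2, x ≠ 0 ∧ ∫ g, YY g x ∂(cp μ (n + 3)) < c * (n + 3) + 1 := by
      by_contra hno
      push Not at hno
      have : c + 1 / ((n + 3 : ℕ) : ℝ) ∈ A := by
        refine ⟨n + 3, by omega, fun v hv => ?_⟩
        refine le_trans (le_of_eq ?_) (hno v hv)
        field_simp; push_cast; ring
      have h1 := le_csSup hbdd this
      have : 0 < 1 / ((n + 3 : ℕ) : ℝ) := by positivity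
      linarith
    have hcn : c * n ≤ 0 := mul_nonpos_of_nonpos_of_nonneg hc0 (Nat.cast_nonneg n)
    have hlow : ∀ h : SL2, ∫ g, |YY g (LA h x) - c * n| ∂(cp μ n) ≤
        (∫ g, YY g (LA h x) ∂(cp μ n)) - c * n + 2 * (2 * η * n) + 2 / ε := by
      intro h
      have := neg_part_bound hmom hε (a := (c - 2 * η) * n) (b := c * n)
        (by have : (0:ℝ) ≤ η * n := by positivity
            nlinarith) (LA_ne_zero h hx) (hit _ (LA_ne_zero h hx))
      refine this.trans (le_of_eq ?_); ring
    have hadd : ∫ g, YY g x ∂(cp μ (n + 3)) =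
        (∫ h, ∫ g, YY g (LA h x) ∂(cp μ n) ∂(cp μ 3)) + ∫ h, YY h x ∂(cp μ 3) ∧
        Integrable (fun h => ∫ g, YY g (LA h x) ∂(cp μ n)) (cp μ 3) := by
      have hmeas : Measurable fun h => ∫ g, YY g (LA h x) ∂(cp μ n) := by
        refine (StronglyMeasurable.integral_prod_right
          (f := fun (h : SL2) (g : SL2) => YY g (LA h x)) (ν := cp μ n) ?_).measurable
        exact (measurable_YY_comp measurable_snd
          ((continuous_LA_apply x).measurable.comp measurable_fst)).stronglyMeasurable
      have hintg : Integrable (fun h => ∫ g, YY g (LA h x) ∂(cp μ n)) (cp μ 3) :=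
        (integrable_const (∫ g, Real.log (opNorm g) ∂(cp μ n))).mono' hmeas.aestronglyMeasurable
          (Eventually.of_forall fun h => habs n _ (LA_ne_zero h hx))
      refine ⟨?_, hintg⟩
      rw [integral_cp_add μ n 3 (integrable_YY_cp hmom _ hx), ← integral_add hintg (integrable_YY_cp hmom _ hx)]
      refine integral_congr_ae (Eventually.of_forall fun h => ?_)
      simp only [YY_mul _ _ hx]
      rw [integral_add (integrable_YY_cp hmom _ (LA_ne_zero h hx)) (integrable_const _)]
      simp
    obtain ⟨hadd, hintg⟩ := hadd
    have hQ : ∫ h, (∫ g, |YY g (LA h x) - c * n| ∂(cp μ n)) ∂(cp μ 3) ≤ 1 + l3 + 4 * η * n + 2 / ε := by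
      have hR : Integrable (fun h => (∫ g, YY g (LA h x) ∂(cp μ n)) - c * n + 2 * (2 * η * n) + 2 / ε) (cp μ 3) :=
        ((hintg.sub (integrable_const _)).add (integrable_const _)).add (integrable_const _)
      calc _ ≤ ∫ h, ((∫ g, YY g (LA h x) ∂(cp μ n)) - c * n + 2 * (2 * η * n) + 2 / ε) ∂(cp μ 3) := by
            refine integral_mono_of_nonneg (Eventually.of_forall fun h => integral_nonneg fun g => abs_nonneg _)
              hR (Eventually.of_forall hlow)
        _ = (∫ h, (∫ g, YY g (LA h x) ∂(cp μ n)) ∂(cp μ 3)) + (- c * n + 2 * (2 * η * n) + 2 / ε) := by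
            have : ∀ h, (∫ g, YY g (LA h x) ∂(cp μ n)) - c * n + 2 * (2 * η * n) + 2 / ε =
              (∫ g, YY g (LA h x) ∂(cp μ n)) + (- c * n + 2 * (2 * η * n) + 2 / ε) := fun h => by ring
            simp_rw [this]
            rw [integral_add hintg (integrable_const _)]; simp
        _ ≤ _ := by
            have := (abs_le.1 (habs 3 x hx)).1
            nlinarith
    have := pair_step hmom hx hcn (hΔ' x hx) hQ
    have h2 := hl n
    nlinarith
  have hkk : (0 : ℝ) < k := hkp
  obtain ⟨q, hq⟩ := exists_nat_gt ((2 * (1 + l3 + 2 / ε) + 1) / (Δ * σ / 2 * k))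
  have hq1 : 1 ≤ q := by
    by_contra h0
    have : q = 0 := by omega
    rw [this] at hq
    have hl30 : 0 ≤ l3 := integral_nonneg log_opNorm_nonneg
    have : 0 ≤ (2 * (1 + l3 + 2 / ε) + 1) / (Δ * σ / 2 * k) := by positivity
    simp at hq; linarith
  have := main q hq1
  rw [div_lt_iff₀ (by positivity)] at hq
  rw [hη] at this
  nlinarith

lemma exp_le_opNorm {ε : ℝ} (hε : 0 ≤ ε) (g : SL2) {v : E2} (hv : v ≠ 0) :
    Real.exp (-(ε * YY g v)) ≤ opNorm g ^ ε := by
  rw [Real.rpow_def_of_pos (opNorm_pos g)]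
  apply Real.exp_le_exp.2
  have := (abs_le.1 (abs_YY_le g hv)).1
  nlinarith

lemma lint_opNorm_small {μ : Measure SL2} [IsProbabilityMeasure μ] {ε₁ ε : ℝ} (hε : 0 < ε)
    (h1 : ε ≤ ε₁) (hm : ∫⁻ g, ENNReal.ofReal (opNorm g ^ ε₁) ∂μ < ⊤) (n : ℕ) :
    ∫⁻ g, ENNReal.ofReal (opNorm g ^ ε) ∂(cp μ n) < ⊤ := by
  refine lt_of_le_of_lt (lintegral_mono fun g => ?_) (lint_opNorm_cp μ (hε.trans_le h1) hm n)
  exact ENNReal.ofReal_le_ofReal (Real.rpow_le_rpow_of_exponent_le (one_le_opNorm g) h1)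

lemma trans_sum {μ : Measure SL2} [IsProbabilityMeasure μ] (hmom : HasExpMoment μ) (hzd : ZariskiDense μ)
    {σ : ℝ} (hσ : 0 < σ) (hl : ∀ n : ℕ, n * σ ≤ ∫ g, Real.log (opNorm g) ∂(cp μ n)) :
    ∃ εs > (0 : ℝ), ∀ ε : ℝ, 0 < ε → ε ≤ εs →
      (∫⁻ g, ENNReal.ofReal (opNorm g ^ ε) ∂μ < ⊤) ∧ ∃ C : ENNReal, C ≠ ⊤ ∧ ∀ v : E2, v ≠ 0 →
      ∑' n, ∫⁻ g, ENNReal.ofReal (Real.exp (-(ε * YY g v))) ∂(cp μ n) ≤ C := by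
  obtain ⟨k, hk, c, hc, hdr⟩ := drift hmom hzd hσ hl
  obtain ⟨ε₀, hε₀, K, hK, hexp⟩ := exp_bound_k hmom k
  obtain ⟨ε₁, hε₁, hm⟩ := id hmom
  refine ⟨min (min ε₀ ε₁) (c / (2 * (K + 1))), by positivity, fun ε hε hle => ?_⟩
  have l1 : ε ≤ ε₀ := hle.trans ((min_le_left _ _).trans (min_le_left _ _))
  have l2 : ε ≤ ε₁ := hle.trans ((min_le_left _ _).trans (min_le_right _ _))
  have l3 : ε ≤ c / (2 * (K + 1)) := hle.trans (min_le_right _ _)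
  refine ⟨by have := lint_opNorm_small hε l2 hm 1; rwa [cp_one] at this, ?_⟩
  rw [le_div_iff₀ (by positivity)] at l3
  set ρ := ENNReal.ofReal (Real.exp (-(ε * (c / 2)))) with hρ
  have hρ1 : ρ < 1 := by
    rw [hρ, ← ENNReal.ofReal_one]
    apply (ENNReal.ofReal_lt_ofReal_iff one_pos).2
    rw [Real.exp_lt_one_iff]
    have : 0 < ε * (c / 2) := by positivity
    linarith
  have hb : ∀ v : E2, v ≠ 0 → ∫⁻ g, ENNReal.ofReal (Real.exp (-(ε * YY g v))) ∂(cp μ k) ≤ ρ := by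
    intro v hv
    refine (hexp ε hε l1 v hv).trans (ENNReal.ofReal_le_ofReal (Real.exp_le_exp.2 ?_))
    have := hdr v hv
    nlinarith
  have hit := exp_iter hb
  have hj : ∀ j (v : E2), v ≠ 0 → ∫⁻ g, ENNReal.ofReal (Real.exp (-(ε * YY g v))) ∂(cp μ j) ≤
      ∫⁻ g, ENNReal.ofReal (opNorm g ^ ε) ∂(cp μ j) := fun j v hv =>
    lintegral_mono fun g => ENNReal.ofReal_le_ofReal (exp_le_opNorm hε.le g hv)
  have : NeZero k := ⟨by omega⟩
  refine ⟨∑' p : ℕ × Fin k, ρ ^ p.1 * ∫⁻ g, ENNReal.ofReal (opNorm g ^ ε) ∂(cp μ p.2), ?_, ?_⟩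
  · rw [ENNReal.tsum_prod (f := fun (q : ℕ) (j : Fin k) =>
      ρ ^ q * ∫⁻ g, ENNReal.ofReal (opNorm g ^ ε) ∂(cp μ j))]
    simp_rw [ENNReal.tsum_mul_left]
    rw [ENNReal.tsum_mul_right, ENNReal.tsum_geometric, tsum_fintype]
    refine ENNReal.mul_ne_top (ENNReal.inv_ne_top.2 (tsub_pos_of_lt hρ1).ne') ?_
    refine (ENNReal.sum_lt_top.2 fun (j : Fin k) _ => ?_).ne
    exact lint_opNorm_small hε l2 hm j
  · intro v hv
    rw [← (Nat.divModEquiv k).symm.tsum_eq]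
    refine ENNReal.tsum_le_tsum fun p => ?_
    have := exp_iter_add (hj p.2) (hit p.1) v hv
    simpa [Nat.divModEquiv, mul_comm] using this

/-- potential of a function. -/
def Upot (μ : Measure SL2) (φ : E2 → ENNReal) (v : E2) : ENNReal :=
  ∑' n, ∫⁻ g, φ (LA g v) ∂(cp μ n)

lemma measurable_LA_comp {α : Type*} [MeasurableSpace α] {f : α → SL2} {k : α → E2}
    (hf : Measurable f) (hk : Measurable k) : Measurable fun a => LA (f a) (k a) :=
  continuous_LA2.measurable.comp (g := fun p : SL2 × E2 => LA p.1 p.2) (f := fun a => (f a, k a))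
    (hf.prodMk hk)

lemma meas_orbit {φ : E2 → ENNReal} (hφ : Measurable φ) (v : E2) : Measurable fun g => φ (LA g v) :=
  hφ.comp (continuous_LA_apply v).measurable

lemma meas_lint (ρ : Measure SL2) [SFinite ρ] {φ : E2 → ENNReal} (hφ : Measurable φ) :
    Measurable fun v => ∫⁻ g, φ (LA g v) ∂ρ := by
  refine Measurable.lintegral_prod_right (f := fun (v : E2) (g : SL2) => φ (LA g v)) ?_
  exact hφ.comp (measurable_LA_comp measurable_snd measurable_fst)

lemma lint_step (μ : Measure SL2) [IsProbabilityMeasure μ] {φ : E2 → ENNReal} (hφ : Measurable φ)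
    (n : ℕ) (v : E2) :
    ∫⁻ g, φ (LA g v) ∂(cp μ (n + 1)) = ∫⁻ h, ∫⁻ g, φ (LA g (LA h v)) ∂(cp μ n) ∂μ := by
  rw [lintegral_cp_succ μ n (meas_orbit hφ v)]
  simp_rw [LA_mul]

lemma Upot_eq (μ : Measure SL2) [IsProbabilityMeasure μ] {φ : E2 → ENNReal} (hφ : Measurable φ) (v : E2) :
    Upot μ φ v = φ v + ∫⁻ h, Upot μ φ (LA h v) ∂μ := by
  unfold Upot
  rw [tsum_eq_zero_add' ENNReal.summable, lintegral_cp_zero μ (meas_orbit hφ v), LA_id,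
    lintegral_tsum]
  · simp_rw [lint_step μ hφ]
  · intro n
    exact ((meas_lint _ hφ).comp (continuous_LA_apply v).measurable).aemeasurable

lemma measurable_Upot (μ : Measure SL2) [IsProbabilityMeasure μ] {φ : E2 → ENNReal} (hφ : Measurable φ) :
    Measurable (Upot μ φ) :=
  Measurable.tsum fun _ => meas_lint _ hφ

/-- maximum principle -/
lemma max_princ (μ : Measure SL2) [IsProbabilityMeasure μ] {φ : E2 → ENNReal} (hφ : Measurable φ)
    {M : ENNReal} (h : ∀ v : E2, v ≠ 0 → φ v ≠ 0 → Upot μ φ v ≤ M) (v : E2) (hv : v ≠ 0) :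
    Upot μ φ v ≤ M := by
  have key : ∀ N (v : E2), v ≠ 0 → ∑ n ∈ Finset.range N, ∫⁻ g, φ (LA g v) ∂(cp μ n) ≤ M := by
    intro N
    induction N with
    | zero => intro v hv; simp
    | succ N ih =>
      intro v hv
      by_cases h0 : φ v = 0
      · rw [Finset.sum_range_succ', lintegral_cp_zero μ (meas_orbit hφ v), LA_id, h0, add_zero]
        simp_rw [lint_step μ hφ]
        rw [← lintegral_finsetSum]
        · calc _ ≤ ∫⁻ h, M ∂μ := lintegral_mono fun h => ih _ (LA_ne_zero h hv)
            _ = M := by simp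
        · intro n _
          exact (meas_lint _ hφ).comp (continuous_LA_apply v).measurable
      · exact (ENNReal.sum_le_tsum _).trans (h v hv h0)
  unfold Upot
  rw [ENNReal.tsum_eq_iSup_nat]
  exact iSup_le fun N => key N v hv

/-- window indicator -/
def win (v : E2) : ENNReal := Set.indicator {v : E2 | v ≠ 0 ∧ |Real.log ‖v‖| ≤ 3} (fun _ => 1) v

lemma measurable_win : Measurable win := by
  refine measurable_const.indicator ?_
  have h1 : MeasurableSet {v : E2 | v ≠ 0} := (measurableSet_singleton (0 : E2)).compl
  exact h1.inter (measurableSet_le (Real.measurable_log.comp measurable_norm).abs measurable_const)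

lemma window_bound {μ : Measure SL2} [IsProbabilityMeasure μ] {ε : ℝ} (hε : 0 < ε) {C : ENNReal}
    (hC : C ≠ ⊤)
    (h : ∀ v : E2, v ≠ 0 → ∑' n, ∫⁻ g, ENNReal.ofReal (Real.exp (-(ε * YY g v))) ∂(cp μ n) ≤ C) :
    ∃ M : ENNReal, M ≠ ⊤ ∧ ∀ v : E2, v ≠ 0 → Upot μ win v ≤ M := by
  refine ⟨ENNReal.ofReal (Real.exp (6 * ε)) * C, ENNReal.mul_ne_top ENNReal.ofReal_ne_top hC,
    max_princ μ measurable_win fun v hv h0 => ?_⟩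
  have hvw : |Real.log ‖v‖| ≤ 3 := by
    by_contra hc
    apply h0
    unfold win
    rw [Set.indicator_of_notMem]
    exact fun hm => hc hm.2
  calc Upot μ win v ≤ ∑' n, ENNReal.ofReal (Real.exp (6 * ε)) *
        ∫⁻ g, ENNReal.ofReal (Real.exp (-(ε * YY g v))) ∂(cp μ n) := by
        refine ENNReal.tsum_le_tsum fun n => ?_
        rw [← lintegral_const_mul _ (measurable_expYY ε v)]
        refine lintegral_mono fun g => ?_
        unfold win
        by_cases hm : LA g v ∈ {v : E2 | v ≠ 0 ∧ |Real.log ‖v‖| ≤ 3}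
        · rw [Set.indicator_of_mem hm, ← ENNReal.ofReal_mul (Real.exp_pos _).le, ← Real.exp_add]
          rw [← ENNReal.ofReal_one]
          apply ENNReal.ofReal_le_ofReal
          apply Real.one_le_exp
          have : YY g v ≤ 6 := by
            rw [YY, Real.log_div (norm_ne_zero_iff.2 (LA_ne_zero g hv)) (norm_ne_zero_iff.2 hv)]
            have h1 := (abs_le.1 hm.2).2
            have h2 := (abs_le.1 hvw).1
            linarith
          nlinarith
        · rw [Set.indicator_of_notMem hm]; exact zero_le
    _ = ENNReal.ofReal (Real.exp (6 * ε)) *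
        ∑' n, ∫⁻ g, ENNReal.ofReal (Real.exp (-(ε * YY g v))) ∂(cp μ n) := ENNReal.tsum_mul_left
    _ ≤ _ := by gcongr; exact h v hv

lemma log_one_add_le {x ε : ℝ} (hx : 0 ≤ x) (hε : 0 < ε) (hε1 : ε ≤ 1) :
    Real.log (1 + x) ≤ x ^ ε / ε := by
  have h1 : (1 + x) ^ ε ≤ 1 + x ^ ε := by
    have := Real.rpow_add_le_add_rpow (p := ε) zero_le_one hx hε.le hε1
    simpa using this
  rw [le_div_iff₀ hε, mul_comm, ← Real.log_rpow (by linarith)]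
  have h2 : 0 < (1 + x) ^ ε := Real.rpow_pos_of_pos (by linarith) _
  have := Real.log_le_sub_one_of_pos h2
  linarith

lemma YY_diff_le_one_side (h : SL2) {v w : E2} (hv : v ≠ 0) (hw : w ≠ 0) {ε : ℝ} (hε : 0 < ε) (hε1 : ε ≤ 1) :
    YY h v - YY h w ≤ opNorm h ^ (2 * ε) * dd v w ^ ε / ε := by
  have hA := norm_pos_iff.2 hv
  have hB := norm_pos_iff.2 hw
  have p1 := ratio_pos h hv
  have p2 := ratio_pos h hw
  have hk := key_ineq h v w
  have ho := opNorm_pos h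
  have hd := dd_nonneg v w
  have h1 : ‖LA h v‖ / ‖v‖ ≤ ‖LA h w‖ / ‖w‖ + dd v w * opNorm h := by
    have e : ‖LA h w‖ / ‖w‖ + dd v w * opNorm h =
        (‖v‖ * ‖LA h w‖ + |wdg v w| * opNorm h) / (‖v‖ * ‖w‖) := by
      rw [dd]; field_simp
    rw [e, div_le_div_iff₀ hA (by positivity)]
    nlinarith
  have h2 : 1 ≤ opNorm h * (‖LA h w‖ / ‖w‖) := by
    have := le_ratio h hw
    rwa [inv_le_iff_one_le_mul₀' ho] at this
  have h3 : ‖LA h v‖ / ‖v‖ ≤ (1 + dd v w * opNorm h ^ 2) * (‖LA h w‖ / ‖w‖) := by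
    have : dd v w * opNorm h ≤ dd v w * opNorm h * (opNorm h * (‖LA h w‖ / ‖w‖)) :=
      le_mul_of_one_le_right (by positivity) h2
    nlinarith
  have h4 : YY h v ≤ Real.log (1 + dd v w * opNorm h ^ 2) + YY h w := by
    unfold YY
    rw [← Real.log_mul (by positivity) p2.ne']
    exact Real.log_le_log p1 h3
  have h5 := log_one_add_le (x := dd v w * opNorm h ^ 2) (by positivity) hε hε1
  have h6 : (dd v w * opNorm h ^ 2) ^ ε = opNorm h ^ (2 * ε) * dd v w ^ ε := by
    rw [Real.mul_rpow hd (by positivity), mul_comm, Real.rpow_mul ho.le]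
    norm_num
  rw [h6] at h5
  linarith

lemma abs_YY_diff_le (h : SL2) {v w : E2} (hv : v ≠ 0) (hw : w ≠ 0) {ε : ℝ} (hε : 0 < ε) (hε1 : ε ≤ 1) :
    |YY h v - YY h w| ≤ opNorm h ^ (2 * ε) * dd v w ^ ε / ε := by
  rw [abs_le]
  have h1 := YY_diff_le_one_side h hv hw hε hε1
  have h2 := YY_diff_le_one_side h hw hv hε hε1
  rw [dd_comm] at h2
  constructor <;> linarith

lemma dd_LA (g : SL2) {v w : E2} (hv : v ≠ 0) (hw : w ≠ 0) {ε : ℝ} (hε : 0 < ε) :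
    dd (LA g v) (LA g w) ^ ε ≤ dd v w ^ ε *
      (Real.exp (-(2 * ε * YY g v)) + Real.exp (-(2 * ε * YY g w))) := by
  have hA := norm_pos_iff.2 hv
  have hB := norm_pos_iff.2 hw
  have p1 := LA_norm_pos g hv
  have p2 := LA_norm_pos g hw
  have e1 : dd (LA g v) (LA g w) = dd v w * (Real.exp (-(YY g v)) * Real.exp (-(YY g w))) := by
    rw [dd, dd, wdg_LA, ← Real.exp_add, YY, YY]
    rw [← neg_add, Real.exp_neg, Real.exp_add, Real.exp_log (by positivity), Real.exp_log (by positivity)]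
    field_simp
  have hx : ∀ y : ℝ, Real.exp (-(2 * ε * y)) = (Real.exp (-y) ^ ε) ^ 2 := by
    intro y
    rw [← Real.exp_mul, ← Real.exp_nat_mul]; congr 1; push_cast; ring
  rw [e1, Real.mul_rpow (dd_nonneg _ _) (by positivity), Real.mul_rpow (Real.exp_pos _).le (Real.exp_pos _).le,
    hx, hx]
  have : 0 ≤ dd v w ^ ε := Real.rpow_nonneg (dd_nonneg _ _) _
  gcongr
  nlinarith [sq_nonneg (Real.exp (-YY g v) ^ ε - Real.exp (-YY g w) ^ ε), sq_nonneg (Real.exp (-YY g v) ^ ε),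
    sq_nonneg (Real.exp (-YY g w) ^ ε)]

/-- integrand for the Hölder estimate -/
def FF (v w : E2) (g : SL2) : ENNReal := ENNReal.ofReal |YY g v - YY g w| * win (LA g v)

/-- integrand for the contraction estimate -/
def JJ (ε : ℝ) (v w : E2) (g : SL2) : ENNReal := ENNReal.ofReal (dd (LA g v) (LA g w) ^ ε)

lemma meas_FF {α : Type*} [MeasurableSpace α] {a b : α → E2} {c : α → SL2} (ha : Measurable a)
    (hb : Measurable b) (hc : Measurable c) : Measurable fun x => FF (a x) (b x) (c x) :=
  (((measurable_YY_comp hc ha).sub (measurable_YY_comp hc hb)).abs.ennreal_ofReal).mul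
    (measurable_win.comp (measurable_LA_comp hc ha))

lemma meas_JJ {ε : ℝ} {α : Type*} [MeasurableSpace α] {a b : α → E2} {c : α → SL2} (ha : Measurable a)
    (hb : Measurable b) (hc : Measurable c) : Measurable fun x => JJ ε (a x) (b x) (c x) := by
  have h1 : Measurable fun x => dd (LA (c x) (a x)) (LA (c x) (b x)) :=
    measurable_dd.comp (g := fun p : E2 × E2 => dd p.1 p.2) (f := fun x => (LA (c x) (a x), LA (c x) (b x)))
      ((measurable_LA_comp hc ha).prodMk (measurable_LA_comp hc hb))
  exact (h1.pow_const ε).ennreal_ofReal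

lemma FF_bound {μ : Measure SL2} [IsProbabilityMeasure μ] {ε : ℝ} (hε : 0 < ε) (hε1 : ε ≤ 1)
    {M : ENNReal} (hM : ∀ v : E2, v ≠ 0 → Upot μ win v ≤ M) (N : ℕ) : ∀ v w : E2, v ≠ 0 → w ≠ 0 →
    ∑ n ∈ Finset.range N, ∫⁻ g, FF v w g ∂(cp μ n) ≤
      (M * ENNReal.ofReal (1 / ε) * ∫⁻ g, ENNReal.ofReal (opNorm g ^ (2 * ε)) ∂μ) *
        ∑ n ∈ Finset.range N, ∫⁻ g, JJ ε v w g ∂(cp μ n) := by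
  set b := M * ENNReal.ofReal (1 / ε) * ∫⁻ g, ENNReal.ofReal (opNorm g ^ (2 * ε)) ∂μ with hb
  have hop : Measurable fun g => ENNReal.ofReal (opNorm g ^ (2 * ε)) :=
    (continuous_opNorm.measurable.pow_const _).ennreal_ofReal
  induction N with
  | zero => intro v w hv hw; simp
  | succ N ih =>
    intro v w hv hw
    have mv : Measurable fun h : SL2 => LA h v := (continuous_LA_apply v).measurable
    have mw : Measurable fun h : SL2 => LA h w := (continuous_LA_apply w).measurable
    have mF : Measurable fun g => FF v w g := meas_FF measurable_const measurable_const measurable_id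
    have mJ : Measurable fun g => JJ ε v w g := meas_JJ measurable_const measurable_const measurable_id
    have mJ1 : ∀ n, Measurable fun h => ∫⁻ g, JJ ε (LA h v) (LA h w) g ∂(cp μ n) := fun n =>
      Measurable.lintegral_prod_right (f := fun (h g : SL2) => JJ ε (LA h v) (LA h w) g)
        (meas_JJ (mv.comp measurable_fst) (mw.comp measurable_fst) measurable_snd)
    have mF1 : ∀ n, Measurable fun h => ∫⁻ g, FF (LA h v) (LA h w) g ∂(cp μ n) := fun n =>
      Measurable.lintegral_prod_right (f := fun (h g : SL2) => FF (LA h v) (LA h w) g)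
        (meas_FF (mv.comp measurable_fst) (mw.comp measurable_fst) measurable_snd)
    have mD : Measurable fun h => ENNReal.ofReal |YY h v - YY h w| :=
      ((measurable_YY_left v).sub (measurable_YY_left w)).abs.ennreal_ofReal
    have mW : ∀ n, Measurable fun h => ∫⁻ g, win (LA g (LA h v)) ∂(cp μ n) := fun n =>
      (meas_lint _ measurable_win).comp mv
    have hJ : ∑ n ∈ Finset.range (N + 1), ∫⁻ g, JJ ε v w g ∂(cp μ n) =
        (∫⁻ h, ∑ n ∈ Finset.range N, ∫⁻ g, JJ ε (LA h v) (LA h w) g ∂(cp μ n) ∂μ) +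
          ENNReal.ofReal (dd v w ^ ε) := by
      rw [Finset.sum_range_succ', lintegral_cp_zero μ mJ, lintegral_finsetSum _ fun n _ => mJ1 n]
      congr 1
      · refine Finset.sum_congr rfl fun n _ => ?_
        rw [lintegral_cp_succ μ n mJ]
        simp only [JJ, LA_mul]
      · simp only [JJ, LA_id]
    have hF0 : FF v w 1 = 0 := by
      unfold FF YY
      rw [LA_id, LA_id, div_self (norm_ne_zero_iff.2 hv), div_self (norm_ne_zero_iff.2 hw)]; simp
    have hstep : ∀ n, ∫⁻ g, FF v w g ∂(cp μ (n + 1)) ≤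
        ∫⁻ h, (∫⁻ g, FF (LA h v) (LA h w) g ∂(cp μ n) +
          ENNReal.ofReal |YY h v - YY h w| * ∫⁻ g, win (LA g (LA h v)) ∂(cp μ n)) ∂μ := by
      intro n
      rw [lintegral_cp_succ μ n mF]
      refine lintegral_mono fun h => ?_
      have mFh : Measurable fun g => FF (LA h v) (LA h w) g :=
        meas_FF measurable_const measurable_const measurable_id
      rw [← lintegral_const_mul _ (meas_orbit measurable_win _), ← lintegral_add_left mFh]
      refine lintegral_mono fun g => ?_
      simp only [FF, LA_mul]
      rw [← add_mul]
      gcongr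
      rw [← ENNReal.ofReal_add (abs_nonneg _) (abs_nonneg _), YY_mul _ _ hv, YY_mul _ _ hw]
      apply ENNReal.ofReal_le_ofReal
      refine le_trans (le_of_eq ?_) (abs_add_le _ _)
      congr 1; ring
    have hDint : M * ∫⁻ h, ENNReal.ofReal |YY h v - YY h w| ∂μ ≤ b * ENNReal.ofReal (dd v w ^ ε) := by
      rw [hb, mul_assoc, mul_assoc]
      gcongr
      rw [mul_comm (∫⁻ g, _ ∂μ), ← mul_assoc, ← lintegral_const_mul _ hop]
      refine lintegral_mono fun h => ?_
      rw [← ENNReal.ofReal_mul (by positivity), ← ENNReal.ofReal_mul (by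
        have : 0 ≤ dd v w ^ ε := Real.rpow_nonneg (dd_nonneg _ _) _
        positivity)]
      apply ENNReal.ofReal_le_ofReal
      refine (abs_YY_diff_le h hv hw hε hε1).trans (le_of_eq ?_)
      ring
    calc ∑ n ∈ Finset.range (N + 1), ∫⁻ g, FF v w g ∂(cp μ n)
        = ∑ n ∈ Finset.range N, ∫⁻ g, FF v w g ∂(cp μ (n + 1)) := by
          rw [Finset.sum_range_succ', lintegral_cp_zero μ mF, hF0, add_zero]
      _ ≤ ∑ n ∈ Finset.range N, ∫⁻ h, (∫⁻ g, FF (LA h v) (LA h w) g ∂(cp μ n) +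
          ENNReal.ofReal |YY h v - YY h w| * ∫⁻ g, win (LA g (LA h v)) ∂(cp μ n)) ∂μ :=
          Finset.sum_le_sum fun n _ => hstep n
      _ = ∫⁻ h, (∑ n ∈ Finset.range N, ∫⁻ g, FF (LA h v) (LA h w) g ∂(cp μ n)) +
          ENNReal.ofReal |YY h v - YY h w| * ∑ n ∈ Finset.range N, ∫⁻ g, win (LA g (LA h v)) ∂(cp μ n) ∂μ := by
          have mS : ∀ n, Measurable fun h => ∫⁻ g, FF (LA h v) (LA h w) g ∂(cp μ n) +
              ENNReal.ofReal |YY h v - YY h w| * ∫⁻ g, win (LA g (LA h v)) ∂(cp μ n) := fun n =>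
            (mF1 n).add (mD.mul (mW n))
          rw [← lintegral_finsetSum _ fun n _ => mS n]
          simp_rw [Finset.mul_sum, ← Finset.sum_add_distrib]
      _ ≤ ∫⁻ h, (b * ∑ n ∈ Finset.range N, ∫⁻ g, JJ ε (LA h v) (LA h w) g ∂(cp μ n)) +
          M * ENNReal.ofReal |YY h v - YY h w| ∂μ := by
          refine lintegral_mono fun h => ?_
          refine add_le_add (ih _ _ (LA_ne_zero h hv) (LA_ne_zero h hw)) ?_
          rw [mul_comm M]
          gcongr
          exact (ENNReal.sum_le_tsum _).trans (hM _ (LA_ne_zero h hv))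
      _ = b * (∫⁻ h, ∑ n ∈ Finset.range N, ∫⁻ g, JJ ε (LA h v) (LA h w) g ∂(cp μ n) ∂μ) +
          M * ∫⁻ h, ENNReal.ofReal |YY h v - YY h w| ∂μ := by
          have m1 : Measurable fun h => ∑ n ∈ Finset.range N, ∫⁻ g, JJ ε (LA h v) (LA h w) g ∂(cp μ n) :=
            Finset.measurable_sum _ fun n _ => mJ1 n
          rw [lintegral_add_left (m1.const_mul b), lintegral_const_mul _ m1, lintegral_const_mul _ mD]
      _ ≤ _ := by
          rw [hJ, mul_add]
          gcongr

lemma FF_total {μ : Measure SL2} [IsProbabilityMeasure μ] {ε : ℝ} (hε : 0 < ε) (hε1 : ε ≤ 1)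
    {M C : ENNReal} (hM : ∀ v : E2, v ≠ 0 → Upot μ win v ≤ M)
    (hC : ∀ v : E2, v ≠ 0 → ∑' n, ∫⁻ g, ENNReal.ofReal (Real.exp (-(2 * ε * YY g v))) ∂(cp μ n) ≤ C)
    {v w : E2} (hv : v ≠ 0) (hw : w ≠ 0) :
    ∑' n, ∫⁻ g, FF v w g ∂(cp μ n) ≤
      (M * ENNReal.ofReal (1 / ε) * ∫⁻ g, ENNReal.ofReal (opNorm g ^ (2 * ε)) ∂μ) *
        (ENNReal.ofReal (dd v w ^ ε) * (C + C)) := by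
  rw [ENNReal.tsum_eq_iSup_nat]
  refine iSup_le fun N => (FF_bound hε hε1 hM N v w hv hw).trans ?_
  gcongr
  refine (ENNReal.sum_le_tsum _).trans ?_
  calc ∑' n, ∫⁻ g, JJ ε v w g ∂(cp μ n)
      ≤ ∑' n, ENNReal.ofReal (dd v w ^ ε) * (∫⁻ g, ENNReal.ofReal (Real.exp (-(2 * ε * YY g v))) ∂(cp μ n) +
          ∫⁻ g, ENNReal.ofReal (Real.exp (-(2 * ε * YY g w))) ∂(cp μ n)) := by
        refine ENNReal.tsum_le_tsum fun n => ?_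
        rw [← lintegral_add_left (measurable_expYY _ _), ← lintegral_const_mul]
        · refine lintegral_mono fun g => ?_
          rw [JJ, ← ENNReal.ofReal_add (Real.exp_pos _).le (Real.exp_pos _).le,
            ← ENNReal.ofReal_mul (Real.rpow_nonneg (dd_nonneg _ _) _)]
          exact ENNReal.ofReal_le_ofReal (dd_LA g hv hw hε)
        · exact (measurable_expYY _ _).add (measurable_expYY _ _)
    _ ≤ _ := by
        rw [ENNReal.tsum_mul_left, ENNReal.tsum_add]
        gcongr
        · exact hC v hv
        · exact hC w hw

/-- Abstract properties of the renewal function. -/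
structure HProp (μ : Measure SL2) (H : E2 → ℝ) : Prop where
  meas : Measurable H
  bdd : ∃ M : ℝ, 0 ≤ M ∧ ∀ v : E2, v ≠ 0 → |H v| ≤ M
  hol : ∃ K ε : ℝ, 0 ≤ K ∧ 0 < ε ∧ ∀ v w : E2, v ≠ 0 → w ≠ 0 →
    |H v - H w| ≤ K * (dd v w ^ ε + |Real.log ‖v‖ - Real.log ‖w‖|)
  harm : ∃ r > (0 : ℝ), ∀ v : E2, v ≠ 0 → ‖v‖ < r → H v = ∫ g, H (LA g v) ∂μ

lemma HProp.neg {μ : Measure SL2} {H : E2 → ℝ} (h : HProp μ H) : HProp μ (fun v => - H v) where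
  meas := h.meas.neg
  bdd := by obtain ⟨M, h0, hM⟩ := h.bdd; exact ⟨M, h0, fun v hv => by rw [abs_neg]; exact hM v hv⟩
  hol := by
    obtain ⟨K, ε, h0, h1, hK⟩ := h.hol
    refine ⟨K, ε, h0, h1, fun v w hv hw => ?_⟩
    rw [show -H v - -H w = -(H v - H w) by ring, abs_neg]; exact hK v w hv hw
  harm := by
    obtain ⟨r, hr, h⟩ := h.harm
    refine ⟨r, hr, fun v hv hvr => ?_⟩
    rw [integral_neg, h v hv hvr]

/-- the test function on vectors -/
def phif (f : ℝ → ℝ) (v : E2) : ENNReal := ENNReal.ofReal (f (Real.log ‖v‖))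

/-- the renewal function -/
def HH (μ : Measure SL2) (f : ℝ → ℝ) (v : E2) : ℝ := (Upot μ (phif f) v).toReal

lemma win_cases (v : E2) : win v = 0 ∨ win v = 1 := by
  unfold win
  by_cases h : v ∈ {v : E2 | v ≠ 0 ∧ |Real.log ‖v‖| ≤ 3}
  · right; exact Set.indicator_of_mem h _
  · left; exact Set.indicator_of_notMem h _

lemma win_one {v : E2} (hv : v ≠ 0) (h : |Real.log ‖v‖| ≤ 3) : win v = 1 := by
  unfold win; exact Set.indicator_of_mem (show v ∈ {v : E2 | v ≠ 0 ∧ |Real.log ‖v‖| ≤ 3} from ⟨hv, h⟩) _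

lemma phif_le_win {f : ℝ → ℝ} (hf1 : ∀ x, f x ≤ 1) (hfs : ∀ x, 2 < |x| → f x = 0) {v : E2} (hv : v ≠ 0) :
    phif f v ≤ win v := by
  unfold phif
  by_cases h : 2 < |Real.log ‖v‖|
  · rw [hfs _ h]; simp
  · rw [win_one hv (by linarith), ← ENNReal.ofReal_one]
    exact ENNReal.ofReal_le_ofReal (hf1 _)

lemma log_LA (g : SL2) {v : E2} (hv : v ≠ 0) : Real.log ‖LA g v‖ = YY g v + Real.log ‖v‖ := by
  rw [YY, Real.log_div (norm_ne_zero_iff.2 (LA_ne_zero g hv)) (norm_ne_zero_iff.2 hv)]; ring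

lemma phif_diff {f : ℝ → ℝ} {Lc : ℝ} (hL : 0 ≤ Lc) (hf0 : ∀ x, 0 ≤ f x)
    (hfL : ∀ x y, |f x - f y| ≤ Lc * |x - y|) (hfs : ∀ x, 2 < |x| → f x = 0) {v w : E2} (hv : v ≠ 0)
    (hw : w ≠ 0) (g : SL2) :
    phif f (LA g v) ≤ phif f (LA g w) + (ENNReal.ofReal Lc * (FF v w g + FF w v g) +
      ENNReal.ofReal (Lc * |Real.log ‖v‖ - Real.log ‖w‖|) * (win (LA g v) + win (LA g w))) := by
  have e : ENNReal.ofReal Lc * (FF v w g + FF w v g) +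
      ENNReal.ofReal (Lc * |Real.log ‖v‖ - Real.log ‖w‖|) * (win (LA g v) + win (LA g w)) =
      ENNReal.ofReal (Lc * |YY g v - YY g w| + Lc * |Real.log ‖v‖ - Real.log ‖w‖|) *
        (win (LA g v) + win (LA g w)) := by
    rw [ENNReal.ofReal_add (by positivity) (by positivity), add_mul]
    unfold FF
    rw [abs_sub_comm (YY g w) (YY g v)]
    simp only [ENNReal.ofReal_mul hL]
    ring
  rw [e]
  by_cases h : 2 < |Real.log ‖LA g v‖|
  · unfold phif; rw [hfs _ h]; simp
  · rw [win_one (LA_ne_zero g hv) (by linarith)]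
    have h1 : (1 : ENNReal) ≤ 1 + win (LA g w) := le_self_add
    have h2 : phif f (LA g v) ≤ phif f (LA g w) +
        ENNReal.ofReal (Lc * |YY g v - YY g w| + Lc * |Real.log ‖v‖ - Real.log ‖w‖|) * 1 := by
      unfold phif
      rw [mul_one, ← ENNReal.ofReal_add (hf0 _) (by positivity)]
      apply ENNReal.ofReal_le_ofReal
      have h3 := hfL (Real.log ‖LA g v‖) (Real.log ‖LA g w‖)
      have h4 := (abs_le.1 h3).2
      rw [log_LA g hv, log_LA g hw] at h3 h4 ⊢
      have h5 : |YY g v + Real.log ‖v‖ - (YY g w + Real.log ‖w‖)| ≤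
        |YY g v - YY g w| + |Real.log ‖v‖ - Real.log ‖w‖| := by
        refine le_trans (le_of_eq ?_) (abs_add_le _ _)
        congr 1; ring
      have h6 := mul_le_mul_of_nonneg_left h5 hL
      linarith
    exact h2.trans (by gcongr)

lemma measurable_phif {f : ℝ → ℝ} (hf : Measurable f) : Measurable (phif f) :=
  (hf.comp (Real.measurable_log.comp measurable_norm)).ennreal_ofReal

lemma cont_of_lip {f : ℝ → ℝ} {Lc : ℝ} (hL : 0 ≤ Lc) (hfL : ∀ x y, |f x - f y| ≤ Lc * |x - y|) :
    Continuous f := by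
  have : LipschitzWith (Real.toNNReal Lc) f := LipschitzWith.of_dist_le_mul fun x y => by
    rw [Real.dist_eq, Real.dist_eq, Real.coe_toNNReal _ hL]; exact hfL x y
  exact this.continuous

lemma Upot_phif_le {μ : Measure SL2} [IsProbabilityMeasure μ] {M : ENNReal}
    (hM : ∀ v : E2, v ≠ 0 → Upot μ win v ≤ M) {f : ℝ → ℝ} (hf1 : ∀ x, f x ≤ 1)
    (hfs : ∀ x, 2 < |x| → f x = 0) {v : E2} (hv : v ≠ 0) : Upot μ (phif f) v ≤ M :=
  (ENNReal.tsum_le_tsum fun _ => lintegral_mono fun g => phif_le_win hf1 hfs (LA_ne_zero g hv)).trans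
    (hM v hv)

lemma HProp_HH {μ : Measure SL2} [IsProbabilityMeasure μ] {ε : ℝ} (hε : 0 < ε) (hε1 : ε ≤ 1)
    {M C : ENNReal} (hMt : M ≠ ⊤) (hCt : C ≠ ⊤) (hM : ∀ v : E2, v ≠ 0 → Upot μ win v ≤ M)
    (hC : ∀ v : E2, v ≠ 0 → ∑' n, ∫⁻ g, ENNReal.ofReal (Real.exp (-(2 * ε * YY g v))) ∂(cp μ n) ≤ C)
    (hm : ∫⁻ g, ENNReal.ofReal (opNorm g ^ (2 * ε)) ∂μ < ⊤)
    {f : ℝ → ℝ} {Lc : ℝ} (hL : 0 ≤ Lc) (hf0 : ∀ x, 0 ≤ f x) (hf1 : ∀ x, f x ≤ 1)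
    (hfL : ∀ x y, |f x - f y| ≤ Lc * |x - y|) (hfs : ∀ x, 2 < |x| → f x = 0) :
    HProp μ (HH μ f) := by
  have hfm : Measurable (phif f) := measurable_phif (cont_of_lip hL hfL).measurable
  have hUm := measurable_Upot μ hfm
  have hU : ∀ v : E2, v ≠ 0 → Upot μ (phif f) v ≤ M := fun v hv => Upot_phif_le hM hf1 hfs hv
  have hUt : ∀ v : E2, v ≠ 0 → Upot μ (phif f) v ≠ ⊤ := fun v hv => ne_top_of_le_ne_top hMt (hU v hv)
  have hUH : ∀ v : E2, v ≠ 0 → Upot μ (phif f) v = ENNReal.ofReal (HH μ f v) := fun v hv =>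
    (ENNReal.ofReal_toReal (hUt v hv)).symm
  set B := (M * ENNReal.ofReal (1 / ε) * ∫⁻ g, ENNReal.ofReal (opNorm g ^ (2 * ε)) ∂μ) * (C + C) with hB
  have hBt : B ≠ ⊤ := ENNReal.mul_ne_top (ENNReal.mul_ne_top (ENNReal.mul_ne_top hMt ENNReal.ofReal_ne_top) hm.ne)
    (ENNReal.add_ne_top.2 ⟨hCt, hCt⟩)
  have hFFt : ∀ v w : E2, v ≠ 0 → w ≠ 0 → ∑' n, ∫⁻ g, FF v w g ∂(cp μ n) ≤
      B * ENNReal.ofReal (dd v w ^ ε) := by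
    intro v w hv hw
    refine (FF_total hε hε1 hM hC hv hw).trans (le_of_eq ?_)
    rw [hB]; ring
  have one : ∀ v w : E2, v ≠ 0 → w ≠ 0 → HH μ f v ≤ HH μ f w +
      (Lc * (2 * (B.toReal * dd v w ^ ε)) + Lc * |Real.log ‖v‖ - Real.log ‖w‖| * (2 * M.toReal)) := by
    intro v w hv hw
    have hd : 0 ≤ dd v w ^ ε := Real.rpow_nonneg (dd_nonneg _ _) _
    have mFv : Measurable fun g => FF v w g := meas_FF measurable_const measurable_const measurable_id
    have mFw : Measurable fun g => FF w v g := meas_FF measurable_const measurable_const measurable_id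
    have mwv : Measurable fun g => win (LA g v) := meas_orbit measurable_win v
    have mww : Measurable fun g => win (LA g w) := meas_orbit measurable_win w
    have h1 : Upot μ (phif f) v ≤ Upot μ (phif f) w + (ENNReal.ofReal Lc *
        (∑' n, ∫⁻ g, FF v w g ∂(cp μ n) + ∑' n, ∫⁻ g, FF w v g ∂(cp μ n)) +
        ENNReal.ofReal (Lc * |Real.log ‖v‖ - Real.log ‖w‖|) * (Upot μ win v + Upot μ win w)) := by
      unfold Upot
      rw [← ENNReal.tsum_add, ← ENNReal.tsum_add, ← ENNReal.tsum_mul_left, ← ENNReal.tsum_mul_left,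
        ← ENNReal.tsum_add, ← ENNReal.tsum_add]
      refine ENNReal.tsum_le_tsum fun n => ?_
      have mF : Measurable fun g => FF v w g + FF w v g := mFv.add mFw
      have mw2 : Measurable fun g => win (LA g v) + win (LA g w) := mwv.add mww
      have mF' : Measurable fun g => ENNReal.ofReal Lc * (FF v w g + FF w v g) := mF.const_mul _
      rw [← lintegral_add_left mFv, ← lintegral_add_left mwv, ← lintegral_const_mul _ mF,
        ← lintegral_const_mul _ mw2, ← lintegral_add_left mF',
        ← lintegral_add_left (meas_orbit hfm w)]
      exact lintegral_mono fun g => phif_diff hL hf0 hfL hfs hv hw g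
    have h2 : Upot μ (phif f) v ≤ Upot μ (phif f) w + (ENNReal.ofReal Lc *
        (B * ENNReal.ofReal (dd v w ^ ε) + B * ENNReal.ofReal (dd v w ^ ε)) +
        ENNReal.ofReal (Lc * |Real.log ‖v‖ - Real.log ‖w‖|) * (M + M)) := by
      refine h1.trans ?_
      gcongr
      · exact hFFt v w hv hw
      · have := hFFt w v hw hv
        rwa [dd_comm] at this
      · exact hM v hv
      · exact hM w hw
    rw [hUH v hv, hUH w hw, ← ENNReal.ofReal_toReal hBt, ← ENNReal.ofReal_toReal hMt] at h2
    have hB0 : 0 ≤ B.toReal := ENNReal.toReal_nonneg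
    have hM0 : 0 ≤ M.toReal := ENNReal.toReal_nonneg
    have hH0 : 0 ≤ HH μ f w := ENNReal.toReal_nonneg
    rw [← ENNReal.ofReal_mul hB0, ← ENNReal.ofReal_add (by positivity) (by positivity),
      ← ENNReal.ofReal_mul hL, ← ENNReal.ofReal_add hM0 hM0, ← ENNReal.ofReal_mul (by positivity),
      ← ENNReal.ofReal_add (by positivity) (by positivity),
      ← ENNReal.ofReal_add hH0 (by positivity), ENNReal.ofReal_le_ofReal_iff (by positivity)] at h2
    refine h2.trans (le_of_eq ?_)
    ring
  refine ⟨hUm.ennreal_toReal, ⟨M.toReal, ENNReal.toReal_nonneg, fun v hv => ?_⟩,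
    ⟨Lc * (2 * B.toReal) + Lc * (2 * M.toReal), ε, ?_, hε, fun v w hv hw => ?_⟩, ?_⟩
  · rw [abs_of_nonneg (show 0 ≤ HH μ f v from ENNReal.toReal_nonneg)]
    exact ENNReal.toReal_mono hMt (hU v hv)
  · have hB0 : 0 ≤ B.toReal := ENNReal.toReal_nonneg
    have hM0 : 0 ≤ M.toReal := ENNReal.toReal_nonneg
    positivity
  · have hB0 : 0 ≤ B.toReal := ENNReal.toReal_nonneg
    have hM0 : 0 ≤ M.toReal := ENNReal.toReal_nonneg
    have hd : 0 ≤ dd v w ^ ε := Real.rpow_nonneg (dd_nonneg _ _) _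
    have h1 := one v w hv hw
    have h2 := one w v hw hv
    rw [dd_comm, abs_sub_comm (Real.log ‖w‖)] at h2
    have ha := abs_nonneg (Real.log ‖v‖ - Real.log ‖w‖)
    have p1 : 0 ≤ Lc * (2 * B.toReal) * |Real.log ‖v‖ - Real.log ‖w‖| := by positivity
    have p2 : 0 ≤ Lc * (2 * M.toReal) * dd v w ^ ε := by positivity
    rw [abs_le]
    constructor <;> nlinarith
  · refine ⟨Real.exp (-2), Real.exp_pos _, fun v hv hvr => ?_⟩
    have h0 : phif f v = 0 := by
      unfold phif
      rw [hfs, ENNReal.ofReal_zero]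
      have := Real.log_lt_log (norm_pos_iff.2 hv) hvr
      rw [Real.log_exp] at this
      rw [abs_of_neg (by linarith)]; linarith
    unfold HH
    rw [Upot_eq μ hfm v, h0, zero_add, integral_toReal]
    · exact (hUm.comp (continuous_LA_apply v).measurable).aemeasurable
    · exact Eventually.of_forall fun g => (hUt _ (LA_ne_zero g hv)).lt_top

open scoped Topology in
lemma HProp.even {μ : Measure SL2} {H : E2 → ℝ} (h : HProp μ H) {v : E2} (hv : v ≠ 0) : H (-v) = H v := by
  obtain ⟨K, ε, hK, hε, hh⟩ := h.hol
  have h1 := hh (-v) v (neg_ne_zero.2 hv) hv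
  have h2 : dd (-v) v = 0 := by
    unfold dd wdg; simp; left; ring
  rw [h2, norm_neg, sub_self, abs_zero, Real.zero_rpow hε.ne', add_zero, mul_zero] at h1
  have := abs_nonneg (H (-v) - H v)
  have h3 : H (-v) - H v = 0 := abs_eq_zero.1 (le_antisymm h1 this)
  linarith

lemma HProp.smul_abs {μ : Measure SL2} {H : E2 → ℝ} (h : HProp μ H) {v : E2} (hv : v ≠ 0) {s : ℝ}
    (hs : s ≠ 0) : H (s • v) = H (|s| • v) := by
  rcases abs_cases s with ⟨h1, _⟩ | ⟨h1, _⟩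
  · rw [h1]
  · rw [h1, neg_smul, h.even (smul_ne_zero hs hv)]

lemma HProp.integrable {μ : Measure SL2} [IsProbabilityMeasure μ] {H : E2 → ℝ} (h : HProp μ H) {v : E2}
    (hv : v ≠ 0) : Integrable (fun g => H (LA g v)) μ := by
  obtain ⟨M, hM0, hM⟩ := h.bdd
  refine Integrable.of_bound (C := M) ?_ ?_
  · exact (h.meas.comp (continuous_LA_apply v).measurable).aestronglyMeasurable
  · exact Eventually.of_forall fun g => hM _ (LA_ne_zero g hv)

lemma HProp.shift {μ : Measure SL2} [IsProbabilityMeasure μ] {H : E2 → ℝ} (h : HProp μ H) {c : ℝ}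
    (hc : 0 < c) : HProp μ (fun v => H (c • v) - H v) where
  meas := (h.meas.comp (measurable_const_smul c)).sub h.meas
  bdd := by
    obtain ⟨M, hM0, hM⟩ := h.bdd
    refine ⟨M + M, by positivity, fun v hv => ?_⟩
    exact (abs_sub _ _).trans (add_le_add (hM _ (smul_ne_zero hc.ne' hv)) (hM v hv))
  hol := by
    obtain ⟨K, ε, hK, hε, hh⟩ := h.hol
    refine ⟨K + K, ε, by positivity, hε, fun v w hv hw => ?_⟩
    have h1 := hh (c • v) (c • w) (smul_ne_zero hc.ne' hv) (smul_ne_zero hc.ne' hw)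
    have h2 := hh v w hv hw
    rw [dd_smul _ _ hc.ne' hc.ne', norm_smul, norm_smul, Real.log_mul (by simpa using hc.ne') (by simpa using hv),
      Real.log_mul (by simpa using hc.ne') (by simpa using hw), add_sub_add_left_eq_sub] at h1
    have h3 : H (c • v) - H v - (H (c • w) - H w) = (H (c • v) - H (c • w)) - (H v - H w) := by ring
    rw [h3]
    refine (abs_sub _ _).trans ?_
    linarith
  harm := by
    obtain ⟨r, hr, hh⟩ := h.harm
    refine ⟨min r (r / c), lt_min hr (by positivity), fun v hv hvr => ?_⟩
    have h1 := hh v hv (hvr.trans_le (min_le_left _ _))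
    have h2 := hh (c • v) (smul_ne_zero hc.ne' hv) (by
      rw [norm_smul, Real.norm_of_nonneg hc.le]
      have := hvr.trans_le (min_le_right _ _)
      rwa [lt_div_iff₀ hc, mul_comm] at this)
    have h3 := h.integrable hv
    have h4 := h.integrable (smul_ne_zero hc.ne' hv)
    rw [h1, h2]
    simp only [map_smul] at h4 ⊢
    exact (integral_sub h4 h3).symm

/-- continuity modulus is small near `w` uniformly in scaling -/
lemma HProp.cont {μ : Measure SL2} {H : E2 → ℝ} (h : HProp μ H) {w : E2} (hw : w ≠ 0) {η : ℝ} (hη : 0 < η) :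
    ∀ᶠ v in nhds w, ∀ r : ℝ, 0 < r → |H (r • v) - H (r • w)| < η := by
  obtain ⟨K, ε, hK, hε, hh⟩ := h.hol
  have h1 : ContinuousAt (fun v : E2 => K * (dd v w ^ ε + |Real.log ‖v‖ - Real.log ‖w‖|)) w := by
    have a : ContinuousAt (fun v : E2 => dd v w) w := 
      (continuousAt_dd hw hw).comp (f := fun v : E2 => (v, w)) (x := w) (by fun_prop)
    have b : ContinuousAt (fun v : E2 => Real.log ‖v‖) w :=
      continuous_norm.continuousAt.log (by simpa using hw)
    exact continuousAt_const.mul ((a.rpow_const (Or.inr hε.le)).add (b.sub continuousAt_const).abs)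
  have h2 : K * (dd w w ^ ε + |Real.log ‖w‖ - Real.log ‖w‖|) < η := by
    rw [dd_self, Real.zero_rpow hε.ne']; simpa using hη
  filter_upwards [h1.eventually (gt_mem_nhds h2), (isOpen_ne (x := (0 : E2))).mem_nhds hw] with v hv hv0 r hr
  refine lt_of_le_of_lt ?_ hv
  have h3 := hh (r • v) (r • w) (smul_ne_zero hr.ne' hv0) (smul_ne_zero hr.ne' hw)
  rwa [dd_smul _ _ hr.ne' hr.ne', norm_smul, norm_smul, Real.log_mul (by simpa using hr.ne') (by simpa using hv0),
      Real.log_mul (by simpa using hr.ne') (by simpa using hw), add_sub_add_left_eq_sub] at h3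

lemma tail_small (μ : Measure SL2) [IsProbabilityMeasure μ] {η : ℝ} (hη : 0 < η) :
    ∃ R : ℝ, μ.real {g | R ≤ opNorm g} < η := by
  have h1 : Tendsto (fun n : ℕ => μ.real {g : SL2 | (n : ℝ) ≤ opNorm g}) atTop (nhds 0) := by
    have h2 : (⋂ n : ℕ, {g : SL2 | (n : ℝ) ≤ opNorm g}) = ∅ := by
      ext g; simp only [Set.mem_iInter, Set.mem_ofPred_eq, Set.mem_empty_iff_false, iff_false, not_forall, not_le]
      exact exists_nat_gt _
    have h3 := tendsto_measure_iInter_atTop (μ := μ) (s := fun n : ℕ => {g : SL2 | (n : ℝ) ≤ opNorm g})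
      (fun n => (measurableSet_le measurable_const continuous_opNorm.measurable).nullMeasurableSet)
      (fun a b hab g hg => le_trans (Nat.cast_le (α := ℝ).2 hab) (show (b : ℝ) ≤ opNorm g from hg)) ⟨0, measure_ne_top _ _⟩
    rw [h2, measure_empty] at h3
    have := (ENNReal.tendsto_toReal ENNReal.zero_ne_top).comp h3
    rw [ENNReal.toReal_zero] at this
    exact this
  obtain ⟨n, hn⟩ := (h1.eventually (gt_mem_nhds hη)).exists
  exact ⟨n, hn⟩

/-- propagation of almost-maxima -/
lemma HProp.prop_step {μ : Measure SL2} [IsProbabilityMeasure μ] {G : E2 → ℝ} (h : HProp μ G) {m : ℝ}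
    (hm : ∀ η > 0, ∀ᶠ v in nhdsWithin (0 : E2) {0}ᶜ, G v < m + η) {r : ℕ → ℝ} (hr0 : ∀ k, 0 < r k)
    (hr : Tendsto r atTop (nhds 0)) {w : E2} (hw : w ≠ 0)
    (hP : ∀ η > 0, ∀ᶠ k in atTop, m - η < G (r k • w)) {g₀ : SL2} (hg : g₀ ∈ measSupp μ) :
    ∀ η > 0, ∀ᶠ k in atTop, m - η < G (r k • LA g₀ w) := by
  intro η hη
  obtain ⟨M, hM0, hM⟩ := h.bdd
  obtain ⟨rh, hrh, hharm⟩ := h.harm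
  have hc := (h.cont (LA_ne_zero g₀ hw) (half_pos hη))
  have hc2 := (continuous_LA_apply w).continuousAt.eventually hc
  obtain ⟨O, hO, hOo, hgO⟩ := mem_nhds_iff.1 hc2
  have hp : 0 < μ.real O := ENNReal.toReal_pos (hg O hOo hgO).ne' (measure_ne_top _ _)
  set p := μ.real O with hpdef
  obtain ⟨R, hR⟩ := tail_small μ (η := η * p / (8 * (M + |m| + 1))) (by positivity)
  set B := {g : SL2 | R ≤ opNorm g} with hB
  have hBm : MeasurableSet B := measurableSet_le measurable_const continuous_opNorm.measurable
  have hmp := hm (η * p / 8) (by positivity)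
  rw [eventually_nhdsWithin_iff, Metric.eventually_nhds_iff] at hmp
  obtain ⟨ρ, hρ, hmp⟩ := hmp
  have hwp : 0 < ‖w‖ := norm_pos_iff.2 hw
  have e1 : ∀ᶠ k in atTop, r k * ‖w‖ < rh := by
    have : Tendsto (fun k => r k * ‖w‖) atTop (nhds (0 * ‖w‖)) := hr.mul_const _
    rw [zero_mul] at this
    exact this.eventually (gt_mem_nhds hrh)
  have e2 : ∀ᶠ k in atTop, r k * ((|R| + 1) * ‖w‖) < ρ := by
    have : Tendsto (fun k => r k * ((|R| + 1) * ‖w‖)) atTop (nhds (0 * _)) := hr.mul_const _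
    rw [zero_mul] at this
    exact this.eventually (gt_mem_nhds hρ)
  filter_upwards [e1, e2, hP (η * p / 8) (by positivity)] with k hk1 hk2 hk3
  by_contra hcon
  push Not at hcon
  have hrw : r k • w ≠ 0 := smul_ne_zero (hr0 k).ne' hw
  have hhar := hharm (r k • w) hrw (by rw [norm_smul, Real.norm_of_nonneg (hr0 k).le]; exact hk1)
  have hpt : ∀ g : SL2, G (LA g (r k • w)) ≤ (m + η * p / 8) + (O.indicator (fun _ => -(η / 2)) g +
      B.indicator (fun _ => M + |m|) g) := by
    intro g
    have hMm : 0 ≤ M + |m| := by positivity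
    have hBnn : 0 ≤ B.indicator (fun _ => M + |m|) g := Set.indicator_nonneg (fun _ _ => hMm) g
    by_cases hgO' : g ∈ O
    · rw [Set.indicator_of_mem hgO']
      have h1 := hO hgO' (r k) (hr0 k)
      have h2 := (abs_lt.1 h1).2
      rw [map_smul]
      have : 0 < η * p / 8 := by positivity
      linarith
    · rw [Set.indicator_of_notMem hgO']
      by_cases hgB : g ∈ B
      · rw [Set.indicator_of_mem hgB]
        have h1 := (abs_le.1 (hM _ (LA_ne_zero g hrw))).2
        have h2 := neg_abs_le m
        have : 0 < η * p / 8 := by positivity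
        linarith
      · rw [Set.indicator_of_notMem hgB]
        have hgB' : opNorm g < R := not_le.1 hgB
        have h1 := hmp (y := LA g (r k • w)) (by
          rw [dist_zero_right]
          refine (norm_LA_le g _).trans_lt (lt_of_le_of_lt ?_ hk2)
          rw [norm_smul, Real.norm_of_nonneg (hr0 k).le]
          have : opNorm g ≤ |R| + 1 := by linarith [le_abs_self R]
          calc opNorm g * (r k * ‖w‖) ≤ (|R| + 1) * (r k * ‖w‖) := by
                have := (hr0 k).le
                gcongr
            _ = _ := by ring) (LA_ne_zero g hrw)
        linarith
  have hi1 : Integrable (O.indicator (fun _ => -(η / 2))) μ := (integrable_const _).indicator hOo.measurableSet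
  have hi2 : Integrable (B.indicator (fun _ => M + |m|)) μ := (integrable_const _).indicator hBm
  have hi3 : Integrable (fun g => O.indicator (fun _ => -(η / 2)) g + B.indicator (fun _ => M + |m|) g) μ :=
    hi1.add hi2
  have hi4 : Integrable (fun g => (m + η * p / 8) + (O.indicator (fun _ => -(η / 2)) g +
      B.indicator (fun _ => M + |m|) g)) μ := (integrable_const _).add hi3
  have h5 := integral_mono (h.integrable hrw) hi4 hpt
  rw [integral_add (integrable_const _) hi3, integral_add hi1 hi2, integral_const,
    integral_indicator_const _ hOo.measurableSet, integral_indicator_const _ hBm, ← hhar] at h5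
  simp only [probReal_univ, smul_eq_mul, one_mul] at h5
  have h6 : μ.real B * (M + |m|) ≤ η * p / 8 := by
    rw [lt_div_iff₀ (by positivity)] at hR
    have : 0 ≤ μ.real B := measureReal_nonneg
    nlinarith
  have h7 : 0 < η * p := by positivity
  rw [← hpdef] at h5
  nlinarith

/-- almost-maximising directions -/
lemma HProp.maxdir {μ : Measure SL2} [IsProbabilityMeasure μ] {G : E2 → ℝ} (h : HProp μ G) {s : ℝ}
    (hs : ¬ ∀ᶠ v in nhdsWithin (0 : E2) {0}ᶜ, G v < s) :
    ∃ m : ℝ, s ≤ m ∧ ∃ r : ℕ → ℝ, (∀ k, 0 < r k) ∧ ∃ u : E2, u ≠ 0 ∧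
      ∀ g ∈ Submonoid.closure (measSupp μ), ∀ η > 0, ∀ᶠ k in atTop, m - η < G (r k • LA g u) := by
  obtain ⟨M, hM0, hM⟩ := h.bdd
  set F := nhdsWithin (0 : E2) {0}ᶜ with hF
  have hev : ∀ᶠ v in F, v ≠ 0 := eventually_mem_nhdsWithin
  have hb1 : F.IsBoundedUnder (· ≤ ·) G :=
    ⟨M, eventually_map.2 (hev.mono fun v hv => (abs_le.1 (hM v hv)).2)⟩
  have hb2 : F.IsBoundedUnder (· ≥ ·) G :=
    ⟨-M, eventually_map.2 (hev.mono fun v hv => (abs_le.1 (hM v hv)).1)⟩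
  have hb3 : F.IsCoboundedUnder (· ≤ ·) G := hb2.isCoboundedUnder_le
  set m := limsup G F with hm
  have hup : ∀ η > 0, ∀ᶠ v in F, G v < m + η := fun η hη =>
    eventually_lt_of_limsup_lt (by rw [← hm]; linarith) hb1
  have hfr : ∀ η > 0, ∃ᶠ v in F, m - η < G v := fun η hη =>
    frequently_lt_of_lt_limsup hb3 (by rw [← hm]; linarith)
  refine ⟨m, ?_, ?_⟩
  · by_contra hcon
    push Not at hcon
    exact hs (eventually_lt_of_limsup_lt hcon hb1)
  have hpick : ∀ k : ℕ, ∃ v : E2, v ≠ 0 ∧ ‖v‖ < 1 / ((k : ℝ) + 1) ∧ m - 1 / ((k : ℝ) + 1) < G v := by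
    intro k
    have hk : (0 : ℝ) < 1 / ((k : ℝ) + 1) := Nat.one_div_pos_of_nat
    have h1 : ∀ᶠ v in F, ‖v‖ < 1 / ((k : ℝ) + 1) := by
      apply mem_nhdsWithin_of_mem_nhds
      have := Metric.ball_mem_nhds (0 : E2) hk
      filter_upwards [this] with v hv
      simpa using hv
    obtain ⟨v, h2, h3, h4⟩ := ((hfr _ hk).and_eventually (h1.and hev)).exists
    exact ⟨v, h4, h3, h2⟩
  choose v hv0 hv1 hv2 using hpick
  have hsph : ∀ k, (‖v k‖⁻¹ • v k) ∈ Metric.sphere (0 : E2) 1 := fun k => by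
    rw [mem_sphere_zero_iff_norm, norm_smul, norm_inv, norm_norm, inv_mul_cancel₀ (norm_ne_zero_iff.2 (hv0 k))]
  obtain ⟨u, hu, φ, hφ, hlim⟩ := (isCompact_sphere (0 : E2) 1).tendsto_subseq hsph
  have hu0 : u ≠ 0 := by
    rintro rfl; simp at hu
  have hnat : Tendsto (fun k : ℕ => 1 / ((φ k : ℝ) + 1)) atTop (nhds 0) :=
    tendsto_one_div_add_atTop_nhds_zero_nat.comp hφ.tendsto_atTop
  have hrl : Tendsto (fun k => ‖v (φ k)‖) atTop (nhds 0) :=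
    squeeze_zero (fun _ => norm_nonneg _) (fun k => (hv1 (φ k)).le) hnat
  have hr0 : ∀ k, 0 < ‖v (φ k)‖ := fun k => norm_pos_iff.2 (hv0 _)
  refine ⟨fun k => ‖v (φ k)‖, hr0, u, hu0, fun g hg => ?_⟩
  induction hg using Submonoid.closure_induction_left with
  | one =>
    intro η hη
    rw [LA_id]
    filter_upwards [hlim.eventually (h.cont hu0 (half_pos hη)), hnat.eventually (gt_mem_nhds (half_pos hη))] with k h1 h2
    have h3 := h1 _ (hr0 k)
    simp only [Function.comp] at h3
    rw [smul_inv_smul₀ (hr0 k).ne'] at h3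
    have h4 := hv2 (φ k)
    have h5 := (abs_lt.1 h3).2
    linarith
  | mul_left x hx y hy ih =>
    have := h.prop_step hup hr0 hrl (LA_ne_zero y hu0) ih hx
    simpa only [LA_mul] using this

lemma tele_contra {μ : Measure SL2} [IsProbabilityMeasure μ] {H : E2 → ℝ} (h : HProp μ H) {c s : ℝ}
    (hc : 0 < c) (hs : 0 < s) {r : ℕ → ℝ} (hr : ∀ k, 0 < r k) {w : E2} (hw : w ≠ 0) {c' : ℝ}
    (hc' : c' = c ∨ c' = c⁻¹)
    (hP : ∀ᶠ n in atTop, ∀ᶠ k in atTop, s < H (c • (r k • c' ^ n • w)) - H (r k • c' ^ n • w)) : False := by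
  obtain ⟨M, hM0, hM⟩ := h.bdd
  obtain ⟨n0, hn0⟩ := eventually_atTop.1 hP
  obtain ⟨N, hN⟩ := exists_nat_gt (2 * M / s)
  have h1 : ∀ᶠ k in atTop, ∀ i ∈ Finset.range N,
      s < H (c • (r k • c' ^ (n0 + i) • w)) - H (r k • c' ^ (n0 + i) • w) := by
    rw [Filter.eventually_all_finset]
    exact fun i _ => hn0 (n0 + i) (Nat.le_add_right _ _)
  obtain ⟨k, hk⟩ := h1.exists
  have h2 : (N : ℝ) * s ≤ ∑ i ∈ Finset.range N,
      (H (c • (r k • c' ^ (n0 + i) • w)) - H (r k • c' ^ (n0 + i) • w)) := by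
    have := Finset.card_nsmul_le_sum (Finset.range N) _ s (fun i hi => (hk i hi).le)
    simpa using this
  have hc'0 : 0 < c' := by rcases hc' with rfl | rfl <;> positivity
  have hb : ∀ i : ℕ, ∀ a : ℝ, 0 < a → |H (a • (r k • c' ^ (n0 + i) • w))| ≤ M := fun i a ha =>
    hM _ (smul_ne_zero ha.ne' (smul_ne_zero (hr k).ne' (smul_ne_zero (by positivity) hw)))
  have h3 : ∑ i ∈ Finset.range N,
      (H (c • (r k • c' ^ (n0 + i) • w)) - H (r k • c' ^ (n0 + i) • w)) ≤ 2 * M := by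
    rcases hc' with rfl | rfl
    · have e : ∀ i, H (c' • (r k • c' ^ (n0 + i) • w)) = H (r k • c' ^ (n0 + (i + 1)) • w) := fun i => by
        congr 1; simp only [smul_smul]; congr 1; ring
      simp only [e]
      rw [Finset.sum_range_sub (fun i => H (r k • c' ^ (n0 + i) • w))]
      have a1 := abs_le.1 (hb N 1 one_pos)
      have a2 := abs_le.1 (hb 0 1 one_pos)
      rw [one_smul] at a1 a2
      linarith
    · have e : ∀ i, H (r k • c⁻¹ ^ (n0 + i) • w) = H (c • (r k • c⁻¹ ^ (n0 + (i + 1)) • w)) := fun i => by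
        congr 1; simp only [smul_smul]; congr 1; rw [← add_assoc, pow_succ]; field_simp
      have e2 : ∀ i, H (c • (r k • c⁻¹ ^ (n0 + i) • w)) - H (r k • c⁻¹ ^ (n0 + i) • w) =
        H (c • (r k • c⁻¹ ^ (n0 + i) • w)) - H (c • (r k • c⁻¹ ^ (n0 + (i + 1)) • w)) := fun i => by rw [← e]
      rw [Finset.sum_congr rfl (fun i _ => e2 i),
        Finset.sum_range_sub' (fun i => H (c • (r k • c⁻¹ ^ (n0 + i) • w)))]
      have a1 := abs_le.1 (hb N c hc)
      have a2 := abs_le.1 (hb 0 c hc)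
      linarith
  rw [div_lt_iff₀ hs] at hN
  linarith

lemma period_upper {μ : Measure SL2} [IsProbabilityMeasure μ] {H : E2 → ℝ} (h : HProp μ H) {t : SL2}
    (ht : t ∈ Submonoid.closure (measSupp μ)) {e f : E2} (hef : wdg e f ≠ 0) {l : ℝ} (hl : 1 < |l|)
    (hte : LA t e = l • e) (htf : LA t f = l⁻¹ • f) {s : ℝ} (hs : 0 < s) :
    ∀ᶠ v in nhdsWithin (0 : E2) {0}ᶜ, H (|l| • v) - H v < s := by
  by_contra hcon
  have hl0 : l ≠ 0 := by rintro rfl; norm_num at hl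
  have hla : 0 < |l| := abs_pos.2 hl0
  have hG := h.shift hla
  obtain ⟨m, hsm, r, hr0, u, hu0, hu⟩ := hG.maxdir hcon
  have he0 : e ≠ 0 := by rintro rfl; exact hef (wdg_zero_left f)
  obtain ⟨α, β, hαβ⟩ : ∃ α β : ℝ, u = α • e + β • f := by
    refine ⟨(wdg e f)⁻¹ * wdg u f, (wdg e f)⁻¹ * wdg e u, ?_⟩
    rw [← smul_smul, ← smul_smul, ← smul_add, ← basis_expand u, inv_smul_smul₀ hef]
  have hpe : ∀ n : ℕ, LA (t ^ n) e = l ^ n • e := by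
    intro n
    induction n with
    | zero => simp [LA_id]
    | succ n ih => rw [pow_succ, LA_mul, hte, map_smul, ih, smul_smul, pow_succ, mul_comm]
  have hpf : ∀ n : ℕ, LA (t ^ n) f = l⁻¹ ^ n • f := by
    intro n
    induction n with
    | zero => simp [LA_id]
    | succ n ih => rw [pow_succ, LA_mul, htf, map_smul, ih, smul_smul, pow_succ, mul_comm]
  have hpu : ∀ n : ℕ, LA (t ^ n) u = (α * l ^ n) • e + (β * l⁻¹ ^ n) • f := by
    intro n
    rw [hαβ, map_add, map_smul, map_smul, hpe, hpf, smul_smul, smul_smul]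
  have hT : ∀ n : ℕ, t ^ n ∈ Submonoid.closure (measSupp μ) := fun n => pow_mem ht n
  by_cases hα : α = 0
  · refine tele_contra h hla (half_pos hs) hr0 hu0 (Or.inr rfl) (Eventually.of_forall fun n => ?_)
    filter_upwards [hu (t ^ n) (hT n) (s / 2) (half_pos hs)] with k hk
    have e1 : r k • LA (t ^ n) u = (l⁻¹ ^ n) • (r k • u) := by
      rw [hpu, hαβ, hα]; simp only [zero_mul, zero_smul, zero_add, smul_smul]; congr 1; ring
    rw [e1] at hk
    have e2 := hG.smul_abs (smul_ne_zero (hr0 k).ne' hu0) (s := l⁻¹ ^ n) (pow_ne_zero _ (inv_ne_zero hl0))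
    simp only [abs_pow, abs_inv] at e2
    rw [e2, smul_comm (|l|⁻¹ ^ n) (r k) u] at hk
    linarith
  · have hw : α • e ≠ 0 := smul_ne_zero hα he0
    refine tele_contra h hla (half_pos hs) hr0 hw (Or.inl rfl) ?_
    have hx : Tendsto (fun n : ℕ => α • e + (β * (l⁻¹ ^ 2) ^ n) • f) atTop (nhds (α • e)) := by
      have h1 : |l⁻¹ ^ 2| < 1 := by
        rw [abs_pow, abs_inv]
        exact pow_lt_one₀ (by positivity) (inv_lt_one_of_one_lt₀ hl) (by norm_num)
      have h2 := tendsto_pow_atTop_nhds_zero_of_abs_lt_one h1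
      have h3 := ((h2.const_mul β).smul_const f).const_add (α • e)
      simpa using h3
    filter_upwards [hx.eventually (hG.cont hw (show 0 < s / 4 by positivity))] with n hn
    filter_upwards [hu (t ^ n) (hT n) (s / 4) (by positivity)] with k hk
    have hrl : 0 < r k * |l| ^ n := by have := hr0 k; positivity
    have h1 := hn (r k * |l| ^ n) hrl
    have e1 : r k • LA (t ^ n) u = (r k * l ^ n) • (α • e + (β * (l⁻¹ ^ 2) ^ n) • f) := by
      rw [hpu, smul_add, smul_add]
      simp only [smul_smul]
      congr 2
      · ring
      · have : l ^ n * (l⁻¹ ^ 2) ^ n = l⁻¹ ^ n := by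
          rw [← mul_pow]; congr 1; field_simp
        rw [← this]; ring
    have hne : α • e + (β * (l⁻¹ ^ 2) ^ n) • f ≠ 0 := by
      intro h0
      have : r k • LA (t ^ n) u ≠ 0 := smul_ne_zero (hr0 k).ne' (LA_ne_zero _ hu0)
      rw [e1, h0, smul_zero] at this
      exact this rfl
    have e2 := hG.smul_abs hne (s := r k * l ^ n) (mul_ne_zero (hr0 k).ne' (pow_ne_zero _ hl0))
    rw [abs_mul, abs_pow, abs_of_pos (hr0 k)] at e2
    rw [e1] at hk
    rw [e2] at hk
    have h2 := (abs_lt.1 h1).2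
    rw [mul_smul (r k) (|l| ^ n) (α • e)] at h2
    linarith

/-- asymptotic multiplicative period at zero -/
def Per (H : E2 → ℝ) (c : ℝ) : Prop :=
  0 < c ∧ Tendsto (fun v => H (c • v) - H v) (nhdsWithin (0 : E2) {0}ᶜ) (nhds 0)

lemma tendsto_smul_punct {c : ℝ} (hc : 0 < c) : Tendsto (fun v : E2 => c • v) (nhdsWithin (0 : E2) {0}ᶜ)
    (nhdsWithin (0 : E2) {0}ᶜ) := by
  apply tendsto_nhdsWithin_of_tendsto_nhds_of_eventually_within
  · have : Tendsto (fun v : E2 => c • v) (nhds 0) (nhds (c • 0)) := (continuous_const_smul c).tendsto 0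
    rw [smul_zero] at this
    exact this.mono_left nhdsWithin_le_nhds
  · filter_upwards [eventually_mem_nhdsWithin] with v hv
    exact smul_ne_zero hc.ne' hv

lemma Per.mul {H : E2 → ℝ} {a b : ℝ} (ha : Per H a) (hb : Per H b) : Per H (a * b) := by
  refine ⟨mul_pos ha.1 hb.1, ?_⟩
  have h1 := (ha.2.comp (tendsto_smul_punct hb.1)).add hb.2
  rw [add_zero] at h1
  refine h1.congr fun v => ?_
  simp only [Function.comp, smul_smul]; ring

lemma Per.inv {H : E2 → ℝ} {a : ℝ} (ha : Per H a) : Per H a⁻¹ := by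
  refine ⟨inv_pos.2 ha.1, ?_⟩
  have h1 := (ha.2.comp (tendsto_smul_punct (inv_pos.2 ha.1))).neg
  rw [neg_zero] at h1
  refine h1.congr fun v => ?_
  simp only [Function.comp, smul_smul, mul_inv_cancel₀ ha.1.ne', one_smul]; ring

lemma Per.one (H : E2 → ℝ) : Per H 1 := by
  refine ⟨one_pos, ?_⟩
  simp

lemma Per.pow {H : E2 → ℝ} {a : ℝ} (ha : Per H a) (n : ℕ) : Per H (a ^ n) := by
  induction n with
  | zero => rw [pow_zero]; exact Per.one H
  | succ n ih => rw [pow_succ]; exact ih.mul ha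

lemma period_eig {μ : Measure SL2} [IsProbabilityMeasure μ] {H : E2 → ℝ} (h : HProp μ H) {t : SL2}
    (ht : t ∈ Submonoid.closure (measSupp μ)) {e f : E2} (hef : wdg e f ≠ 0) {l : ℝ} (hl : 1 < |l|)
    (hte : LA t e = l • e) (htf : LA t f = l⁻¹ • f) : Per H |l| := by
  refine ⟨by linarith, ?_⟩
  rw [tendsto_order]
  constructor
  · intro a ha
    filter_upwards [period_upper h.neg ht hef hl hte htf (s := -a) (by linarith)] with v hv
    linarith
  · intro a ha
    exact period_upper h ht hef hl hte htf ha

/-- trace of an element of SL2 -/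
def tr2 (g : SL2) : ℝ := g.1 0 0 + g.1 1 1

/-- entry sum norm -/
def sn (g : SL2) : ℝ := |g.1 0 0| + |g.1 0 1| + |g.1 1 0| + |g.1 1 1|

lemma coord_le (v : E2) : |v 0| ≤ ‖v‖ ∧ |v 1| ≤ ‖v‖ := by
  have h := normsq_eq v
  constructor
  · apply abs_le_of_sq_le_sq _ (norm_nonneg v); nlinarith [sq_nonneg (v 1)]
  · apply abs_le_of_sq_le_sq _ (norm_nonneg v); nlinarith [sq_nonneg (v 0)]

lemma norm_le_coord (v : E2) : ‖v‖ ≤ |v 0| + |v 1| := by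
  have h := normsq_eq v
  apply le_of_sq_le_sq _ (by positivity)
  rw [h]
  have := mul_nonneg (abs_nonneg (v 0)) (abs_nonneg (v 1))
  nlinarith [sq_abs (v 0), sq_abs (v 1)]

lemma opNorm_le_sn (g : SL2) : opNorm g ≤ sn g := by
  rw [opNorm_eq]
  refine ContinuousLinearMap.opNorm_le_bound _ (by unfold sn; positivity) fun v => ?_
  refine (norm_le_coord _).trans ?_
  rw [LA_zero, LA_one]
  have h := coord_le v
  have h1 := abs_add_le (g.1 0 0 * v 0) (g.1 0 1 * v 1)
  have h2 := abs_add_le (g.1 1 0 * v 0) (g.1 1 1 * v 1)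
  simp only [abs_mul] at h1 h2
  unfold sn
  have a1 := mul_le_mul_of_nonneg_left h.1 (abs_nonneg (g.1 0 0))
  have a2 := mul_le_mul_of_nonneg_left h.2 (abs_nonneg (g.1 0 1))
  have a3 := mul_le_mul_of_nonneg_left h.1 (abs_nonneg (g.1 1 0))
  have a4 := mul_le_mul_of_nonneg_left h.2 (abs_nonneg (g.1 1 1))
  linarith

lemma measSupp_compl (μ : Measure SL2) : μ (measSupp μ)ᶜ = 0 := by
  apply measure_null_of_locally_null
  intro x hx
  have hx' : ¬ ∀ U : Set SL2, IsOpen U → x ∈ U → 0 < μ U := hx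
  push Not at hx'
  obtain ⟨U, hU, hxU, h⟩ := hx'
  exact ⟨U, mem_nhdsWithin_of_mem_nhds (hU.mem_nhds hxU), le_antisymm h bot_le⟩

lemma T_unbdd {μ : Measure SL2} [IsProbabilityMeasure μ] (hmom : HasExpMoment μ) {σ : ℝ} (hσ : 0 < σ)
    (hl : ∀ n : ℕ, n * σ ≤ ∫ g, Real.log (opNorm g) ∂(cp μ n)) (B : ℝ) :
    ∃ g ∈ Submonoid.closure (measSupp μ), B < opNorm g := by
  by_contra hcon
  push Not at hcon
  set S := (Submonoid.closure (measSupp μ)).topologicalClosure with hS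
  have hSc : IsClosed (S : Set SL2) := Submonoid.isClosed_topologicalClosure _
  have hSm : MeasurableSet (S : Set SL2) := hSc.measurableSet
  have hB : ∀ g ∈ S, opNorm g ≤ B := by
    intro g hg
    have : closure (Submonoid.closure (measSupp μ) : Set SL2) ⊆ {g | opNorm g ≤ B} :=
      closure_minimal (fun g hg => hcon g hg) (isClosed_le continuous_opNorm continuous_const)
    exact this hg
  have hμS : ∀ᵐ h ∂μ, h ∈ S := by
    refine measure_mono_null (fun h hh => ?_) (measSupp_compl μ)
    intro hh'
    exact hh (Submonoid.le_topologicalClosure _ (Submonoid.subset_closure hh'))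
  have hcp : ∀ n, ∀ᵐ g ∂(cp μ n), g ∈ S := by
    intro n
    induction n with
    | zero =>
      have : cp μ 0 = Measure.dirac 1 := rfl
      rw [this]
      exact (ae_dirac_iff (p := fun g => g ∈ S) hSm).2 (one_mem S)
    | succ n ih =>
      have hF : Measurable ((S : Set SL2)ᶜ.indicator (fun _ => (1 : ENNReal))) :=
        measurable_const.indicator hSm.compl
      have h1 := lintegral_cp_succ μ n (F := (S : Set SL2)ᶜ.indicator (fun _ => (1 : ENNReal))) hF
      rw [lintegral_indicator_const hSm.compl, one_mul] at h1
      rw [ae_iff]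
      change cp μ (n + 1) (S : Set SL2)ᶜ = 0
      rw [h1]
      refine lintegral_eq_zero_of_ae_eq_zero ?_
      filter_upwards [hμS] with h hh
      refine lintegral_eq_zero_of_ae_eq_zero ?_
      filter_upwards [ih] with g hg
      exact Set.indicator_of_notMem (s := (S : Set SL2)ᶜ) (Set.notMem_compl_iff.2 (mul_mem hg hh)) _
  obtain ⟨n, hn⟩ := exists_nat_gt (Real.log B / σ)
  rw [div_lt_iff₀ hσ] at hn
  have h2 : ∫ g, Real.log (opNorm g) ∂(cp μ n) ≤ ∫ g, Real.log B ∂(cp μ n) := by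
    refine integral_mono_ae (integrable_log_cp hmom n) (integrable_const _) ?_
    filter_upwards [hcp n] with g hg
    exact Real.log_le_log (opNorm_pos g) (hB g hg)
  rw [integral_const, probReal_univ, one_smul] at h2
  linarith [hl n]

lemma exists_hyp {μ : Measure SL2} [IsProbabilityMeasure μ] (hmom : HasExpMoment μ) (hzd : ZariskiDense μ)
    {σ : ℝ} (hσ : 0 < σ) (hl : ∀ n : ℕ, n * σ ≤ ∫ g, Real.log (opNorm g) ∂(cp μ n)) :
    ∃ g ∈ Submonoid.closure (measSupp μ), 2 < |tr2 g| := by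
  by_contra hcon
  push Not at hcon
  have hpick : ∀ k : ℕ, ∃ g ∈ Submonoid.closure (measSupp μ), (k : ℝ) + 1 < sn g := fun k => by
    obtain ⟨g, hg, h⟩ := T_unbdd hmom hσ hl ((k : ℝ) + 1)
    exact ⟨g, hg, h.trans_le (opNorm_le_sn g)⟩
  choose g hg hgk using hpick
  have hs0 : ∀ k, 0 < sn (g k) := fun k => by
    have : (0 : ℝ) ≤ k := Nat.cast_nonneg k
    linarith [hgk k]
  have hsinv : Tendsto (fun k => (sn (g k))⁻¹) atTop (nhds 0) := by
    apply tendsto_inv_atTop_zero.comp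
    apply tendsto_atTop_mono (fun k => (hgk k).le)
    exact tendsto_atTop_add_const_right _ _ tendsto_natCast_atTop_atTop
  let x : ℕ → Fin 2 → Fin 2 → ℝ := fun k i j => (g k).1 i j * (sn (g k))⁻¹
  have hxb : ∀ k, x k ∈ Set.pi Set.univ (fun _ : Fin 2 => Set.pi Set.univ (fun _ : Fin 2 => Set.Icc (-1 : ℝ) 1)) := by
    intro k i _ j _
    refine abs_le.1 ?_
    simp only [x, abs_mul, abs_inv, abs_of_pos (hs0 k)]
    rw [← div_eq_mul_inv, div_le_one (hs0 k)]
    unfold sn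
    have a1 := abs_nonneg ((g k).1 0 0)
    have a2 := abs_nonneg ((g k).1 0 1)
    have a3 := abs_nonneg ((g k).1 1 0)
    have a4 := abs_nonneg ((g k).1 1 1)
    fin_cases i <;> fin_cases j <;> simp <;> linarith
  obtain ⟨A, -, φ, hφ, hlim⟩ := (isCompact_univ_pi (fun _ : Fin 2 => isCompact_univ_pi (fun _ : Fin 2 =>
    isCompact_Icc (a := (-1 : ℝ)) (b := 1)))).tendsto_subseq hxb
  have hA : ∀ i j, Tendsto (fun k => (g (φ k)).1 i j * (sn (g (φ k)))⁻¹) atTop (nhds (A i j)) := fun i j =>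
    tendsto_pi_nhds.1 (tendsto_pi_nhds.1 hlim i) j
  have hsi : Tendsto (fun k => (sn (g (φ k)))⁻¹) atTop (nhds 0) := hsinv.comp hφ.tendsto_atTop
  have hA1 : |A 0 0| + |A 0 1| + |A 1 0| + |A 1 1| = 1 := by
    refine tendsto_nhds_unique ((((hA 0 0).abs.add (hA 0 1).abs).add (hA 1 0).abs).add (hA 1 1).abs) ?_
    refine tendsto_const_nhds.congr fun k => ?_
    simp only [abs_mul, abs_inv, abs_of_pos (hs0 (φ k))]
    rw [← add_mul, ← add_mul, ← add_mul]
    exact (mul_inv_cancel₀ (hs0 (φ k)).ne').symm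
  have hdet : A 0 0 * A 1 1 - A 0 1 * A 1 0 = 0 := by
    refine tendsto_nhds_unique (((hA 0 0).mul (hA 1 1)).sub ((hA 0 1).mul (hA 1 0))) ?_
    have := hsi.mul hsi
    rw [mul_zero] at this
    refine this.congr fun k => ?_
    have := det_eq (g (φ k))
    linear_combination (-(sn (g (φ k)))⁻¹ * (sn (g (φ k)))⁻¹) * this
  have htr : ∀ t ∈ Submonoid.closure (measSupp μ), t.1 0 0 * A 0 0 + t.1 0 1 * A 1 0 + t.1 1 0 * A 0 1 +
      t.1 1 1 * A 1 1 = 0 := by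
    intro t ht
    have h1 : Tendsto (fun k => tr2 (t * g (φ k)) * (sn (g (φ k)))⁻¹) atTop (nhds (t.1 0 0 * A 0 0 +
        t.1 0 1 * A 1 0 + t.1 1 0 * A 0 1 + t.1 1 1 * A 1 1)) := by
      refine ((((hA 0 0).const_mul (t.1 0 0)).add ((hA 1 0).const_mul (t.1 0 1))).add
        ((hA 0 1).const_mul (t.1 1 0))).add ((hA 1 1).const_mul (t.1 1 1)) |>.congr fun k => ?_
      unfold tr2
      simp only [Matrix.SpecialLinearGroup.coe_mul, Matrix.mul_apply, Fin.sum_univ_two]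
      ring
    refine tendsto_nhds_unique h1 ?_
    refine squeeze_zero_norm (a := fun k => 2 * (sn (g (φ k)))⁻¹) (fun k => ?_) ?_
    · rw [Real.norm_eq_abs, abs_mul, abs_of_pos (inv_pos.2 (hs0 (φ k)))]
      exact mul_le_mul_of_nonneg_right (hcon _ (mul_mem ht (hg _))) (inv_pos.2 (hs0 (φ k))).le
    · simpa using hsi.const_mul 2
  have h1 := htr 1 (one_mem _)
  simp at h1
  have hd : A 1 1 = - A 0 0 := by linarith
  rw [hd] at hdet htr hA1
  by_cases hc : A 0 0 = 0 ∧ A 1 0 = 0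
  · have hb : A 0 1 ≠ 0 := by
      intro hb; rw [hc.1, hc.2, hb] at hA1; simp at hA1
    refine noLine hzd (e := !₂[A 0 1, - A 0 0]) ?_ fun s hs => ?_
    · intro h0
      have := congrArg (fun v : E2 => v 0) h0
      simp at this; exact hb this
    · have := htr s (Submonoid.subset_closure hs)
      unfold wdg
      rw [LA_zero, LA_one]
      simp
      linear_combination (A 0 1) * this + s.1 0 1 * hdet
  · refine noLine hzd (e := !₂[A 0 0, A 1 0]) ?_ fun s hs => ?_
    · intro h0
      have h2 := congrArg (fun v : E2 => v 0) h0
      have h3 := congrArg (fun v : E2 => v 1) h0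
      simp at h2 h3; exact hc ⟨h2, h3⟩
    · have := htr s (Submonoid.subset_closure hs)
      unfold wdg
      rw [LA_zero, LA_one]
      simp
      linear_combination (-A 1 0) * this - s.1 1 0 * hdet

lemma cayley (t : SL2) (x : E2) : LA t (LA t x) = tr2 t • LA t x - x := by
  have hd := det_eq t
  apply E2_ext
  · simp only [LA_zero, LA_one, PiLp.sub_apply, PiLp.smul_apply, smul_eq_mul, tr2]
    linear_combination (-x 0) * hd
  · simp only [LA_zero, LA_one, PiLp.sub_apply, PiLp.smul_apply, smul_eq_mul, tr2]
    linear_combination (-x 1) * hd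

lemma exists_root {s : ℝ} (hs : 2 < s) : ∃ l : ℝ, 1 < l ∧ l + l⁻¹ = s := by
  have h0 : 0 < s ^ 2 - 4 := by nlinarith
  have hq := Real.sq_sqrt h0.le
  have hp := Real.sqrt_pos.2 h0
  set q := Real.sqrt (s ^ 2 - 4)
  have h1 : 1 < (s + q) / 2 := by linarith
  refine ⟨(s + q) / 2, h1, ?_⟩
  have h2 : ((s + q) / 2)⁻¹ = (s - q) / 2 := by
    rw [inv_eq_iff_eq_inv, eq_comm, inv_eq_iff_eq_inv]
    apply eq_inv_of_mul_eq_one_left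
    nlinarith
  rw [h2]; ring

lemma exists_nonscalar {t : SL2} {l : ℝ} (hl : l ^ 2 ≠ 1) : ∃ x : E2, LA t x - l • x ≠ 0 := by
  by_contra hcon
  push Not at hcon
  have h : ∀ x : E2, LA t x = l • x := fun x => sub_eq_zero.1 (hcon x)
  have h1 := wdg_LA t (!₂[1, 0] : E2) (!₂[0, 1] : E2)
  rw [h, h, wdg_smul_left, wdg_smul_right] at h1
  simp [wdg] at h1
  apply hl
  nlinarith

lemma exists_eig {t : SL2} {l : ℝ} (hl : 1 < |l|) (ht : l + l⁻¹ = tr2 t) :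
    ∃ e f : E2, wdg e f ≠ 0 ∧ LA t e = l • e ∧ LA t f = l⁻¹ • f := by
  have hl0 : l ≠ 0 := by rintro rfl; norm_num at hl
  have hl2 : l ^ 2 ≠ 1 := by
    rw [← sq_abs]; nlinarith
  have hl3 : l⁻¹ ^ 2 ≠ 1 := by
    rw [inv_pow]; simpa using hl2
  obtain ⟨x, hx⟩ := exists_nonscalar (t := t) hl3
  obtain ⟨y, hy⟩ := exists_nonscalar (t := t) hl2
  have he : LA t (LA t x - l⁻¹ • x) = l • (LA t x - l⁻¹ • x) := by
    rw [map_sub, map_smul, cayley, ← ht, smul_sub, smul_smul, mul_inv_cancel₀ hl0, add_smul, one_smul]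
    abel
  have hf : LA t (LA t y - l • y) = l⁻¹ • (LA t y - l • y) := by
    rw [map_sub, map_smul, cayley, ← ht, smul_sub, smul_smul, inv_mul_cancel₀ hl0, add_smul, one_smul]
    abel
  refine ⟨_, _, ?_, he, hf⟩
  intro hw
  obtain ⟨c, hc⟩ := par_of_wdg hx hw
  rw [hc, map_smul, he, smul_smul, smul_smul] at hf
  have h1 := smul_left_injective ℝ hx hf
  have hc0 : c ≠ 0 := by rintro rfl; rw [zero_smul] at hc; exact hy hc
  apply hl2
  field_simp at h1
  linarith

lemma per_trace {μ : Measure SL2} [IsProbabilityMeasure μ] {H : E2 → ℝ} (h : HProp μ H) {t : SL2}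
    (ht : t ∈ Submonoid.closure (measSupp μ)) {L : ℝ} (hL : 1 < L) (htr : L + L⁻¹ = |tr2 t|) : Per H L := by
  rcases abs_cases (tr2 t) with ⟨h1, _⟩ | ⟨h1, _⟩
  · have hl : 1 < |L| := by rwa [abs_of_pos (by linarith)]
    obtain ⟨e, f, h2, h3, h4⟩ := exists_eig (t := t) (l := L) hl (by rw [htr, h1])
    have := period_eig h ht h2 hl h3 h4
    rwa [abs_of_pos (by linarith)] at this
  · have hl : 1 < |-L| := by rwa [abs_neg, abs_of_pos (by linarith)]
    obtain ⟨e, f, h2, h3, h4⟩ := exists_eig (t := t) (l := -L) hl (by rw [inv_neg]; linarith)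
    have := period_eig h ht h2 hl h3 h4
    rwa [abs_neg, abs_of_pos (by linarith)] at this

/-- matrix coefficients in a basis -/
def k11 (e f : E2) (h : SL2) : ℝ := wdg (LA h e) f / wdg e f
def k21 (e f : E2) (h : SL2) : ℝ := wdg e (LA h e) / wdg e f
def k12 (e f : E2) (h : SL2) : ℝ := wdg (LA h f) f / wdg e f
def k22 (e f : E2) (h : SL2) : ℝ := wdg e (LA h f) / wdg e f

section coeff
variable {e f : E2}

lemma vec_expand (hef : wdg e f ≠ 0) (v : E2) : v = (wdg v f / wdg e f) • e + (wdg e v / wdg e f) • f := by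
  have h := basis_expand (e := e) (f := f) v
  have h2 : (wdg e f)⁻¹ • (wdg e f • v) = v := inv_smul_smul₀ hef v
  rw [h, smul_add, smul_smul, smul_smul] at h2
  rw [div_eq_inv_mul, div_eq_inv_mul]
  exact h2.symm

lemma k_e (hef : wdg e f ≠ 0) (h : SL2) : LA h e = k11 e f h • e + k21 e f h • f := vec_expand hef _
lemma k_f (hef : wdg e f ≠ 0) (h : SL2) : LA h f = k12 e f h • e + k22 e f h • f := vec_expand hef _

lemma wdg_add_left (v w u : E2) : wdg (v + w) u = wdg v u + wdg w u := by simp [wdg]; ring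

lemma k_det (hef : wdg e f ≠ 0) (h : SL2) :
    k11 e f h * k22 e f h - k12 e f h * k21 e f h = 1 := by
  have h1 := wdg_LA h e f
  rw [k_e hef h, k_f hef h] at h1
  simp only [wdg_add_left, wdg_add_right, wdg_smul_left, wdg_smul_right, wdg_self] at h1
  rw [wdg_comm f e] at h1
  apply mul_right_cancel₀ hef
  linear_combination h1

lemma k_tr (hef : wdg e f ≠ 0) (h : SL2) : tr2 h = k11 e f h + k22 e f h := by
  unfold k11 k22 tr2
  rw [← add_div, eq_div_iff hef]
  unfold wdg
  simp only [LA_zero, LA_one]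
  ring

lemma k11_mul (hef : wdg e f ≠ 0) (g h : SL2) :
    k11 e f (g * h) = k11 e f g * k11 e f h + k12 e f g * k21 e f h := by
  have h1 : wdg (LA (g * h) e) f = k11 e f h * wdg (LA g e) f + k21 e f h * wdg (LA g f) f := by
    rw [LA_mul, k_e hef h, map_add, map_smul, map_smul, wdg_add_left, wdg_smul_left, wdg_smul_left]
  rw [show k11 e f (g * h) = wdg (LA (g * h) e) f / wdg e f from rfl, h1]
  simp only [k11, k21, k12, k22]
  ring
lemma k21_mul (hef : wdg e f ≠ 0) (g h : SL2) :
    k21 e f (g * h) = k21 e f g * k11 e f h + k22 e f g * k21 e f h := by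
  have h1 : wdg e (LA (g * h) e) = k11 e f h * wdg e (LA g e) + k21 e f h * wdg e (LA g f) := by
    rw [LA_mul, k_e hef h, map_add, map_smul, map_smul, wdg_add_right, wdg_smul_right, wdg_smul_right]
  rw [show k21 e f (g * h) = wdg e (LA (g * h) e) / wdg e f from rfl, h1]
  simp only [k11, k21, k12, k22]
  ring
lemma k12_mul (hef : wdg e f ≠ 0) (g h : SL2) :
    k12 e f (g * h) = k11 e f g * k12 e f h + k12 e f g * k22 e f h := by
  have h1 : wdg (LA (g * h) f) f = k12 e f h * wdg (LA g e) f + k22 e f h * wdg (LA g f) f := by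
    rw [LA_mul, k_f hef h, map_add, map_smul, map_smul, wdg_add_left, wdg_smul_left, wdg_smul_left]
  rw [show k12 e f (g * h) = wdg (LA (g * h) f) f / wdg e f from rfl, h1]
  simp only [k11, k21, k12, k22]
  ring
lemma k22_mul (hef : wdg e f ≠ 0) (g h : SL2) :
    k22 e f (g * h) = k21 e f g * k12 e f h + k22 e f g * k22 e f h := by
  have h1 : wdg e (LA (g * h) f) = k12 e f h * wdg e (LA g e) + k22 e f h * wdg e (LA g f) := by
    rw [LA_mul, k_f hef h, map_add, map_smul, map_smul, wdg_add_right, wdg_smul_right, wdg_smul_right]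
  rw [show k22 e f (g * h) = wdg e (LA (g * h) f) / wdg e f from rfl, h1]
  simp only [k11, k21, k12, k22]
  ring

lemma k_pow (hef : wdg e f ≠ 0) {g : SL2} {l : ℝ} (hge : LA g e = l • e) (hgf : LA g f = l⁻¹ • f) (n : ℕ) :
    k11 e f (g ^ n) = l ^ n ∧ k21 e f (g ^ n) = 0 ∧ k12 e f (g ^ n) = 0 ∧ k22 e f (g ^ n) = l⁻¹ ^ n := by
  have hpe : LA (g ^ n) e = l ^ n • e := by
    induction n with
    | zero => simp [LA_id]
    | succ n ih => rw [pow_succ, LA_mul, hge, map_smul, ih, smul_smul, pow_succ, mul_comm]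
  have hpf : LA (g ^ n) f = l⁻¹ ^ n • f := by
    clear hpe
    induction n with
    | zero => simp [LA_id]
    | succ n ih => rw [pow_succ, LA_mul, hgf, map_smul, ih, smul_smul, pow_succ, mul_comm]
  unfold k11 k21 k12 k22
  rw [hpe, hpf]
  simp only [wdg_smul_left, wdg_smul_right, wdg_self, mul_zero, zero_div, mul_div_assoc, div_self hef, mul_one,
    and_self]

lemma pair_contra {μ : Measure SL2} (hzd : ZariskiDense μ) (hef : wdg e f ≠ 0)
    (h : ∀ s ∈ measSupp μ, (k12 e f s = 0 ∧ k21 e f s = 0) ∨ (k11 e f s = 0 ∧ k22 e f s = 0)) : False := by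
  refine noPair hzd hef fun s hs => ?_
  have hd := k_det hef s
  have h1 := k_e hef s
  have h2 := k_f hef s
  rcases h s hs with ⟨a, b⟩ | ⟨a, b⟩
  · rw [a, b] at hd
    rw [b, zero_smul, add_zero] at h1
    rw [a, zero_smul, zero_add] at h2
    left
    refine ⟨⟨k11 e f s, ?_, h1⟩, ⟨k22 e f s, ?_, h2⟩⟩
    · intro h0; rw [h0] at hd; norm_num at hd
    · intro h0; rw [h0] at hd; norm_num at hd
  · rw [a, b] at hd
    rw [a, zero_smul, zero_add] at h1
    rw [b, zero_smul, add_zero] at h2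
    right
    refine ⟨⟨k21 e f s, ?_, h1⟩, ⟨k12 e f s, ?_, h2⟩⟩
    · intro h0; rw [h0] at hd; norm_num at hd
    · intro h0; rw [h0] at hd; norm_num at hd

lemma exists_h1 {μ : Measure SL2} (hzd : ZariskiDense μ) (hef : wdg e f ≠ 0) :
    ∃ h ∈ Submonoid.closure (measSupp μ), k11 e f h ≠ 0 ∧ k21 e f h ≠ 0 := by
  by_contra hcon
  push Not at hcon
  have he : e ≠ 0 := by rintro rfl; exact hef (wdg_zero_left f)
  obtain ⟨a, ha, ha21⟩ : ∃ a ∈ Submonoid.closure (measSupp μ), k21 e f a ≠ 0 := by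
    by_contra h2
    push Not at h2
    refine noLine hzd he fun s hs => ?_
    have := h2 s (Submonoid.subset_closure hs)
    unfold k21 at this
    exact (div_eq_zero_iff.1 this).resolve_right hef
  have ha11 : k11 e f a = 0 := by
    by_contra h0; exact ha21 (hcon a ha h0)
  refine pair_contra hzd hef fun t ht => ?_
  have htT := Submonoid.subset_closure ht
  have hd := k_det hef t
  by_cases h21 : k21 e f t = 0
  · left
    refine ⟨?_, h21⟩
    have h22 : k22 e f t ≠ 0 := by intro h0; rw [h0, h21] at hd; norm_num at hd
    have := mt (hcon (t * a) (mul_mem htT ha))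
    rw [k21_mul hef, k11_mul hef, h21, ha11] at this
    simp [h22, ha21] at this
    exact this
  · right
    have h11 : k11 e f t = 0 := by
      by_contra h0; exact h21 (hcon t htT h0)
    refine ⟨h11, ?_⟩
    have h12 : k12 e f t ≠ 0 := by intro h0; rw [h0, h11] at hd; norm_num at hd
    have := hcon (t * t) (mul_mem htT htT)
    rw [k21_mul hef, k11_mul hef, h11] at this
    simp [h12, h21] at this
    exact this

lemma exists_h2 {μ : Measure SL2} (hzd : ZariskiDense μ) (hef : wdg e f ≠ 0) :
    ∃ h ∈ Submonoid.closure (measSupp μ), k11 e f h ≠ 0 ∧ k12 e f h ≠ 0 := by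
  by_contra hcon
  push Not at hcon
  have hf : f ≠ 0 := by rintro rfl; exact hef (wdg_zero_right e)
  obtain ⟨a, ha, ha21⟩ : ∃ a ∈ Submonoid.closure (measSupp μ), k12 e f a ≠ 0 := by
    by_contra h2
    push Not at h2
    refine noLine hzd hf fun s hs => ?_
    have := h2 s (Submonoid.subset_closure hs)
    unfold k12 at this
    rw [wdg_comm, (div_eq_zero_iff.1 this).resolve_right hef, neg_zero]
  have ha11 : k11 e f a = 0 := by
    by_contra h0; exact ha21 (hcon a ha h0)
  refine pair_contra hzd hef fun t ht => ?_
  have htT := Submonoid.subset_closure ht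
  have hd := k_det hef t
  by_cases h21 : k12 e f t = 0
  · left
    refine ⟨h21, ?_⟩
    have h22 : k22 e f t ≠ 0 := by intro h0; rw [h0, h21] at hd; norm_num at hd
    have := mt (hcon (a * t) (mul_mem ha htT))
    rw [k12_mul hef, k11_mul hef, h21, ha11] at this
    simp [h22, ha21] at this
    exact this
  · right
    have h11 : k11 e f t = 0 := by
      by_contra h0; exact h21 (hcon t htT h0)
    refine ⟨h11, ?_⟩
    have h12 : k21 e f t ≠ 0 := by intro h0; rw [h0, h11] at hd; norm_num at hd
    have := hcon (t * t) (mul_mem htT htT)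
    rw [k12_mul hef, k11_mul hef, h11] at this
    simp [h12, h21] at this
    exact this

lemma ev_ne {l a b : ℝ} (hl : 1 < |l|) (ha : a ≠ 0) : ∀ᶠ n : ℕ in atTop, a * l ^ n + b * l⁻¹ ^ n ≠ 0 := by
  have hl0 : l ≠ 0 := by rintro rfl; norm_num at hl
  have h1 : |l⁻¹ ^ 2| < 1 := by
    rw [abs_pow, abs_inv]
    exact pow_lt_one₀ (by positivity) (inv_lt_one_of_one_lt₀ hl) (by norm_num)
  have h2 := ((tendsto_pow_atTop_nhds_zero_of_abs_lt_one h1).const_mul b).const_add a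
  rw [mul_zero, add_zero] at h2
  filter_upwards [h2.eventually_ne ha] with n hn h0
  apply hn
  have : l ^ n * (a + b * (l⁻¹ ^ 2) ^ n) = 0 := by
    rw [← h0]
    have : l ^ n * (l⁻¹ ^ 2) ^ n = l⁻¹ ^ n := by
      rw [← mul_pow]; congr 1; field_simp
    rw [← this]; ring
  exact (mul_eq_zero.1 this).resolve_left (pow_ne_zero _ hl0)

lemma exists_generic {μ : Measure SL2} (hzd : ZariskiDense μ) (hef : wdg e f ≠ 0) {g : SL2}
    (hg : g ∈ Submonoid.closure (measSupp μ)) {l : ℝ} (hl : 1 < |l|)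
    (hge : LA g e = l • e) (hgf : LA g f = l⁻¹ • f) :
    ∃ h ∈ Submonoid.closure (measSupp μ), k11 e f h ≠ 0 ∧ k11 e f h * k22 e f h ≠ 1 := by
  obtain ⟨h1, hh1, a1, a2⟩ := exists_h1 hzd hef
  obtain ⟨h2, hh2, b1, b2⟩ := exists_h2 hzd hef
  obtain ⟨n, n1, n2, n3⟩ := ((ev_ne (b := k12 e f h1 * k21 e f h2) hl (mul_ne_zero a1 b1)).and
    ((ev_ne (b := k12 e f h1 * k22 e f h2) hl (mul_ne_zero a1 b2)).and
    (ev_ne (b := k22 e f h1 * k21 e f h2) hl (mul_ne_zero a2 b1)))).exists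
  have hp := k_pow hef hge hgf n
  have e11 : k11 e f (h1 * g ^ n * h2) ≠ 0 := by
    rw [k11_mul hef, k11_mul hef, k12_mul hef, hp.1, hp.2.1, hp.2.2.1, hp.2.2.2]
    convert n1 using 1; ring
  have e12 : k12 e f (h1 * g ^ n * h2) ≠ 0 := by
    rw [k12_mul hef, k11_mul hef, k12_mul hef, hp.1, hp.2.1, hp.2.2.1, hp.2.2.2]
    convert n2 using 1; ring
  have e21 : k21 e f (h1 * g ^ n * h2) ≠ 0 := by
    rw [k21_mul hef, k21_mul hef, k22_mul hef, hp.1, hp.2.1, hp.2.2.1, hp.2.2.2]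
    convert n3 using 1; ring
  refine ⟨_, mul_mem (mul_mem hh1 (pow_mem hg n)) hh2, e11, fun h0 => ?_⟩
  have hd := k_det hef (h1 * g ^ n * h2)
  rw [h0] at hd
  exact mul_ne_zero e12 e21 (by linarith)

end coeff

lemma root_identify {L X Y x : ℝ} (hL : 1 < L) (hx : 1 < x) (h1 : X + Y = x + x⁻¹)
    (h2 : L * X + L⁻¹ * Y = L * x + (L * x)⁻¹) : X * Y = 1 := by
  have hL0 : L ≠ 0 := by linarith
  have hx0 : x ≠ 0 := by linarith
  rw [mul_inv] at h2
  have h3 : (Y - x⁻¹) * (L - L⁻¹) = 0 := by linear_combination L * h1 - h2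
  have h4 : L - L⁻¹ ≠ 0 := by
    have := inv_lt_one_of_one_lt₀ hL
    linarith
  have h5 : Y = x⁻¹ := by linarith [(mul_eq_zero.1 h3).resolve_right h4]
  have h6 : X = x := by linarith
  rw [h5, h6, mul_inv_cancel₀ hx0]

/-- arbitrarily small periods -/
lemma small_periods {μ : Measure SL2} [IsProbabilityMeasure μ] (hmom : HasExpMoment μ) (hzd : ZariskiDense μ)
    {σ : ℝ} (hσ : 0 < σ) (hl : ∀ n : ℕ, n * σ ≤ ∫ g, Real.log (opNorm g) ∂(cp μ n)) {η : ℝ} (hη : 0 < η) :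
    ∃ p : ℝ, 0 < p ∧ p < η ∧ ∀ H : E2 → ℝ, HProp μ H → Per H (Real.exp p) := by
  obtain ⟨g0, hg0, htr0⟩ := exists_hyp hmom hzd hσ hl
  obtain ⟨L0, hL0, hL0e⟩ := exists_root htr0
  obtain ⟨l0, hl0, hl0e⟩ : ∃ l : ℝ, 1 < |l| ∧ l + l⁻¹ = tr2 g0 := by
    rcases abs_cases (tr2 g0) with ⟨h1, _⟩ | ⟨h1, _⟩
    · exact ⟨L0, by rwa [abs_of_pos (by linarith)], by rw [hL0e, h1]⟩
    · exact ⟨-L0, by rwa [abs_neg, abs_of_pos (by linarith)], by rw [inv_neg]; linarith⟩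
  obtain ⟨e, f, hef, hge0, hgf0⟩ := exists_eig hl0 hl0e
  set l := l0 ^ 2 with hldef
  have hl1 : 1 < l := by rw [hldef, ← sq_abs]; nlinarith
  have hlp : 0 < l := by linarith
  set g := g0 * g0 with hgdef
  have hg : g ∈ Submonoid.closure (measSupp μ) := mul_mem hg0 hg0
  have hge : LA g e = l • e := by rw [hgdef, LA_mul, hge0, map_smul, hge0, smul_smul, hldef, sq]
  have hgf : LA g f = l⁻¹ • f := by
    rw [hgdef, LA_mul, hgf0, map_smul, hgf0, smul_smul, hldef, sq, mul_inv]
  have hlabs : 1 < |l| := by rwa [abs_of_pos hlp]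
  obtain ⟨h, hh, h11, h1122⟩ := exists_generic hzd hef hg hlabs hge hgf
  obtain ⟨s, hs, hsA⟩ : ∃ s : ℝ, (s = 1 ∨ s = -1) ∧ 0 < s * k11 e f h := by
    rcases lt_or_gt_of_ne h11 with h0 | h0
    · exact ⟨-1, Or.inr rfl, by linarith⟩
    · exact ⟨1, Or.inl rfl, by linarith⟩
  have hs2 : s * s = 1 := by rcases hs with rfl | rfl <;> norm_num
  have hsabs : |s| = 1 := by rcases hs with rfl | rfl <;> norm_num
  set A := s * k11 e f h with hA
  set D := s * k22 e f h with hD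
  have hAD : A * D ≠ 1 := by
    intro h0; apply h1122; rw [← h0, hA, hD]; linear_combination (-(k11 e f h * k22 e f h)) * hs2
  set T : ℕ → ℝ := fun n => l ^ n * A + l⁻¹ ^ n * D with hT
  have htr : ∀ n, |tr2 (g ^ n * h)| = |T n| := by
    intro n
    have hp := k_pow hef hge hgf n
    have : T n = s * tr2 (g ^ n * h) := by
      rw [k_tr hef, k11_mul hef, k22_mul hef, hp.1, hp.2.1, hp.2.2.1, hp.2.2.2, hT, hA, hD]; ring
    rw [this, abs_mul, hsabs, one_mul]
  have hli : Tendsto (fun n : ℕ => l⁻¹ ^ n) atTop (nhds 0) :=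
    tendsto_pow_atTop_nhds_zero_of_lt_one (by positivity) (inv_lt_one_of_one_lt₀ hl1)
  have hTinf : Tendsto T atTop atTop := by
    refine Tendsto.atTop_add (C := 0 * D) ?_ (hli.mul_const D)
    exact (tendsto_pow_atTop_atTop_of_one_lt hl1).atTop_mul_const hsA
  obtain ⟨n0, hn0⟩ := eventually_atTop.1 (hTinf.eventually_gt_atTop 2)
  have hT2 : ∀ n, 2 < T (n + n0) := fun n => hn0 _ (Nat.le_add_left _ _)
  choose X hX1 hX2 using fun n => exists_root (hT2 n)
  have hXlim : Tendsto (fun n => X n * l⁻¹ ^ (n + n0)) atTop (nhds A) := by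
    have hli' : Tendsto (fun n : ℕ => l⁻¹ ^ (n + n0)) atTop (nhds 0) := hli.comp (tendsto_add_atTop_nat n0)
    have e1 : ∀ n, X n * l⁻¹ ^ (n + n0) = A + (l⁻¹ ^ (n + n0) * l⁻¹ ^ (n + n0) * D - (X n)⁻¹ * l⁻¹ ^ (n + n0)) := by
      intro n
      have h2 := hX2 n
      have h3 : l ^ (n + n0) * l⁻¹ ^ (n + n0) = 1 := by rw [← mul_pow, mul_inv_cancel₀ hlp.ne', one_pow]
      simp only [hT] at h2
      linear_combination (l⁻¹ ^ (n + n0)) * h2 + A * h3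
    have e2 : Tendsto (fun n => (X n)⁻¹ * l⁻¹ ^ (n + n0)) atTop (nhds 0) := by
      refine squeeze_zero (fun n => ?_) (fun n => ?_) hli'
      · have := hX1 n; positivity
      · have h1 := inv_lt_one_of_one_lt₀ (hX1 n)
        have : 0 ≤ l⁻¹ ^ (n + n0) := by positivity
        nlinarith
    have e3 := (((hli'.mul hli').mul_const D).sub e2).const_add A
    simp only [mul_zero, zero_mul, sub_zero, add_zero] at e3
    exact e3.congr fun n => (e1 n).symm
  have hq : Tendsto (fun n => X (n + 1) * l⁻¹ ^ (n + 1 + n0) / (X n * l⁻¹ ^ (n + n0))) atTop (nhds (A / A)) :=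
    ((tendsto_add_atTop_iff_nat 1).2 hXlim).div hXlim hsA.ne'
  rw [div_self hsA.ne'] at hq
  have hqe : ∀ n, X (n + 1) * l⁻¹ ^ (n + 1 + n0) / (X n * l⁻¹ ^ (n + n0)) = X (n + 1) * (l⁻¹ * (X n)⁻¹) := by
    intro n
    have h1 := hX1 n
    have : X n ≠ 0 := by linarith
    rw [show n + 1 + n0 = (n + n0) + 1 by ring, pow_succ]
    field_simp
  have hlog := ((Real.continuousAt_log one_ne_zero).tendsto.comp hq)
  rw [Real.log_one] at hlog
  have habs := hlog.abs
  rw [abs_zero] at habs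
  obtain ⟨n, hn⟩ := (habs.eventually (gt_mem_nhds hη)).exists
  simp only [Function.comp, hqe] at hn
  have hXn := hX1 n
  have hXn1 := hX1 (n + 1)
  set q := X (n + 1) * (l⁻¹ * (X n)⁻¹) with hqdef
  have hq0 : 0 < q := by positivity
  have hq1 : q ≠ 1 := by
    intro h0
    have h1 : X (n + 1) = l * X n := by
      rw [hqdef] at h0
      field_simp at h0
      linarith
    apply hAD
    have h2 := hX2 n
    have h3 := hX2 (n + 1)
    rw [h1] at h3
    have h5 := root_identify (L := l) (X := l ^ (n + n0) * A) (Y := l⁻¹ ^ (n + n0) * D) (x := X n) hl1 hXn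
      (by rw [h2]) (by rw [h3, hT]; simp only; rw [show n + 1 + n0 = (n + n0) + 1 by ring, pow_succ, pow_succ]; ring)
    have h6 : l ^ (n + n0) * l⁻¹ ^ (n + n0) = 1 := by rw [← mul_pow, mul_inv_cancel₀ hlp.ne', one_pow]
    linear_combination h5 - A * D * h6
  have hper : ∀ H : E2 → ℝ, HProp μ H → Per H q := by
    intro H hH
    have hPX : ∀ n, Per H (X n) := fun n => per_trace hH (mul_mem (pow_mem hg (n + n0)) hh) (hX1 n) (by
      rw [htr, abs_of_pos (by linarith [hT2 n]), hX2])
    have hPl : Per H l := by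
      have := period_eig hH hg hef hlabs hge hgf
      rwa [abs_of_pos hlp] at this
    exact (hPX (n + 1)).mul (hPl.inv.mul (hPX n).inv)
  refine ⟨|Real.log q|, abs_pos.2 (Real.log_ne_zero_of_pos_of_ne_one hq0 hq1), hn, fun H hH => ?_⟩
  rcases abs_cases (Real.log q) with ⟨h1, _⟩ | ⟨h1, _⟩
  · rw [h1, Real.exp_log hq0]; exact hper H hH
  · rw [h1, Real.exp_neg, Real.exp_log hq0]; exact (hper H hH).inv

/-- a trapezoid bump, equal to one on `[0,d]` and supported in `(-d,2d)` -/
def bump (d x : ℝ) : ℝ := max 0 (min 1 (3 / 2 - |x - d / 2| / d))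

lemma bump_nonneg (d x : ℝ) : 0 ≤ bump d x := le_max_left _ _
lemma bump_le_one (d x : ℝ) : bump d x ≤ 1 := max_le zero_le_one (min_le_left _ _)

lemma bump_one {d x : ℝ} (hd : 0 < d) (h0 : 0 ≤ x) (h1 : x ≤ d) : bump d x = 1 := by
  unfold bump
  have h : |x - d / 2| ≤ d / 2 := abs_le.2 ⟨by linarith, by linarith⟩
  have h2 : |x - d / 2| / d ≤ 1 / 2 := by rw [div_le_iff₀ hd]; linarith
  rw [min_eq_left (by linarith), max_eq_right zero_le_one]

lemma bump_supp {d x : ℝ} (hd : 0 < d) (h : bump d x ≠ 0) : -d < x ∧ x < 2 * d := by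
  by_contra hcon
  apply h
  unfold bump
  have h2 : 3 / 2 * d ≤ |x - d / 2| := by
    rw [not_and_or] at hcon
    rcases hcon with h | h
    · have := neg_abs_le (x - d / 2); linarith
    · have := le_abs_self (x - d / 2); linarith
  have h3 : 3 / 2 ≤ |x - d / 2| / d := by rwa [le_div_iff₀ hd]
  exact max_eq_left ((min_le_right _ _).trans (by linarith))

lemma bump_lip {d : ℝ} (hd : 0 < d) (x y : ℝ) : |bump d x - bump d y| ≤ d⁻¹ * |x - y| := by
  unfold bump
  refine (abs_max_sub_max_le_max _ _ _ _).trans ?_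
  rw [sub_self, abs_zero]
  refine max_le (by positivity) ?_
  refine (abs_min_sub_min_le_max _ _ _ _).trans ?_
  rw [sub_self, abs_zero]
  refine max_le (by positivity) ?_
  have h1 := abs_abs_sub_abs_le_abs_sub (y - d / 2) (x - d / 2)
  have e : 3 / 2 - |x - d / 2| / d - (3 / 2 - |y - d / 2| / d) = d⁻¹ * (|y - d / 2| - |x - d / 2|) := by ring
  rw [e, abs_mul, abs_of_pos (inv_pos.2 hd)]
  refine mul_le_mul_of_nonneg_left (h1.trans ?_) (inv_pos.2 hd).le
  rw [abs_sub_comm x y]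
  apply le_of_eq; congr 1; ring

lemma bump_far {d : ℝ} (hd : 0 < d) (hd1 : d ≤ 2 / 3) (x : ℝ) (hx : 2 < |x|) : bump d x = 0 := by
  by_contra h
  obtain ⟨h1, h2⟩ := bump_supp hd h
  have : |x| ≤ 2 := abs_le.2 ⟨by linarith, by linarith⟩
  linarith

lemma bump_sum {d p : ℝ} (hd : 0 < d) (hd1 : d ≤ 2 / 3) (hp : 3 * d ≤ p) {K : ℕ} (hK : ∀ j < K, (j : ℝ) * p ≤ 2)
    {w : E2} (hw : w ≠ 0) :
    ∑ j ∈ Finset.range K, ENNReal.ofReal (bump d (Real.log ‖w‖ + j * p)) ≤ win w := by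
  by_cases h : ∃ j ∈ Finset.range K, bump d (Real.log ‖w‖ + j * p) ≠ 0
  · obtain ⟨j, hj, hb⟩ := h
    obtain ⟨s1, s2⟩ := bump_supp hd hb
    have hj2 := hK j (Finset.mem_range.1 hj)
    have hj0 : (0 : ℝ) ≤ j * p := by have : 0 ≤ p := by linarith
                                     positivity
    rw [win_one hw (abs_le.2 ⟨by linarith, by linarith⟩)]
    rw [Finset.sum_eq_single_of_mem j hj]
    · rw [← ENNReal.ofReal_one]
      exact ENNReal.ofReal_le_ofReal (bump_le_one _ _)
    · intro i hi hij
      by_contra h0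
      have hb2 : bump d (Real.log ‖w‖ + i * p) ≠ 0 := by
        intro h1; rw [h1] at h0; simp at h0
      obtain ⟨u1, u2⟩ := bump_supp hd hb2
      rcases lt_or_gt_of_ne hij with h1 | h1
      · have h2 : (i : ℝ) + 1 ≤ j := by exact_mod_cast h1
        nlinarith
      · have h2 : (j : ℝ) + 1 ≤ i := by exact_mod_cast h1
        nlinarith
  · push Not at h
    rw [Finset.sum_eq_zero]
    · exact bot_le
    · intro j hj; rw [h j hj, ENNReal.ofReal_zero]

lemma fine_bound {μ : Measure SL2} [IsProbabilityMeasure μ] {M : ENNReal} (hMt : M ≠ ⊤)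
    (hM : ∀ v : E2, v ≠ 0 → Upot μ win v ≤ M) {d : ℝ} (hd : 0 < d) (hd1 : d ≤ 2 / 3)
    (hH : HProp μ (HH μ (bump d))) {p : ℝ} (hp0 : 0 < p) (hpd : p < d)
    (hper : Per (HH μ (bump d)) (Real.exp p)) :
    ∃ r > (0 : ℝ), ∀ v : E2, v ≠ 0 → ‖v‖ < r → HH μ (bump d) v ≤ 2 * (M.toReal + 1) * d := by
  set N := ⌈3 * d / p⌉₊ with hN
  have hN1 : 3 * d ≤ N * p := by
    have := Nat.le_ceil (3 * d / p)
    rwa [div_le_iff₀ hp0] at this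
  have hN2 : N * p < 4 * d := by
    have := Nat.ceil_lt_add_one (show 0 ≤ 3 * d / p by positivity)
    rw [← hN] at this
    have h2 : (N : ℝ) * p < (3 * d / p + 1) * p := mul_lt_mul_of_pos_right this hp0
    rw [add_mul, div_mul_cancel₀ _ hp0.ne'] at h2
    linarith
  set P := (N : ℝ) * p with hP
  have hPp : 0 < P := by linarith
  have hPer : ∀ j : ℕ, Per (HH μ (bump d)) (Real.exp (j * P)) := fun j => by
    have := hper.pow (j * N)
    rw [← Real.exp_nat_mul] at this
    convert this using 2
    push_cast; rw [hP]; ring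
  set K := ⌊2 / P⌋₊ + 1 with hKdef
  have hKj : ∀ j < K, (j : ℝ) * P ≤ 2 := by
    intro j hj
    have h1 : (j : ℝ) ≤ (⌊2 / P⌋₊ : ℝ) := by exact_mod_cast Nat.lt_succ_iff.1 hj
    have h2 := Nat.floor_le (show 0 ≤ 2 / P by positivity)
    have h3 := h1.trans h2
    rwa [le_div_iff₀ hPp] at h3
  have hK1 : 1 / (2 * d) ≤ (K : ℝ) := by
    have h1 := (Nat.lt_floor_add_one (2 / P)).le
    have h2 : 1 / (2 * d) ≤ 2 / P := by
      rw [div_le_div_iff₀ (by positivity) hPp]; linarith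
    rw [hKdef]; push_cast; linarith
  have hK0 : (0 : ℝ) < K := lt_of_lt_of_le (by positivity) hK1
  have hm : Measurable (phif (bump d)) := measurable_phif (cont_of_lip (inv_pos.2 hd).le (bump_lip hd)).measurable
  have hsum : ∀ v : E2, v ≠ 0 → ∑ j ∈ Finset.range K, HH μ (bump d) (Real.exp (j * P) • v) ≤ M.toReal := by
    intro v hv
    have h1 : ∑ j ∈ Finset.range K, Upot μ (phif (bump d)) (Real.exp (j * P) • v) ≤ M := by
      refine le_trans ?_ (hM v hv)
      unfold Upot
      rw [← Summable.tsum_finsetSum (fun _ _ => ENNReal.summable)]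
      refine ENNReal.tsum_le_tsum fun n => ?_
      rw [← lintegral_finsetSum _ (fun j _ => meas_orbit hm _)]
      refine lintegral_mono fun g => ?_
      refine le_trans (le_of_eq ?_) (bump_sum hd hd1 hN1 hKj (LA_ne_zero g hv))
      refine Finset.sum_congr rfl fun j _ => ?_
      unfold phif
      rw [map_smul, norm_smul, Real.norm_of_nonneg (Real.exp_pos _).le,
        Real.log_mul (Real.exp_pos _).ne' (LA_norm_pos g hv).ne', Real.log_exp, add_comm]
    have h2 := ENNReal.toReal_mono hMt h1
    rw [ENNReal.toReal_sum] at h2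
    · exact h2
    · intro j _
      exact ne_top_of_le_ne_top hMt (Upot_phif_le hM (bump_le_one d) (bump_far hd hd1)
        (smul_ne_zero (Real.exp_pos _).ne' hv))
  have hev : ∀ᶠ v in nhdsWithin (0 : E2) {0}ᶜ, ∀ j ∈ Finset.range K,
      -(1 / (K : ℝ)) < HH μ (bump d) (Real.exp (j * P) • v) - HH μ (bump d) v := by
    rw [Filter.eventually_all_finset]
    intro j _
    exact (hPer j).2.eventually (lt_mem_nhds (by simpa using hK0))
  rw [eventually_nhdsWithin_iff, Metric.eventually_nhds_iff] at hev
  obtain ⟨r, hr, hev⟩ := hev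
  refine ⟨r, hr, fun v hv hvr => ?_⟩
  have h1 := hev (y := v) (by rwa [dist_zero_right]) hv
  have h2 := Finset.card_nsmul_le_sum (Finset.range K) (fun j => HH μ (bump d) (Real.exp (j * P) • v))
    (HH μ (bump d) v - 1 / (K : ℝ)) (fun j hj => by linarith [h1 j hj])
  have h3 := h2.trans (hsum v hv)
  rw [Finset.card_range, nsmul_eq_mul, mul_sub, mul_one_div_cancel hK0.ne'] at h3
  have hH0 : 0 ≤ HH μ (bump d) v := ENNReal.toReal_nonneg
  have h4 : 1 / (2 * d) * HH μ (bump d) v ≤ M.toReal + 1 := by nlinarith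
  rw [div_mul_eq_mul_div, one_mul, div_le_iff₀ (by positivity)] at h4
  linarith

/-- passage from words to convolution powers and comparison with the renewal function -/
lemma sum_le_Upot (μ : Measure SL2) [IsProbabilityMeasure μ] {d : ℝ} (hd : 0 < d) {b c t : ℝ} (hc : c ≤ b + d)
    (x : PX) :
    (∑' n : ℕ, μpi μ n {g | cocycle (word g) x - t ∈ Set.Icc b c}) ≤
      Upot μ (phif (bump d)) ((Real.exp (-(t + b)) * ‖rv x‖⁻¹) • rv x) := by
  unfold Upot
  refine ENNReal.tsum_le_tsum fun n => ?_
  have hS : MeasurableSet {h : SL2 | cocycle h x - t ∈ Set.Icc b c} :=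
    ((measurable_cocycle_left x).sub_const t) measurableSet_Icc
  have h1 : μpi μ n {g | cocycle (word g) x - t ∈ Set.Icc b c} = cp μ n {h : SL2 | cocycle h x - t ∈ Set.Icc b c} := by
    rw [← map_word, Measure.map_apply (measurable_word n) hS]; rfl
  rw [h1, ← lintegral_indicator_one hS]
  refine lintegral_mono fun g => ?_
  by_cases hh0 : g ∈ {h : SL2 | cocycle h x - t ∈ Set.Icc b c}
  swap
  · rw [Set.indicator_of_notMem hh0]; exact zero_le
  rw [Set.indicator_of_mem hh0]
  revert hh0
  generalize g = h
  intro hh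
  unfold phif
  have hr := rv_ne x
  have hn : 0 < ‖rv x‖ := norm_pos_iff.2 hr
  have hc0 : Real.exp (-(t + b)) * ‖rv x‖⁻¹ ≠ 0 := by positivity
  have hlog : Real.log ‖LA h ((Real.exp (-(t + b)) * ‖rv x‖⁻¹) • rv x)‖ = cocycle h x - t - b := by
    rw [log_LA h (smul_ne_zero hc0 hr), YY_smul _ _ hc0, cocycle_eq, norm_smul, norm_mul, norm_inv, norm_norm,
      mul_assoc, inv_mul_cancel₀ hn.ne', mul_one, Real.norm_of_nonneg (Real.exp_pos _).le, Real.log_exp]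
    ring
  have hh' : b ≤ cocycle h x - t ∧ cocycle h x - t ≤ c := hh
  rw [hlog, bump_one hd (by linarith [hh'.1]) (by linarith [hh'.2])]
  simp

lemma short_bound {μ : Measure SL2} [IsProbabilityMeasure μ]
    (hmom : HasExpMoment μ) (hzd : ZariskiDense μ)
    {σ : ℝ} (hσ : 0 < σ) (hl : ∀ n : ℕ, n * σ ≤ ∫ g, Real.log (opNorm g) ∂(cp μ n)) :
    ∃ C > (0 : ℝ), ∀ δ : ℝ, 0 < δ → δ ≤ 1 / 3 → ∃ Cδ > (0 : ℝ),
      ∀ (b c t : ℝ) (x : PX), c ≤ b + 2 * δ → 0 < t →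
          (∑' n : ℕ, μpi μ n {g | cocycle (word g) x - t ∈ Set.Icc b c}) ≤
            ENNReal.ofReal (C * δ * (1 / σ + Cδ * (1 + |b|) / t)) := by
  obtain ⟨εs, hεs, htr⟩ := trans_sum hmom hzd hσ hl
  set ε := min εs 1 / 2 with hε
  have hε0 : 0 < ε := by positivity
  have hε2 : 2 * ε = min εs 1 := by rw [hε]; ring
  have hε1 : ε ≤ 1 := by have := min_le_right εs 1; linarith
  obtain ⟨hm, C1, hC1t, hC1⟩ := htr (2 * ε) (by positivity) (by rw [hε2]; exact min_le_left _ _)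
  obtain ⟨M, hMt, hM⟩ := window_bound (by positivity) hC1t hC1
  set m := M.toReal + 1 with hmdef
  have hm0 : 0 < m := by have : 0 ≤ M.toReal := ENNReal.toReal_nonneg
                         linarith
  refine ⟨4 * m * σ, by positivity, fun δ hδ hδ1 => ?_⟩
  have hd : 0 < 2 * δ := by positivity
  have hd1 : 2 * δ ≤ 2 / 3 := by linarith
  have hH : HProp μ (HH μ (bump (2 * δ))) := HProp_HH hε0 hε1 hMt hC1t hM hC1 hm (inv_pos.2 hd).le
    (bump_nonneg _) (bump_le_one _) (bump_lip hd) (bump_far hd hd1)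
  obtain ⟨p, hp0, hpd, hper⟩ := small_periods hmom hzd hσ hl hd
  obtain ⟨r, hr, hfine⟩ := fine_bound hMt hM hd hd1 hH hp0 hpd (hper _ hH)
  set s := max (-Real.log r) 1 with hs
  have hs1 : 1 ≤ s := le_max_right _ _
  refine ⟨s / (4 * σ * δ), by positivity, fun b c t x hc ht => ?_⟩
  refine (sum_le_Upot μ hd hc x).trans ?_
  set v := (Real.exp (-(t + b)) * ‖rv x‖⁻¹) • rv x with hvdef
  have hn : 0 < ‖rv x‖ := norm_pos_iff.2 (rv_ne x)
  have hv : v ≠ 0 := smul_ne_zero (by positivity) (rv_ne x)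
  have hvn : ‖v‖ = Real.exp (-(t + b)) := by
    rw [hvdef, norm_smul, norm_mul, norm_inv, norm_norm,
      mul_assoc, inv_mul_cancel₀ hn.ne', mul_one, Real.norm_of_nonneg (Real.exp_pos _).le]
  have hUM : Upot μ (phif (bump (2 * δ))) v ≤ M := Upot_phif_le hM (bump_le_one _) (bump_far hd hd1) hv
  have hUH : Upot μ (phif (bump (2 * δ))) v = ENNReal.ofReal (HH μ (bump (2 * δ)) v) :=
    (ENNReal.ofReal_toReal (ne_top_of_le_ne_top hMt hUM)).symm
  rw [hUH]
  apply ENNReal.ofReal_le_ofReal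
  have e : 4 * m * σ * δ * (1 / σ + s / (4 * σ * δ) * (1 + |b|) / t) = 4 * m * δ + m * (s * (1 + |b|) / t) := by
    field_simp
  rw [e]
  have hb := abs_nonneg b
  by_cases hlt : ‖v‖ < r
  · have h1 := hfine v hv hlt
    have : 0 ≤ m * (s * (1 + |b|) / t) := by positivity
    linarith
  · push Not at hlt
    have h1 : HH μ (bump (2 * δ)) v ≤ M.toReal := ENNReal.toReal_mono hMt hUM
    rw [hvn] at hlt
    have h2 := Real.log_le_log hr hlt
    rw [Real.log_exp] at h2
    have h3 : t ≤ s * (1 + |b|) := by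
      have := le_max_left (-Real.log r) 1
      have := neg_abs_le b
      nlinarith
    have h4 : 1 ≤ s * (1 + |b|) / t := by rwa [le_div_iff₀ ht, one_mul]
    have h5 : 0 < 4 * m * δ := by positivity
    nlinarith

theorem renewal_main
    (μ : Measure SL2) [IsProbabilityMeasure μ]
    (hmom : HasExpMoment μ) (hzd : ZariskiDense μ)
    (ν : Measure PX) [IsProbabilityMeasure ν] (hstat : IsStationaryMeas μ ν)
    (σμ : ℝ) (hσ : σμ = ∫ g, ∫ x, cocycle g x ∂ν ∂μ) (hσpos : 0 < σμ) :
    ∃ C > (0 : ℝ), ∀ δ : ℝ, 0 < δ → δ ≤ 1 / 3 → ∃ Cδ > (0 : ℝ),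
      ∀ (b₁ b₂ t : ℝ) (x : PX), b₁ ≤ b₂ → 0 < t →
        (2 * δ ≤ b₂ - b₁ →
          (∑' n : ℕ, μpi μ n {g | cocycle (word g) x - t ∈ Set.Icc b₁ b₂}) ≤
            ENNReal.ofReal (C * (b₂ - b₁) * (1 / σμ + Cδ * (1 + |b₁| + |b₂|) / t))) ∧
        (b₂ - b₁ < 2 * δ →
          (∑' n : ℕ, μpi μ n {g | cocycle (word g) x - t ∈ Set.Icc b₁ b₂}) ≤
            ENNReal.ofReal (C * δ * (1 / σμ + Cδ * (1 + |b₁|) / t))) := by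
  have hl : ∀ n : ℕ, n * σμ ≤ ∫ g, Real.log (opNorm g) ∂(cp μ n) := fun n => by
    rw [hσ]; exact ell_ge hmom hstat n
  obtain ⟨C, hC, hmain⟩ := short_bound hmom hzd hσpos hl
  refine ⟨C, hC, fun δ hδ hδ1 => ?_⟩
  obtain ⟨Cδ, hCδ, hb⟩ := hmain δ hδ hδ1
  refine ⟨Cδ, hCδ, fun b₁ b₂ t x h12 ht => ⟨fun hlong => ?_, fun hshort => hb b₁ b₂ t x (by linarith) ht⟩⟩
  have hd : 0 < 2 * δ := by positivity
  set J := ⌊(b₂ - b₁) / (2 * δ)⌋₊ + 1 with hJ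
  have hfl := Nat.floor_le (show 0 ≤ (b₂ - b₁) / (2 * δ) from div_nonneg (by linarith) hd.le)
  have hJle : (J : ℝ) * δ ≤ b₂ - b₁ := by
    rw [hJ]; push_cast
    rw [le_div_iff₀ hd] at hfl
    nlinarith
  set B := C * δ * (1 / σμ + Cδ * (1 + |b₁| + |b₂|) / t) with hB
  have hB0 : 0 ≤ 1 / σμ + Cδ * (1 + |b₁| + |b₂|) / t := by positivity
  have hpiece : ∀ j ∈ Finset.range J, (∑' n : ℕ, μpi μ n {g | cocycle (word g) x - t ∈
      Set.Icc (b₁ + 2 * δ * j) (b₁ + 2 * δ * j + 2 * δ)}) ≤ ENNReal.ofReal B := by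
    intro j hj
    refine (hb _ _ t x le_rfl ht).trans (ENNReal.ofReal_le_ofReal ?_)
    have h1 : (j : ℝ) ≤ (⌊(b₂ - b₁) / (2 * δ)⌋₊ : ℝ) := by
      exact_mod_cast Nat.lt_succ_iff.1 (Finset.mem_range.1 hj)
    have h2 := h1.trans hfl
    rw [le_div_iff₀ hd] at h2
    have h3 : 0 ≤ 2 * δ * j := by positivity
    have h4 : |b₁ + 2 * δ * j| ≤ |b₁| + |b₂| := by
      have a1 := neg_abs_le b₁
      have a2 := le_abs_self b₂
      have a3 := abs_nonneg b₁
      have a4 := abs_nonneg b₂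
      exact abs_le.2 ⟨by linarith, by linarith⟩
    have h5 : 1 + |b₁ + 2 * δ * j| ≤ 1 + |b₁| + |b₂| := by linarith
    rw [hB]
    gcongr
  calc (∑' n : ℕ, μpi μ n {g | cocycle (word g) x - t ∈ Set.Icc b₁ b₂})
      ≤ ∑' n : ℕ, ∑ j ∈ Finset.range J, μpi μ n {g | cocycle (word g) x - t ∈
        Set.Icc (b₁ + 2 * δ * j) (b₁ + 2 * δ * j + 2 * δ)} := by
        refine ENNReal.tsum_le_tsum fun n => ?_
        refine le_trans (measure_mono ?_) (measure_biUnion_finset_le _ _)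
        intro g hg
        have hg' : b₁ ≤ cocycle (word g) x - t ∧ cocycle (word g) x - t ≤ b₂ := hg
        set y := cocycle (word g) x - t with hy
        have hy0 : 0 ≤ (y - b₁) / (2 * δ) := div_nonneg (by linarith [hg'.1]) hd.le
        refine Set.mem_iUnion₂.2 ⟨⌊(y - b₁) / (2 * δ)⌋₊, ?_, ?_⟩
        · rw [Finset.mem_range, hJ, Nat.lt_succ_iff]
          apply Nat.floor_le_floor
          gcongr
          exact hg'.2
        · change b₁ + 2 * δ * (⌊(y - b₁) / (2 * δ)⌋₊ : ℝ) ≤ y ∧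
            y ≤ b₁ + 2 * δ * (⌊(y - b₁) / (2 * δ)⌋₊ : ℝ) + 2 * δ
          have f1 := Nat.floor_le hy0
          have f2 := (Nat.lt_floor_add_one ((y - b₁) / (2 * δ))).le
          rw [le_div_iff₀ hd] at f1
          rw [div_le_iff₀ hd] at f2
          constructor <;> linarith
    _ = ∑ j ∈ Finset.range J, ∑' n : ℕ, μpi μ n {g | cocycle (word g) x - t ∈
        Set.Icc (b₁ + 2 * δ * j) (b₁ + 2 * δ * j + 2 * δ)} :=
        Summable.tsum_finsetSum (fun _ _ => ENNReal.summable)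
    _ ≤ ∑ j ∈ Finset.range J, ENNReal.ofReal B := Finset.sum_le_sum hpiece
    _ = ENNReal.ofReal (J * B) := by
        rw [Finset.sum_const, Finset.card_range, nsmul_eq_mul, ENNReal.ofReal_mul (Nat.cast_nonneg J),
          ENNReal.ofReal_natCast]
    _ ≤ ENNReal.ofReal (C * (b₂ - b₁) * (1 / σμ + Cδ * (1 + |b₁| + |b₂|) / t)) := by
        apply ENNReal.ofReal_le_ofReal
        have : (J : ℝ) * B = C * (J * δ) * (1 / σμ + Cδ * (1 + |b₁| + |b₂|) / t) := by rw [hB]; ring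
        rw [this]
        gcongr

theorem renewal_operator_interval_bound
    (μ : Measure SL2) [IsProbabilityMeasure μ]
    (hmom : HasExpMoment μ) (hzd : ZariskiDense μ)
    (ν : Measure PX) [IsProbabilityMeasure ν] (hstat : IsStationaryMeas μ ν)
    (σμ : ℝ) (hσ : σμ = ∫ g, ∫ x, cocycle g x ∂ν ∂μ) (hσpos : 0 < σμ) :
    ∃ C > (0 : ℝ), ∀ δ : ℝ, 0 < δ → δ ≤ 1 / 3 → ∃ Cδ > (0 : ℝ),
      ∀ (b₁ b₂ t : ℝ) (x : PX), b₁ ≤ b₂ → 0 < t →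
        (2 * δ ≤ b₂ - b₁ →
          (∑' n : ℕ, μpi μ n {g | cocycle (word g) x - t ∈ Set.Icc b₁ b₂}) ≤
            ENNReal.ofReal (C * (b₂ - b₁) * (1 / σμ + Cδ * (1 + |b₁| + |b₂|) / t))) ∧
        (b₂ - b₁ < 2 * δ →
          (∑' n : ℕ, μpi μ n {g | cocycle (word g) x - t ∈ Set.Icc b₁ b₂}) ≤
            ENNReal.ofReal (C * δ * (1 / σμ + Cδ * (1 + |b₁|) / t))) := by
  exact renewal_main μ hmom hzd ν hstat σμ hσ hσpos

end
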